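/- arXiv:1901.10790 — 2 statements merged into one kernel-verified Lean document; each statement's English description precedes it below -/
import Mathlib

section
/- Let 0 < λ ≤ 1, 0 < α ≤ 1, and σ₀ ∈ ℝ. There exists a constant C = C(λ,α,σ₀) > 0 such that for every s = σ + it with σ ≥ σ₀, t ≥ 2, and L(λ,α,s) ≠ 0, if d denotes the distance from s to the nearest zero of L(λ,α,·) (the infimum of |s − ρ| over all zeros ρ), then 1/|L(λ,α,s)| < exp(C·(|log d| + 1)·log t). -/
/-- The Dirichlet series of the Lerch zeta-function, convergent for `1 < re s`. -/
noncomputable def lerchSeries (lam alp : ℝ) (s : ℂ) : ℂ :=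
  ∑' m : ℕ, Complex.exp (2 * Real.pi * Complex.I * lam * m) / ((m : ℂ) + alp) ^ s

/-- `F` is the analytic continuation of the Lerch zeta-function with parameters `lam`, `alp`:
it is complex differentiable away from `1` and agrees with the Dirichlet series on `1 < re s`. -/
def IsLerch (lam alp : ℝ) (F : ℂ → ℂ) : Prop :=
  (∀ s : ℂ, s ≠ 1 → DifferentiableAt ℂ F s) ∧
  ∀ s : ℂ, 1 < s.re → F s = lerchSeries lam alp s

open scoped Classical

/-- The multiplicity (order of vanishing) of `F` at `z` (junk value `0` if `F` is not
analytic at `z` or vanishes to infinite order). -/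
noncomputable def zeroOrder (F : ℂ → ℂ) (z : ℂ) : ℕ :=
  if h : AnalyticAt ℂ F z then (analyticOrderAt F z).toNat else 0

/-!
The binomial expansion of `(m + α + 1) ^ (-s)` in powers of `1 / (m + α)` expresses `F s` through
the values `F (s + j)` and a convergent remainder, so induction towards the left shows that `F`
grows at most polynomially in every vertical strip. Far to the right the first term of the series
dominates and `1 / 2 ≤ ‖F s‖`. In a large disc centred there, normalise `F` to have norm at most
`1` and divide by the Blaschke factors of the zeros in the half disc. Each division at least doubles
the value at the centre, so there are `O(log t)` of them, and each costs a factor comparable to the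
distance from `s` to the zero; the zero-free quotient is bounded below by Harnack's inequality. For
bounded `t`, compactness and the local factorisation at the finitely many zeros suffice.
-/

open Metric Set Filter Topology Asymptotics

section BlaschkeDivision

variable {f : ℂ → ℂ}

lemma exists_eq_mul_exp_of_ball_ne_zero {R : ℝ} (hR : 0 < R)
    (hf : DifferentiableOn ℂ f (ball 0 R)) (hne : ∀ z ∈ ball (0 : ℂ) R, f z ≠ 0) :
    ∃ g : ℂ → ℂ, DifferentiableOn ℂ g (ball 0 R) ∧ g 0 = 0 ∧
      ∀ z ∈ ball (0 : ℂ) R, f z = f 0 * Complex.exp (g z) := by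
  obtain ⟨g, hg0, hg⟩ :=
    ((hf.deriv isOpen_ball).div hf hne).isExactOn_ball.with_val_at 0 0
  have hderiv : ∀ z ∈ ball (0 : ℂ) R, HasDerivAt (fun w ↦ f w * Complex.exp (-g w)) 0 z := by
    intro z hz
    have hfz := (hf.differentiableAt (isOpen_ball.mem_nhds hz)).hasDerivAt
    refine (hfz.mul (hg z hz).neg.cexp).congr_deriv ?_
    have := hne z hz
    simp only [Pi.div_apply]
    field_simp
    ring
  refine ⟨g, fun z hz ↦ (hg z hz).differentiableAt.differentiableWithinAt, hg0, fun z hz ↦ ?_⟩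
  have hconst : f z * Complex.exp (-g z) = f 0 * Complex.exp (-g 0) :=
    isOpen_ball.is_const_of_deriv_eq_zero (convex_ball 0 R).isPreconnected
      (fun w hw ↦ (hderiv w hw).differentiableAt.differentiableWithinAt)
      (fun w hw ↦ (hderiv w hw).deriv) hz (mem_ball_self hR)
  rw [hg0, neg_zero, Complex.exp_zero, mul_one] at hconst
  rw [← hconst, mul_assoc, ← Complex.exp_add, neg_add_cancel, Complex.exp_zero, mul_one]

/-- Harnack's inequality for `-log ‖f‖`. -/
lemma norm_rpow_le_norm_of_ball_ne_zero {R : ℝ} (hf : DifferentiableOn ℂ f (ball 0 R))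
    (hle : ∀ z ∈ ball (0 : ℂ) R, ‖f z‖ ≤ 1) (hne : ∀ z ∈ ball (0 : ℂ) R, f z ≠ 0) {w : ℂ}
    (hw : w ∈ ball 0 R) : ‖f 0‖ ^ ((R + ‖w‖) / (R - ‖w‖)) ≤ ‖f w‖ := by
  have hwR : 0 < R - ‖w‖ := sub_pos.2 (mem_ball_zero_iff.1 hw)
  have hR : 0 < R := by linarith [norm_nonneg w]
  have h0 : (0 : ℂ) ∈ ball 0 R := mem_ball_self hR
  have hpos : 0 < ‖f 0‖ := norm_pos_iff.2 (hne 0 h0)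
  rcases (hle 0 h0).lt_or_eq with hlt | heq
  · obtain ⟨g, hgd, hg0, hfg⟩ := exists_eq_mul_exp_of_ball_ne_zero hR hf hne
    have hnorm : ∀ z ∈ ball (0 : ℂ) R, ‖f z‖ = Real.exp (Real.log ‖f 0‖ + (g z).re) := by
      intro z hz
      rw [hfg z hz, norm_mul, Complex.norm_exp, Real.exp_add, Real.exp_log hpos]
    have hre : MapsTo g (ball 0 R) {z | z.re ≤ -Real.log ‖f 0‖} := by
      intro z hz
      have := hle z hz
      rw [hnorm z hz, Real.exp_le_one_iff] at this
      exact show (g z).re ≤ _ by linarith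
    have hg := Complex.borelCaratheodory_zero (neg_pos.2 (Real.log_neg hpos hlt)) hgd hre hR hw hg0
    rw [hnorm w hw, Real.rpow_def_of_pos hpos, Real.exp_le_exp]
    calc Real.log ‖f 0‖ * ((R + ‖w‖) / (R - ‖w‖))
        = Real.log ‖f 0‖ - 2 * -Real.log ‖f 0‖ * ‖w‖ / (R - ‖w‖) := by field_simp; ring
      _ ≤ Real.log ‖f 0‖ - ‖g w‖ := by gcongr
      _ ≤ Real.log ‖f 0‖ + (g w).re := by
        linarith [neg_abs_le (g w).re, Complex.abs_re_le_norm (g w)]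
  · have hmax : IsMaxOn (norm ∘ f) (ball 0 R) 0 := fun z hz ↦ (hle z hz).trans_eq heq.symm
    have hconst := Complex.norm_eqOn_of_isPreconnected_of_isMaxOn
      (convex_ball (0 : ℂ) R).isPreconnected isOpen_ball hf h0 hmax hw
    rw [heq, Real.one_rpow]
    exact (heq.symm.trans hconst.symm).le

lemma norm_sub_eq_norm_one_sub_conj_mul {ρ z : ℂ} (hz : ‖z‖ = 1) :
    ‖z - ρ‖ = ‖1 - starRingEnd ℂ ρ * z‖ := by
  have h : (starRingEnd ℂ z) * z = 1 := by rw [Complex.conj_mul', hz]; norm_num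
  rw [← mul_one ‖z - ρ‖, ← hz, ← Complex.norm_conj (z - ρ), ← norm_mul, map_sub, sub_mul, h]

lemma exists_blaschke_quotient (hf : DiffContOnCl ℂ f (ball 0 1))
    (hle : ∀ z ∈ closedBall (0 : ℂ) 1, ‖f z‖ ≤ 1) {ρ : ℂ} (hρ : ‖ρ‖ < 1) (hfρ : f ρ = 0) :
    ∃ g : ℂ → ℂ, DiffContOnCl ℂ g (ball 0 1) ∧ (∀ z ∈ closedBall (0 : ℂ) 1, ‖g z‖ ≤ 1) ∧
      ∀ z, (z - ρ) * g z = (1 - starRingEnd ℂ ρ * z) * f z := by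
  have hnhds : ball (0 : ℂ) 1 ∈ 𝓝 ρ := isOpen_ball.mem_nhds (mem_ball_zero_iff.2 hρ)
  have hcont : ContinuousOn (dslope f ρ) (closedBall 0 1) :=
    (continuousOn_dslope (mem_of_superset hnhds ball_subset_closedBall)).2
      ⟨hf.continuousOn_ball, hf.differentiableOn.differentiableAt hnhds⟩
  set g : ℂ → ℂ := fun z ↦ dslope f ρ z * (1 - starRingEnd ℂ ρ * z)
  have hg : DiffContOnCl ℂ g (ball 0 1) :=
    .mk_ball (((Complex.differentiableOn_dslope hnhds).2 hf.differentiableOn).mul (by fun_prop))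
      (hcont.mul (by fun_prop))
  have hmul : ∀ z, (z - ρ) * g z = (1 - starRingEnd ℂ ρ * z) * f z := by
    intro z
    have : (z - ρ) * dslope f ρ z = f z := by
      simpa only [smul_eq_mul, hfρ, sub_zero] using sub_smul_dslope f ρ z
    rw [← this]
    ring
  have hsphere : ∀ z ∈ frontier (ball (0 : ℂ) 1), ‖g z‖ ≤ 1 := by
    intro z hz
    rw [frontier_ball _ one_ne_zero, mem_sphere_zero_iff_norm] at hz
    have hne : z - ρ ≠ 0 := sub_ne_zero.2 (by rintro rfl; exact hρ.ne hz)
    have hnorm := congr_arg norm (hmul z)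
    rw [norm_mul (z - ρ), norm_mul (1 - _), ← norm_sub_eq_norm_one_sub_conj_mul hz] at hnorm
    rw [mul_left_cancel₀ (norm_ne_zero_iff.2 hne) hnorm]
    exact hle z (mem_closedBall_zero_iff.2 hz.le)
  refine ⟨g, hg, fun z hz ↦ ?_, hmul⟩
  exact Complex.norm_le_of_forall_mem_frontier_norm_le isBounded_ball hg hsphere
    (by rwa [closure_ball _ one_ne_zero])

lemma exists_blaschke_quotient_of_norm_le_half (hf : DiffContOnCl ℂ f (ball 0 1))
    (hle : ∀ z ∈ closedBall (0 : ℂ) 1, ‖f z‖ ≤ 1) {ρ : ℂ} (hρ : ‖ρ‖ ≤ 1 / 2) (hfρ : f ρ = 0) :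
    ∃ g : ℂ → ℂ, DiffContOnCl ℂ g (ball 0 1) ∧ (∀ z ∈ closedBall (0 : ℂ) 1, ‖g z‖ ≤ 1) ∧
      2 * ‖f 0‖ ≤ ‖g 0‖ ∧ (∀ z ∈ closedBall (0 : ℂ) 1, g z = 0 → f z = 0) ∧
      ∀ z ∈ closedBall (0 : ℂ) 1, ‖z - ρ‖ * ‖g z‖ ≤ 2 * ‖f z‖ := by
  obtain ⟨g, hg, hgle, hgf⟩ := exists_blaschke_quotient hf hle (by linarith) hfρ
  have hconj : ∀ z ∈ closedBall (0 : ℂ) 1, ‖starRingEnd ℂ ρ * z‖ ≤ 1 / 2 := fun z hz ↦ by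
    rw [norm_mul, Complex.norm_conj]
    exact (mul_le_of_le_one_right (norm_nonneg ρ) (mem_closedBall_zero_iff.1 hz)).trans hρ
  refine ⟨g, hg, hgle, ?_, fun z hz hgz ↦ ?_, fun z hz ↦ ?_⟩
  · have hf0 : ‖ρ‖ * ‖g 0‖ = ‖f 0‖ := by simpa using congr_arg norm (hgf 0)
    have : ‖ρ‖ * ‖g 0‖ ≤ 1 / 2 * ‖g 0‖ := by gcongr
    linarith
  · have hne : 1 - starRingEnd ℂ ρ * z ≠ 0 := fun h ↦ by
      have := hconj z hz
      rw [← sub_eq_zero.1 h, norm_one] at this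
      norm_num at this
    refine (mul_eq_zero.1 ?_).resolve_left hne
    rw [← hgf z, hgz, mul_zero]
  · rw [← norm_mul, hgf z, norm_mul]
    gcongr
    calc ‖1 - starRingEnd ℂ ρ * z‖ ≤ ‖(1 : ℂ)‖ + ‖starRingEnd ℂ ρ * z‖ := norm_sub_le _ _
      _ ≤ 2 := by rw [norm_one]; linarith [hconj z hz]

lemma pow_le_norm_of_ne_zero_on_half_ball (hf : DifferentiableOn ℂ f (ball 0 1))
    (hle : ∀ z ∈ closedBall (0 : ℂ) 1, ‖f z‖ ≤ 1) (hne : ∀ z, ‖z‖ ≤ 1 / 2 → f z ≠ 0) {s : ℂ}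
    (hs : ‖s‖ ≤ 1 / 4) : ‖f 0‖ ^ 3 ≤ ‖f s‖ := by
  have hexp : (1 / 2 + ‖s‖) / (1 / 2 - ‖s‖) ≤ (3 : ℕ) := by
    rw [div_le_iff₀ (by linarith)]
    push_cast
    linarith
  calc ‖f 0‖ ^ 3 = ‖f 0‖ ^ ((3 : ℕ) : ℝ) := (Real.rpow_natCast _ 3).symm
    _ ≤ ‖f 0‖ ^ ((1 / 2 + ‖s‖) / (1 / 2 - ‖s‖)) :=
      Real.rpow_le_rpow_of_exponent_ge (norm_pos_iff.2 (hne 0 (by norm_num)))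
        (hle 0 (by simp)) hexp
    _ ≤ ‖f s‖ := by
      refine norm_rpow_le_norm_of_ball_ne_zero (hf.mono (ball_subset_ball (by norm_num)))
        (fun z hz ↦ hle z ?_) (fun z hz ↦ hne z (mem_ball_zero_iff.1 hz).le)
        (mem_ball_zero_iff.2 (by linarith))
      exact mem_closedBall_zero_iff.2 ((mem_ball_zero_iff.1 hz).le.trans (by norm_num))

/-- Jensen's inequality in disguise: `n` bounds the number of zeros in the half disc, because each
Blaschke division at least doubles the value at the centre. -/
lemma pow_le_norm_of_dist_zeros_unit_ball {s : ℂ} (hs : ‖s‖ ≤ 1 / 4) {δ : ℝ} (hδ : 0 < δ)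
    (hδ1 : δ ≤ 1) {n : ℕ} (hf : DiffContOnCl ℂ f (ball 0 1))
    (hle : ∀ z ∈ closedBall (0 : ℂ) 1, ‖f z‖ ≤ 1) (h0 : (1 / 2) ^ n < ‖f 0‖)
    (hzero : ∀ ρ ∈ closedBall (0 : ℂ) 1, f ρ = 0 → δ ≤ dist s ρ) :
    (δ / 16) ^ n ≤ ‖f s‖ := by
  induction n generalizing f with
  | zero => exact absurd (hle 0 (by simp)) (by simpa using h0)
  | succ n ih =>
    by_cases hne : ∀ z, ‖z‖ ≤ 1 / 2 → f z ≠ 0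
    · calc (δ / 16) ^ (n + 1) ≤ ((1 / 2) ^ 3) ^ (n + 1) := by gcongr; linarith
        _ = ((1 / 2) ^ (n + 1)) ^ 3 := pow_right_comm _ _ _
        _ ≤ ‖f 0‖ ^ 3 := by gcongr
        _ ≤ ‖f s‖ := pow_le_norm_of_ne_zero_on_half_ball hf.differentiableOn hle hne hs
    push Not at hne
    obtain ⟨ρ, hρ, hfρ⟩ := hne
    obtain ⟨g, hg, hgle, hg0, hgzero, hprod⟩ :=
      exists_blaschke_quotient_of_norm_le_half hf hle hρ hfρ
    have hsρ : δ ≤ ‖s - ρ‖ :=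
      dist_eq_norm s ρ ▸ hzero ρ (mem_closedBall_zero_iff.2 (by linarith)) hfρ
    calc (δ / 16) ^ (n + 1) = δ * (δ / 16) ^ n / 16 := by ring
      _ ≤ ‖s - ρ‖ * ‖g s‖ / 2 := by
        gcongr
        · exact ih hg hgle (by rw [pow_succ'] at h0; linarith)
            fun w hw hgw ↦ hzero w hw (hgzero w hw hgw)
        · norm_num
      _ ≤ ‖f s‖ := by linarith [hprod s (mem_closedBall_zero_iff.2 (by linarith))]

lemma dist_add_ofReal_mul {R : ℝ} (hR : 0 ≤ R) (c z w : ℂ) :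
    dist (c + R * z) (c + R * w) = R * dist z w := by
  rw [dist_add_left, dist_eq_norm, ← mul_sub, norm_mul, Complex.norm_real,
    Real.norm_of_nonneg hR, dist_eq_norm]

lemma mul_pow_le_norm_of_dist_zeros {c s : ℂ} {R M δ : ℝ} {n : ℕ} (hR : 0 < R) (hM : 0 < M)
    (hf : DiffContOnCl ℂ f (ball c R)) (hle : ∀ z ∈ closedBall c R, ‖f z‖ ≤ M)
    (hc : M * (1 / 2) ^ n < ‖f c‖) (hs : dist s c ≤ R / 4) (hδ : 0 < δ) (hδR : δ ≤ R)
    (hzero : ∀ ρ ∈ closedBall c R, f ρ = 0 → δ ≤ dist s ρ) :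
    M * (δ / R / 16) ^ n ≤ ‖f s‖ := by
  have hRc : (R : ℂ) ≠ 0 := Complex.ofReal_ne_zero.2 hR.ne'
  have hcdist : ∀ z : ℂ, dist (c + R * z) c = R * dist z 0 := fun z ↦ by
    simpa using dist_add_ofReal_mul hR.le c z 0
  have hmaps : ∀ z ∈ closedBall (0 : ℂ) 1, c + R * z ∈ closedBall c R := fun z hz ↦
    mem_closedBall.2 ((hcdist z).trans_le (mul_le_of_le_one_right hR.le hz))
  have hmaps' : MapsTo (fun z : ℂ ↦ c + R * z) (ball 0 1) (ball c R) := fun z hz ↦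
    mem_ball.2 ((hcdist z).trans_lt (mul_lt_of_lt_one_right hR hz))
  set w : ℂ := (s - c) / R
  have hw : c + R * w = s := by rw [mul_div_cancel₀ _ hRc, add_sub_cancel]
  have hw4 : ‖w‖ ≤ 1 / 4 := by
    rw [norm_div, Complex.norm_real, Real.norm_of_nonneg hR.le, ← dist_eq_norm,
      div_le_iff₀ hR]
    linarith
  set g : ℂ → ℂ := fun z ↦ (M : ℂ)⁻¹ • f (c + R * z)
  have hg : DiffContOnCl ℂ g (ball 0 1) :=
    (hf.comp (g := fun z : ℂ ↦ c + R * z) (Differentiable.diffContOnCl (by fun_prop))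
      hmaps').const_smul (M : ℂ)⁻¹
  have hgnorm : ∀ z, M * ‖g z‖ = ‖f (c + R * z)‖ := fun z ↦ by
    rw [norm_smul, norm_inv, Complex.norm_real, Real.norm_of_nonneg hM.le,
      mul_inv_cancel_left₀ hM.ne']
  have hgzero : ∀ ρ ∈ closedBall (0 : ℂ) 1, g ρ = 0 → δ / R ≤ dist w ρ := by
    intro ρ hρ hgρ
    rw [div_le_iff₀' hR, ← dist_add_ofReal_mul hR.le c, hw]
    exact hzero _ (hmaps ρ hρ) (by rw [← norm_eq_zero, ← hgnorm, hgρ, norm_zero, mul_zero])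
  rw [← hw, ← hgnorm]
  gcongr
  refine pow_le_norm_of_dist_zeros_unit_ball hw4 (div_pos hδ hR) ((div_le_one hR).2 hδR) hg
    (fun z hz ↦ ?_) ?_ hgzero
  · exact le_of_mul_le_mul_left (by rw [hgnorm, mul_one]; exact hle _ (hmaps z hz)) hM
  · refine lt_of_mul_lt_mul_left ?_ hM.le
    rwa [hgnorm, mul_zero, add_zero]

end BlaschkeDivision

section PolyGrowth

/-- The filter of points `s` with `Im s → ∞` in the vertical strip `a ≤ Re s ≤ b`. -/
def stripAtTop (a b : ℝ) : Filter ℂ :=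
  comap Complex.im atTop ⊓ 𝓟 {s | s.re ∈ Icc a b}

/-- Polynomial growth of `f` in `Im s` on the strip `a ≤ Re s ≤ b`, as `Im s → +∞`. -/
def HasPolyGrowth (a b : ℝ) (f : ℂ → ℂ) : Prop :=
  ∃ N : ℕ, f =O[stripAtTop a b] fun s ↦ s.im ^ N

variable {a b : ℝ} {f g : ℂ → ℂ}

lemma eventually_stripAtTop {p : ℂ → Prop} :
    (∀ᶠ s in stripAtTop a b, p s) ↔ ∃ T, ∀ s : ℂ, s.re ∈ Icc a b → T ≤ s.im → p s := by
  rw [stripAtTop, eventually_inf_principal, eventually_comap]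
  simp only [eventually_atTop]
  exact ⟨fun ⟨T, h⟩ ↦ ⟨T, fun s hs hT ↦ h _ hT s rfl hs⟩,
    fun ⟨T, h⟩ ↦ ⟨T, fun t ht s hst hs ↦ h s hs (hst.symm ▸ ht)⟩⟩

lemma eventually_le_im_stripAtTop (a b T : ℝ) : ∀ᶠ s : ℂ in stripAtTop a b, T ≤ s.im :=
  eventually_stripAtTop.2 ⟨T, fun _ _ h ↦ h⟩

lemma eventually_re_mem_Icc_stripAtTop (a b : ℝ) :
    ∀ᶠ s : ℂ in stripAtTop a b, s.re ∈ Icc a b :=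
  eventually_stripAtTop.2 ⟨0, fun _ h _ ↦ h⟩

lemma isBigO_im_pow_of_le {M N : ℕ} (h : M ≤ N) :
    (fun s : ℂ ↦ s.im ^ M) =O[stripAtTop a b] fun s ↦ s.im ^ N := by
  refine .of_bound 1 ((eventually_le_im_stripAtTop a b 1).mono fun s hs ↦ ?_)
  rw [one_mul, norm_pow, norm_pow]
  exact pow_le_pow_right₀ (hs.trans (Real.le_norm_self _)) h

namespace HasPolyGrowth

lemma exists_norm_le_im_pow (hf : HasPolyGrowth a b f) :
    ∃ (N : ℕ) (T : ℝ), ∀ s : ℂ, s.re ∈ Icc a b → T ≤ s.im → ‖f s‖ ≤ s.im ^ N := by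
  obtain ⟨N, hN⟩ := hf
  obtain ⟨C, hC⟩ := hN.bound
  refine ⟨N + 1, eventually_stripAtTop.1 ?_⟩
  filter_upwards [hC, eventually_le_im_stripAtTop a b (max C 0)] with s hs hT
  have him : 0 ≤ s.im := (le_max_right C 0).trans hT
  calc ‖f s‖ ≤ C * s.im ^ N := by rwa [norm_pow, Real.norm_of_nonneg him] at hs
    _ ≤ s.im * s.im ^ N := by gcongr; exact (le_max_left C 0).trans hT
    _ = s.im ^ (N + 1) := (pow_succ' _ _).symm

lemma of_isBigO (hg : HasPolyGrowth a b g) (h : f =O[stripAtTop a b] g) :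
    HasPolyGrowth a b f :=
  hg.imp fun _ hN ↦ h.trans hN

lemma congr' (hf : HasPolyGrowth a b f) (h : f =ᶠ[stripAtTop a b] g) : HasPolyGrowth a b g :=
  hf.of_isBigO h.symm.isBigO

lemma of_norm_le {C : ℝ} (h : ∀ s : ℂ, s.re ∈ Icc a b → ‖f s‖ ≤ C) : HasPolyGrowth a b f := by
  refine ⟨0, .of_bound C ((eventually_re_mem_Icc_stripAtTop a b).mono fun s hs ↦ ?_)⟩
  simpa using h s hs

lemma const (a b : ℝ) (c : ℂ) : HasPolyGrowth a b fun _ ↦ c :=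
  of_norm_le fun _ _ ↦ le_rfl

lemma id (a b : ℝ) : HasPolyGrowth a b fun s ↦ s := by
  refine ⟨1, .of_bound 2 ?_⟩
  filter_upwards [eventually_re_mem_Icc_stripAtTop a b,
    eventually_le_im_stripAtTop a b (max |a| |b|)] with s hs hT
  have hre : |s.re| ≤ s.im := (abs_le_max_abs_abs hs.1 hs.2).trans hT
  rw [pow_one]
  calc ‖s‖ ≤ |s.re| + |s.im| := Complex.norm_le_abs_re_add_abs_im s
    _ ≤ 2 * ‖s.im‖ := by rw [Real.norm_eq_abs]; linarith [le_abs_self s.im]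

lemma add (hf : HasPolyGrowth a b f) (hg : HasPolyGrowth a b g) :
    HasPolyGrowth a b fun s ↦ f s + g s := by
  obtain ⟨M, hM⟩ := hf
  obtain ⟨N, hN⟩ := hg
  exact ⟨max M N, (hM.trans (isBigO_im_pow_of_le (le_max_left M N))).add
    (hN.trans (isBigO_im_pow_of_le (le_max_right M N)))⟩

lemma mul (hf : HasPolyGrowth a b f) (hg : HasPolyGrowth a b g) :
    HasPolyGrowth a b fun s ↦ f s * g s := by
  obtain ⟨M, hM⟩ := hf
  obtain ⟨N, hN⟩ := hg
  exact ⟨M + N, by simpa only [pow_add] using hM.mul hN⟩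

lemma sum {ι : Type*} {u : Finset ι} {F : ι → ℂ → ℂ} (h : ∀ i ∈ u, HasPolyGrowth a b (F i)) :
    HasPolyGrowth a b fun s ↦ ∑ i ∈ u, F i s := by
  induction u using Finset.cons_induction with
  | empty => simpa using const a b 0
  | cons i u hi ih =>
    simp only [Finset.sum_cons]
    exact (h i (Finset.mem_cons_self i u)).add
      (ih fun j hj ↦ h j (Finset.mem_cons_of_mem hj))

lemma polynomial_eval (a b : ℝ) (p : Polynomial ℂ) : HasPolyGrowth a b fun s ↦ p.eval s := by
  induction p using Polynomial.induction_on' with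
  | add p q hp hq => simpa only [Polynomial.eval_add] using hp.add hq
  | monomial n c =>
    simp only [Polynomial.eval_monomial]
    induction n with
    | zero => simpa using const a b c
    | succ n ih => simpa only [pow_succ, ← mul_assoc] using ih.mul (id a b)

lemma comp_add (r : ℝ) (hf : HasPolyGrowth (a + r) (b + r) f) :
    HasPolyGrowth a b fun s ↦ f (s + r) := by
  obtain ⟨N, T, h⟩ := hf.exists_norm_le_im_pow
  refine ⟨N, .of_bound 1 (eventually_stripAtTop.2 ⟨T, fun s hs hT ↦ ?_⟩)⟩
  have hre : (s + r).re ∈ Icc (a + r) (b + r) :=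
    ⟨by simpa using hs.1, by simpa using hs.2⟩
  calc ‖f (s + r)‖ ≤ (s + r).im ^ N := h _ hre (by simpa using hT)
    _ ≤ 1 * ‖s.im ^ N‖ := by simpa using Real.le_norm_self (s.im ^ N)

end HasPolyGrowth

end PolyGrowth

section ZeroDistLowerBound

/-- On the part `t₀ ≤ Im s` of `S`, the function `F` is at least `(q * δ) ^ (A * log (Im s))`
whenever `δ ∈ (0, 1]` is a lower bound for the distance from `s` to the zeros of `F`. Quantifying
over `δ` instead of using `Metric.infDist` covers functions without zeros. -/
def ZeroDistLowerBound (F : ℂ → ℂ) (t₀ : ℝ) (S : Set ℂ) : Prop :=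
  ∃ A q : ℝ, 0 ≤ A ∧ 0 < q ∧ q ≤ 1 ∧ ∀ s ∈ S, t₀ ≤ s.im → ∀ δ, 0 < δ → δ ≤ 1 →
    (∀ ρ, F ρ = 0 → δ ≤ dist s ρ) → (q * δ) ^ (A * Real.log s.im) ≤ ‖F s‖

variable {F : ℂ → ℂ} {t₀ : ℝ} {S S' : Set ℂ}

lemma mul_rpow_mul_log_le {A A' q q' δ t : ℝ} (hA : 0 ≤ A) (hAA' : A ≤ A') (hq' : 0 < q')
    (hqq' : q' ≤ q) (hq : q ≤ 1) (hδ : 0 < δ) (hδ1 : δ ≤ 1) (ht : 1 ≤ t) :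
    (q' * δ) ^ (A' * Real.log t) ≤ (q * δ) ^ (A * Real.log t) := by
  have hlog : 0 ≤ Real.log t := Real.log_nonneg ht
  calc (q' * δ) ^ (A' * Real.log t) ≤ (q' * δ) ^ (A * Real.log t) :=
        Real.rpow_le_rpow_of_exponent_ge (by positivity)
          (mul_le_one₀ (hqq'.trans hq) hδ.le hδ1) (by gcongr)
    _ ≤ (q * δ) ^ (A * Real.log t) := by gcongr

namespace ZeroDistLowerBound

lemma mono (h : ZeroDistLowerBound F t₀ S) (hS : S' ⊆ S) : ZeroDistLowerBound F t₀ S' := by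
  obtain ⟨A, q, hA, hq, hq1, h⟩ := h
  exact ⟨A, q, hA, hq, hq1, fun s hs ↦ h s (hS hs)⟩

lemma union (ht₀ : 1 < t₀) (h : ZeroDistLowerBound F t₀ S) (h' : ZeroDistLowerBound F t₀ S') :
    ZeroDistLowerBound F t₀ (S ∪ S') := by
  obtain ⟨A, q, hA, hq, hq1, h⟩ := h
  obtain ⟨A', q', hA', hq', hq1', h'⟩ := h'
  have hmin : 0 < min q q' := lt_min hq hq'
  refine ⟨max A A', min q q', hA.trans (le_max_left _ _), hmin,
    (min_le_left _ _).trans hq1, fun s hs ht δ hδ hδ1 hzero ↦ ?_⟩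
  have hs1 : 1 ≤ s.im := ht₀.le.trans ht
  rcases hs with hs | hs
  · exact (mul_rpow_mul_log_le hA (le_max_left _ _) hmin (min_le_left _ _) hq1 hδ hδ1 hs1).trans
      (h s hs ht δ hδ hδ1 hzero)
  · exact (mul_rpow_mul_log_le hA' (le_max_right _ _) hmin (min_le_right _ _) hq1' hδ hδ1
      hs1).trans (h' s hs ht δ hδ hδ1 hzero)

lemma of_mul_pow_le (ht₀ : 1 < t₀) {κ : ℝ} (hκ : 0 < κ) {n : ℕ}
    (h : ∀ s ∈ S, ∀ δ, 0 < δ → δ ≤ 1 → (∀ ρ, F ρ = 0 → δ ≤ dist s ρ) → κ * δ ^ n ≤ ‖F s‖) :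
    ZeroDistLowerBound F t₀ S := by
  have hlog : 0 < Real.log t₀ := Real.log_pos ht₀
  have hq : 0 < min κ 1 := lt_min hκ one_pos
  have hq1 : min κ 1 ≤ 1 := min_le_right κ 1
  refine ⟨(n + 1 : ℕ) / Real.log t₀, min κ 1, by positivity, hq, hq1,
    fun s hs ht δ hδ hδ1 hzero ↦ ?_⟩
  have hexp : ((n + 1 : ℕ) : ℝ) ≤ (n + 1 : ℕ) / Real.log t₀ * Real.log s.im := by
    rw [div_mul_eq_mul_div, le_div_iff₀ hlog]
    gcongr
  calc (min κ 1 * δ) ^ ((n + 1 : ℕ) / Real.log t₀ * Real.log s.im)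
      ≤ (min κ 1 * δ) ^ ((n + 1 : ℕ) : ℝ) :=
        Real.rpow_le_rpow_of_exponent_ge (by positivity) (mul_le_one₀ hq1 hδ.le hδ1) hexp
    _ = min κ 1 ^ (n + 1) * δ ^ (n + 1) := by rw [Real.rpow_natCast, mul_pow]
    _ ≤ min κ 1 * δ ^ n :=
        mul_le_mul (pow_le_of_le_one hq.le hq1 n.succ_ne_zero)
          (pow_le_pow_of_le_one hδ.le hδ1 n.le_succ) (by positivity) hq.le
    _ ≤ κ * δ ^ n := by gcongr; exact min_le_left κ 1
    _ ≤ ‖F s‖ := h s hs δ hδ hδ1 hzero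

lemma of_le_norm (ht₀ : 1 < t₀) {κ : ℝ} (hκ : 0 < κ) (h : ∀ s ∈ S, κ ≤ ‖F s‖) :
    ZeroDistLowerBound F t₀ S :=
  of_mul_pow_le (n := 0) ht₀ hκ fun s hs _ _ _ _ ↦ by simpa using h s hs

lemma exists_mem_nhds (ht₀ : 1 < t₀) {z : ℂ} (hF : AnalyticAt ℂ F z)
    (hne : ¬∀ᶠ s in 𝓝 z, F s = 0) : ∃ U ∈ 𝓝 z, ZeroDistLowerBound F t₀ U := by
  obtain ⟨n, g, hg, hgz, hFg⟩ := hF.exists_eventuallyEq_pow_smul_nonzero_iff.2 hne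
  have hpos : 0 < ‖g z‖ := norm_pos_iff.2 hgz
  have hgU : ∀ᶠ s in 𝓝 z, ‖g z‖ / 2 < ‖g s‖ :=
    hg.continuousAt.norm.eventually (lt_mem_nhds (half_lt_self hpos))
  refine ⟨_, hFg.and hgU, of_mul_pow_le (n := n) ht₀ (half_pos hpos)
    fun s ⟨hFs, hgs⟩ δ hδ _ hzero ↦ ?_⟩
  rw [hFs, norm_smul, norm_pow, mul_comm (‖s - z‖ ^ n)]
  refine mul_le_mul hgs.le ?_ (by positivity) (norm_nonneg _)
  rcases n.eq_zero_or_pos with rfl | hn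
  · simp
  · have hFz : F z = 0 := by simpa [hn.ne'] using hFg.self_of_nhds
    gcongr
    exact dist_eq_norm s z ▸ hzero z hFz

lemma of_isCompact (ht₀ : 1 < t₀) (hF : ∀ s : ℂ, 0 < s.im → DifferentiableAt ℂ F s) {z : ℂ}
    (hz : 0 < z.im) (hFz : F z ≠ 0) (hS : IsCompact S) (hSim : ∀ s ∈ S, 0 < s.im) :
    ZeroDistLowerBound F t₀ S := by
  have hH : IsOpen {s : ℂ | 0 < s.im} := isOpen_lt continuous_const Complex.continuous_im
  have han : AnalyticOnNhd ℂ F {s | 0 < s.im} :=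
    DifferentiableOn.analyticOnNhd (fun s hs ↦ (hF s hs).differentiableWithinAt) hH
  refine hS.induction_on ?_ (fun _ _ hst h ↦ h.mono hst) (fun _ _ ↦ union ht₀) fun s hs ↦ ?_
  · exact of_le_norm ht₀ one_pos (by simp)
  · have hne : ¬∀ᶠ w in 𝓝 s, F w = 0 := fun h0 ↦
      hFz (han.eqOn_zero_of_preconnected_of_eventuallyEq_zero
        (convex_halfSpace_im_gt 0).isPreconnected (hSim s hs) h0 hz)
    obtain ⟨U, hU, h⟩ := exists_mem_nhds ht₀ (han s (hSim s hs)) hne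
    exact ⟨U, mem_nhdsWithin_of_mem_nhds hU, h⟩

end ZeroDistLowerBound

lemma exists_pow_le_two_pow_natCast_le (k : ℕ) {t : ℝ} (ht : 2 ≤ t) :
    ∃ n : ℕ, t ^ k ≤ 2 ^ n ∧ (n : ℝ) ≤ (k + 1) * Real.logb 2 t := by
  have hlogb : 1 ≤ Real.logb 2 t := by
    rwa [Real.le_logb_iff_rpow_le one_lt_two (by linarith), Real.rpow_one]
  refine ⟨⌈k * Real.logb 2 t⌉₊, ?_, ?_⟩
  · rw [← Real.rpow_natCast 2, ← Real.logb_le_iff_le_rpow one_lt_two (by positivity),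
      Real.logb_pow]
    exact Nat.le_ceil _
  · linarith [Nat.ceil_lt_add_one (by positivity : 0 ≤ k * Real.logb 2 t)]

lemma rpow_mul_log_le_norm_of_dist_zeros {c s : ℂ} {R κ t δ : ℝ} (k : ℕ) (hR : 0 < R)
    (ht : 2 ≤ t) (htκ : 1 < κ * t) (hF : DiffContOnCl ℂ F (ball c R))
    (hle : ∀ z ∈ closedBall c R, ‖F z‖ ≤ t ^ k) (hc : κ ≤ ‖F c‖) (hs : dist s c ≤ R / 4)
    (hδ : 0 < δ) (hδR : δ ≤ R) (hzero : ∀ ρ, F ρ = 0 → δ ≤ dist s ρ) :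
    (1 / (16 * R) * δ) ^ ((k + 2) / Real.log 2 * Real.log t) ≤ ‖F s‖ := by
  obtain ⟨n, hn, hnlog⟩ := exists_pow_le_two_pow_natCast_le (k + 1) ht
  have hcenter : t ^ k * (1 / 2) ^ n < ‖F c‖ := by
    rw [div_pow, one_pow, mul_one_div, div_lt_iff₀ (by positivity)]
    calc t ^ k < κ * t ^ (k + 1) := by
          rw [pow_succ', ← mul_assoc]
          exact lt_mul_of_one_lt_left (by positivity) htκ
      _ ≤ ‖F c‖ * 2 ^ n := by gcongr
  have hbase : 1 / (16 * R) * δ ≤ 1 := by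
    rw [one_div_mul_eq_div, div_le_one (by positivity)]; linarith
  calc (1 / (16 * R) * δ) ^ ((k + 2) / Real.log 2 * Real.log t)
      ≤ (1 / (16 * R) * δ) ^ (n : ℝ) := by
        refine Real.rpow_le_rpow_of_exponent_ge (by positivity) hbase (hnlog.trans_eq ?_)
        rw [Real.logb]; push_cast; ring
    _ = (δ / R / 16) ^ n := by rw [Real.rpow_natCast]; congr 1; field_simp
    _ ≤ t ^ k * (δ / R / 16) ^ n :=
        le_mul_of_one_le_left (by positivity) (one_le_pow₀ (by linarith))
    _ ≤ ‖F s‖ := mul_pow_le_norm_of_dist_zeros hR (by positivity) hF hle hcenter hs hδ hδR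
        fun ρ _ ↦ hzero ρ

lemma re_im_mem_Icc_of_mem_closedBall {c z : ℂ} {R : ℝ} (hz : z ∈ closedBall c R) :
    z.re ∈ Icc (c.re - R) (c.re + R) ∧ z.im ∈ Icc (c.im - R) (c.im + R) := by
  rw [mem_closedBall, dist_eq_norm] at hz
  have hre := (Complex.abs_re_le_norm (z - c)).trans hz
  have him := (Complex.abs_im_le_norm (z - c)).trans hz
  rw [Complex.sub_re, ← Real.dist_eq, ← mem_closedBall, Real.closedBall_eq_Icc] at hre
  rw [Complex.sub_im, ← Real.dist_eq, ← mem_closedBall, Real.closedBall_eq_Icc] at him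
  exact ⟨hre, him⟩

lemma exists_zeroDistLowerBound_strip {σ₀ σ₁ κ : ℝ} (hσ : σ₀ ≤ σ₁)
    (hF : ∀ s : ℂ, 0 < s.im → DifferentiableAt ℂ F s) (hgrowth : ∀ a b, HasPolyGrowth a b F)
    (hκ : 0 < κ) (hright : ∀ s : ℂ, s.re = σ₁ → κ ≤ ‖F s‖) :
    ∃ T, ZeroDistLowerBound F t₀ {s | s.re ∈ Icc σ₀ σ₁ ∧ T ≤ s.im} := by
  -- The disc of radius `R` about `σ₁ + it` reaches back to `σ₀` within a quarter of its radius.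
  set R : ℝ := 4 * (σ₁ - σ₀) + 1 with hR
  have hR1 : 1 ≤ R := by rw [hR]; linarith
  obtain ⟨N, T₀, hN⟩ := (hgrowth (σ₁ - R) (σ₁ + R)).exists_norm_le_im_pow
  refine ⟨max (max (T₀ + R) (2 * R)) (max 2 (2 / κ)), ((2 * N : ℕ) + 2) / Real.log 2,
    1 / (16 * R), by positivity, by positivity, ?_, ?_⟩
  · rw [div_le_one (by positivity)]; linarith
  rintro s ⟨hre, hT⟩ - δ hδ hδ1 hzero
  simp only [max_le_iff] at hT
  obtain ⟨⟨hTR, h2R⟩, hT2, hTκ⟩ := hT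
  rw [div_le_iff₀' hκ] at hTκ
  have hdiff : DiffContOnCl ℂ F (ball ⟨σ₁, s.im⟩ R) := by
    refine DifferentiableOn.diffContOnCl fun z hz ↦ (hF z ?_).differentiableWithinAt
    rw [closure_ball _ (by positivity)] at hz
    linarith [(re_im_mem_Icc_of_mem_closedBall hz).2.1]
  have hle : ∀ z ∈ closedBall (⟨σ₁, s.im⟩ : ℂ) R, ‖F z‖ ≤ s.im ^ (2 * N) := by
    intro z hz
    obtain ⟨hzre, hzim⟩ := re_im_mem_Icc_of_mem_closedBall hz
    simp only [mem_Icc] at hzim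
    calc ‖F z‖ ≤ z.im ^ N := hN z hzre (by linarith)
      _ ≤ (s.im ^ 2) ^ N := by gcongr <;> nlinarith
      _ = s.im ^ (2 * N) := (pow_mul _ _ _).symm
  have hdist : dist s ⟨σ₁, s.im⟩ ≤ R / 4 := by
    have : dist s ⟨σ₁, s.im⟩ = dist s.re σ₁ := Complex.dist_of_im_eq rfl
    rw [this, dist_comm, Real.dist_eq, abs_of_nonneg (sub_nonneg.2 hre.2)]
    linarith [hre.1, hR]
  exact rpow_mul_log_le_norm_of_dist_zeros (2 * N) (by positivity) hT2 (by linarith) hdiff hle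
    (hright _ rfl) hdist hδ (hδ1.trans hR1) hzero

theorem zeroDistLowerBound_of_hasPolyGrowth (ht₀ : 1 < t₀) (σ₀ : ℝ) {σ₁ κ : ℝ}
    (hF : ∀ s : ℂ, 0 < s.im → DifferentiableAt ℂ F s) (hgrowth : ∀ a b, HasPolyGrowth a b F)
    (hκ : 0 < κ) (hright : ∀ s : ℂ, σ₁ ≤ s.re → κ ≤ ‖F s‖) :
    ZeroDistLowerBound F t₀ {s | σ₀ ≤ s.re ∧ t₀ ≤ s.im} := by
  have hright' : ∀ s : ℂ, s.re = max σ₀ σ₁ → κ ≤ ‖F s‖ := fun s hs ↦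
    hright s ((le_max_right _ _).trans_eq hs.symm)
  obtain ⟨T, hfar⟩ := exists_zeroDistLowerBound_strip (t₀ := t₀) (le_max_left σ₀ σ₁) hF hgrowth hκ
    hright'
  have hnear : ZeroDistLowerBound F t₀ (Icc σ₀ (max σ₀ σ₁) ×ℂ Icc t₀ T) :=
    .of_isCompact ht₀ hF (z := ⟨σ₁, 1⟩) one_pos
      (norm_pos_iff.1 (hκ.trans_le (hright _ le_rfl))) (isCompact_Icc.reProdIm isCompact_Icc)
      fun s hs ↦ by linarith [hs.2.1]
  have hhalf : ZeroDistLowerBound F t₀ {s | σ₁ ≤ s.re} := .of_le_norm ht₀ hκ hright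
  refine ((hfar.union ht₀ hnear).union ht₀ hhalf).mono fun s ⟨hre, him⟩ ↦ ?_
  rcases le_total σ₁ s.re with h | h
  · exact .inr h
  have hs : s.re ∈ Icc σ₀ (max σ₀ σ₁) := ⟨hre, h.trans (le_max_right _ _)⟩
  rcases le_total T s.im with hT | hT
  · exact .inl (.inl ⟨hs, hT⟩)
  · exact .inl (.inr ⟨hs, him, hT⟩)

lemma exists_neg_log_le_abs_log_infDist {Z : Set ℂ} {s : ℂ} (hs : s ∉ closure Z) :
    ∃ δ, 0 < δ ∧ δ ≤ 1 ∧ (∀ ρ ∈ Z, δ ≤ dist s ρ) ∧ -Real.log δ ≤ |Real.log (infDist s Z)| := by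
  rcases Z.eq_empty_or_nonempty with rfl | hZ
  · exact ⟨1, one_pos, le_rfl, by simp, by simp⟩
  have hd : 0 < infDist s Z := (infDist_pos_iff_notMem_closure hZ).1 hs
  refine ⟨min (infDist s Z) 1, lt_min hd one_pos, min_le_right _ _,
    fun ρ hρ ↦ (min_le_left _ _).trans (infDist_le_dist_of_mem hρ), ?_⟩
  rcases le_total (infDist s Z) 1 with h | h
  · rw [min_eq_left h]; exact neg_le_abs _
  · simp [min_eq_right h]

theorem ZeroDistLowerBound.exists_one_div_norm_lt (h : ZeroDistLowerBound F t₀ S) (ht₀ : 1 < t₀)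
    (hF : ∀ s ∈ S, ContinuousAt F s) :
    ∃ C : ℝ, 0 < C ∧ ∀ s ∈ S, t₀ ≤ s.im → F s ≠ 0 →
      1 / ‖F s‖ <
        Real.exp (C * (|Real.log (infDist s {ρ : ℂ | F ρ = 0})| + 1) * Real.log s.im) := by
  obtain ⟨A, q, hA, hq, hq1, h⟩ := h
  have hlogq : Real.log q ≤ 0 := Real.log_nonpos hq.le hq1
  have hC : 0 ≤ A * (1 - Real.log q) := mul_nonneg hA (by linarith)
  refine ⟨A * (1 - Real.log q) + 1, by linarith, fun s hs ht hFs ↦ ?_⟩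
  have hclosure : s ∉ closure {ρ : ℂ | F ρ = 0} := fun hmem ↦ by
    obtain ⟨w, hw0, hw⟩ := ((mem_closure_iff_frequently.1 hmem).and_eventually
      ((hF s hs).eventually_ne hFs)).exists
    exact hw hw0
  obtain ⟨δ, hδ, hδ1, hzero, hlogδ⟩ := exists_neg_log_le_abs_log_infDist hclosure
  set x : ℝ := |Real.log (infDist s {ρ : ℂ | F ρ = 0})|
  have hx : 0 ≤ x := abs_nonneg _
  have hlog : 0 < Real.log s.im := Real.log_pos (by linarith)
  have hexp : -Real.log (q * δ) * A < (A * (1 - Real.log q) + 1) * (x + 1) := by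
    rw [Real.log_mul hq.ne' hδ.ne']
    nlinarith [mul_nonneg hA hx, mul_nonneg hA (sub_nonneg.2 hlogδ),
      mul_nonneg hA (mul_nonneg (neg_nonneg.2 hlogq) hx)]
  calc 1 / ‖F s‖ ≤ 1 / (q * δ) ^ (A * Real.log s.im) := by
        gcongr; exact h s hs ht δ hδ hδ1 hzero
    _ = Real.exp (-Real.log (q * δ) * A * Real.log s.im) := by
        rw [Real.rpow_def_of_pos (by positivity), one_div, ← Real.exp_neg]; ring_nf
    _ < Real.exp ((A * (1 - Real.log q) + 1) * (x + 1) * Real.log s.im) := by gcongr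

end ZeroDistLowerBound

section BinomialRemainder

lemma ring_choose_eq_eval (w : ℂ) (n : ℕ) :
    Ring.choose w n = (Polynomial.C (n.factorial : ℂ)⁻¹ * descPochhammer ℂ n).eval w := by
  rw [Ring.choose_eq_smul, ← Polynomial.aeval_eq_smeval, Polynomial.eval_C_mul, smul_eq_mul,
    ← descPochhammer_map (algebraMap ℤ ℂ), Polynomial.eval_map_algebraMap]

lemma add_one_mul_ring_choose_add_one (w : ℂ) (n : ℕ) :
    (n + 1) * Ring.choose w (n + 1) = w * Ring.choose (w - 1) n := by
  simpa using Ring.choose_smul_choose w (n := n + 1) (k := 1) (by lia)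

/-- The remainder after `K` terms of the binomial expansion of `(x + y) ^ w` in powers of `y`. -/
noncomputable def binomRemainder (K : ℕ) (w : ℂ) (x y : ℝ) : ℂ :=
  (x + y : ℂ) ^ w - ∑ j ∈ Finset.range K, Ring.choose w j * (x : ℂ) ^ (w - j) * (y : ℂ) ^ j

lemma binomRemainder_succ_zero (K : ℕ) (w : ℂ) (x : ℝ) : binomRemainder (K + 1) w x 0 = 0 := by
  simp [binomRemainder, Finset.sum_range_succ']

lemma hasDerivAt_binomRemainder_succ (K : ℕ) (w : ℂ) {x y : ℝ} (hxy : 0 < x + y) :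
    HasDerivAt (binomRemainder (K + 1) w x) (w * binomRemainder K (w - 1) x y) y := by
  have hpow : HasDerivAt (fun u : ℂ ↦ (x + u) ^ w) (w * (x + y : ℂ) ^ (w - 1)) y := by
    have hslit : (x + y : ℂ) ∈ Complex.slitPlane := by
      exact_mod_cast Complex.ofReal_mem_slitPlane.2 hxy
    simpa using ((hasDerivAt_id (y : ℂ)).const_add (x : ℂ)).cpow_const hslit
  have hsum : HasDerivAt
      (fun u : ℂ ↦ ∑ j ∈ Finset.range (K + 1), Ring.choose w j * (x : ℂ) ^ (w - j) * u ^ j)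
      (∑ j ∈ Finset.range (K + 1), Ring.choose w j * (x : ℂ) ^ (w - j) * (j * (y : ℂ) ^ (j - 1)))
      y :=
    .fun_sum fun j _ ↦ (hasDerivAt_pow j (y : ℂ)).const_mul _
  refine (hpow.sub hsum).comp_ofReal.congr_deriv ?_
  rw [Finset.sum_range_succ', Nat.cast_zero, zero_mul, mul_zero, add_zero, binomRemainder,
    mul_sub, Finset.mul_sum]
  congr 1
  refine Finset.sum_congr rfl fun j _ ↦ ?_
  rw [add_tsub_cancel_right, Nat.cast_succ, sub_sub, add_comm 1 (j : ℂ)]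
  linear_combination (x : ℂ) ^ (w - (j + 1)) * (y : ℂ) ^ j * add_one_mul_ring_choose_add_one w j

lemma norm_binomRemainder_le (K : ℕ) {w : ℂ} {x y : ℝ} (hx : 0 < x) (hy : 0 ≤ y)
    (hw : w.re ≤ K) :
    ‖binomRemainder K w x y‖ ≤ K.factorial * ‖Ring.choose w K‖ * x ^ (w.re - K) * y ^ K := by
  induction K generalizing w y with
  | zero =>
    have hxy : 0 < x + y := by linarith
    have hnorm : ‖binomRemainder 0 w x y‖ = (x + y) ^ w.re := by
      rw [binomRemainder, Finset.sum_range_zero, sub_zero, ← Complex.ofReal_add,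
        Complex.norm_cpow_eq_rpow_re_of_pos hxy]
    simpa [hnorm] using Real.rpow_le_rpow_of_nonpos hx (by linarith) (by simpa using hw)
  | succ K ih =>
    have hre : (w - 1).re - K = w.re - (K + 1 : ℕ) := by simp; ring
    have hchoose : (K + 1).factorial * ‖Ring.choose w (K + 1)‖ =
        ‖w‖ * (K.factorial * ‖Ring.choose (w - 1) K‖) := by
      have h := congr_arg norm (add_one_mul_ring_choose_add_one w K)
      rw [norm_mul, norm_mul, ← Nat.cast_succ, Complex.norm_natCast] at h
      rw [Nat.factorial_succ, Nat.cast_mul]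
      linear_combination (K.factorial : ℝ) * h
    have hderiv : ∀ u ∈ Icc 0 y, ‖w * binomRemainder K (w - 1) x u‖ ≤
        (K + 1).factorial * ‖Ring.choose w (K + 1)‖ * x ^ (w.re - (K + 1 : ℕ)) * y ^ K := by
      intro u hu
      rw [norm_mul, hchoose, mul_assoc, mul_assoc]
      gcongr
      rw [← mul_assoc, ← hre]
      refine (ih hu.1 (by linarith)).trans ?_
      gcongr
      · exact hu.1
      · exact hu.2
    have hmean := (convex_Icc 0 y).norm_image_sub_le_of_norm_hasDerivWithin_le
      (fun u hu ↦ (hasDerivAt_binomRemainder_succ K w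
        (add_pos_of_pos_of_nonneg hx hu.1)).hasDerivWithinAt) hderiv
      (left_mem_Icc.2 hy) (right_mem_Icc.2 hy)
    rwa [binomRemainder_succ_zero, sub_zero, sub_zero, Real.norm_of_nonneg hy, mul_assoc _ (y ^ K),
      ← pow_succ] at hmean

lemma differentiable_ring_choose (n : ℕ) : Differentiable ℂ fun w : ℂ ↦ Ring.choose w n := by
  simp only [ring_choose_eq_eval]
  exact Polynomial.differentiable _

lemma differentiable_binomRemainder (K : ℕ) {x y : ℝ} (hx : 0 < x) (hy : 0 ≤ y) :
    Differentiable ℂ fun w ↦ binomRemainder K w x y := by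
  have hx' : (x : ℂ) ≠ 0 := by exact_mod_cast hx.ne'
  have hxy : (x + y : ℂ) ≠ 0 := by exact_mod_cast (by positivity : x + y ≠ 0)
  have hchoose := differentiable_ring_choose
  unfold binomRemainder
  intro w
  refine (DifferentiableAt.const_cpow differentiableAt_id (.inl hxy)).sub
    (.fun_sum fun j _ ↦ ((hchoose j w).mul ?_).mul_const _)
  exact DifferentiableAt.const_cpow (by fun_prop) (.inl hx')

lemma HasPolyGrowth.ring_choose_neg (a b : ℝ) (n : ℕ) :
    HasPolyGrowth a b fun s ↦ Ring.choose (-s) n := by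
  convert HasPolyGrowth.polynomial_eval a b
    ((Polynomial.C (n.factorial : ℂ)⁻¹ * descPochhammer ℂ n).comp (-Polynomial.X)) using 2
  rw [ring_choose_eq_eval, Polynomial.eval_comp, Polynomial.eval_neg, Polynomial.eval_X]

end BinomialRemainder

section LerchTranscendent

lemma rpow_le_rpow_add_rpow {x a b y : ℝ} (hx : 0 < x) (hy : y ∈ Icc a b) :
    x ^ y ≤ x ^ a + x ^ b := by
  rcases le_total x 1 with h | h
  · linarith [Real.rpow_le_rpow_of_exponent_ge hx h hy.1, Real.rpow_nonneg hx.le b]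
  · linarith [Real.rpow_le_rpow_of_exponent_le h hy.2, Real.rpow_nonneg hx.le a]

lemma summable_nat_add_rpow_neg {alp σ : ℝ} (halp : 0 < alp) (hσ : 1 < σ) :
    Summable fun m : ℕ ↦ ((m : ℝ) + alp) ^ (-σ) := by
  refine ((Real.summable_one_div_nat_add_rpow alp σ).2 hσ).congr fun m ↦ ?_
  have hm : 0 ≤ (m : ℝ) + alp := by positivity
  rw [abs_of_nonneg hm, Real.rpow_neg hm, one_div]

/-- The function `F` is the analytic continuation to `ℂ \ {1}` of the Lerch transcendent
`s ↦ ∑ z ^ m / (m + alp) ^ s`. -/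
structure IsLerchTranscendent (z : ℂ) (alp : ℝ) (F : ℂ → ℂ) : Prop where
  differentiableAt : ∀ s ≠ 1, DifferentiableAt ℂ F s
  hasSum : ∀ s : ℂ, 1 < s.re → HasSum (fun m : ℕ ↦ z ^ m * (m + alp : ℂ) ^ (-s)) (F s)

/-- The sum over `m` of the remainders after `K` terms in the binomial expansions of
`z ^ m * (m + alp + 1) ^ (-s)`. It converges for `1 < re s + K`. -/
noncomputable def lerchTail (z : ℂ) (alp : ℝ) (K : ℕ) (s : ℂ) : ℂ :=
  ∑' m : ℕ, z ^ m * binomRemainder K (-s) (m + alp) 1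

variable {z : ℂ} {alp : ℝ} {K : ℕ}

lemma norm_lerchTail_term_le (hz : ‖z‖ ≤ 1) (halp : 0 < alp) {a b : ℝ} (ha : 1 < a + K) {s : ℂ}
    (hs : s.re ∈ Icc a b) (m : ℕ) :
    ‖z ^ m * binomRemainder K (-s) (m + alp) 1‖ ≤ K.factorial * ‖Ring.choose (-s) K‖ *
      ((m + alp) ^ (-(b + K)) + (m + alp) ^ (-(a + K))) := by
  have hm : 0 < (m : ℝ) + alp := by positivity
  have hexp : (-s).re - K ∈ Icc (-(b + K)) (-(a + K)) := by
    rw [Complex.neg_re]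
    exact ⟨by linarith [hs.2], by linarith [hs.1]⟩
  have hrem := norm_binomRemainder_le K (w := -s) hm zero_le_one
    (by rw [Complex.neg_re]; linarith [hs.1])
  calc ‖z ^ m * binomRemainder K (-s) (m + alp) 1‖
      ≤ ‖binomRemainder K (-s) (m + alp) 1‖ := by
        rw [norm_mul, norm_pow]
        exact mul_le_of_le_one_left (norm_nonneg _) (pow_le_one₀ (norm_nonneg _) hz)
    _ ≤ K.factorial * ‖Ring.choose (-s) K‖ * (m + alp) ^ ((-s).re - K) := by
        simpa only [one_pow, mul_one] using hrem
    _ ≤ _ := by gcongr; exact rpow_le_rpow_add_rpow hm hexp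

lemma summable_lerchTail_bound (halp : 0 < alp) {a b : ℝ} (ha : 1 < a + K) (hab : a ≤ b) :
    Summable fun m : ℕ ↦ ((m : ℝ) + alp) ^ (-(b + K)) + (m + alp) ^ (-(a + K)) :=
  (summable_nat_add_rpow_neg halp (by linarith)).add (summable_nat_add_rpow_neg halp ha)

lemma hasSum_lerchTail (hz : ‖z‖ ≤ 1) (halp : 0 < alp) {s : ℂ} (hs : 1 < s.re + K) :
    HasSum (fun m : ℕ ↦ z ^ m * binomRemainder K (-s) (m + alp) 1) (lerchTail z alp K s) :=
  (Summable.of_norm_bounded ((summable_lerchTail_bound halp hs le_rfl).mul_left _)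
    (norm_lerchTail_term_le hz halp hs (left_mem_Icc.2 le_rfl))).hasSum

lemma differentiableAt_lerchTail (hz : ‖z‖ ≤ 1) (halp : 0 < alp) {s : ℂ} (hs : 1 < s.re + K) :
    DifferentiableAt ℂ (lerchTail z alp K) s := by
  obtain ⟨a, ha, has⟩ := exists_between (sub_lt_iff_lt_add.2 hs)
  have hbs : s.re < s.re + 1 := lt_add_one _
  set B : ℝ := ‖Ring.choose (-s) K‖ + 1
  set U : Set ℂ := {w | w.re ∈ Ioo a (s.re + 1)} ∩ {w | ‖Ring.choose (-w) K‖ < B}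
  have hchoose : Continuous fun w : ℂ ↦ ‖Ring.choose (-w) K‖ :=
    ((differentiable_ring_choose K).continuous.comp continuous_neg).norm
  have hU : IsOpen U := (isOpen_Ioo.preimage Complex.continuous_re).inter
    (isOpen_lt hchoose continuous_const)
  have hsU : U ∈ 𝓝 s := hU.mem_nhds ⟨⟨has, hbs⟩, lt_add_one ‖Ring.choose (-s) K‖⟩
  have hterm : ∀ m : ℕ, DifferentiableOn ℂ
      (fun w ↦ z ^ m * binomRemainder K (-w) (m + alp) 1) U := fun m ↦
    (((differentiable_binomRemainder K (by positivity) zero_le_one).comp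
      differentiable_neg).const_mul _).differentiableOn
  refine (Complex.differentiableOn_tsum_of_summable_norm
    ((summable_lerchTail_bound halp (by linarith) (has.trans hbs).le).mul_left
      (K.factorial * B)) hterm hU fun m w hw ↦ ?_).differentiableAt hsU
  refine (norm_lerchTail_term_le hz halp (by linarith) (Ioo_subset_Icc_self hw.1) m).trans ?_
  gcongr
  exact hw.2.le

lemma hasPolyGrowth_lerchTail (hz : ‖z‖ ≤ 1) (halp : 0 < alp) {a : ℝ} (b : ℝ) (ha : 1 < a + K) :
    HasPolyGrowth a b (lerchTail z alp K) := by
  refine (HasPolyGrowth.ring_choose_neg a b K).of_isBigO (.of_bound (K.factorial *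
    ∑' m : ℕ, (((m : ℝ) + alp) ^ (-(b + K)) + (m + alp) ^ (-(a + K)))) ?_)
  filter_upwards [eventually_re_mem_Icc_stripAtTop a b] with s hs
  have hsum := (summable_lerchTail_bound halp ha (hs.1.trans hs.2)).hasSum.mul_left
    (K.factorial * ‖Ring.choose (-s) K‖)
  exact (tsum_of_norm_bounded hsum (norm_lerchTail_term_le hz halp ha hs)).trans_eq
    (mul_right_comm _ _ _)

lemma hasPolyGrowth_ofReal_cpow_neg (halp : 0 < alp) (a b : ℝ) :
    HasPolyGrowth a b fun s ↦ (alp : ℂ) ^ (-s) := by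
  refine .of_norm_le (C := alp ^ (-b) + alp ^ (-a)) fun s hs ↦ ?_
  rw [Complex.norm_cpow_eq_rpow_re_of_pos halp, Complex.neg_re]
  exact rpow_le_rpow_add_rpow halp ⟨neg_le_neg hs.2, neg_le_neg hs.1⟩

namespace IsLerchTranscendent

variable {F : ℂ → ℂ}

lemma hasSum_sub_cpow (hF : IsLerchTranscendent z alp F) {s : ℂ} (hs : 1 < s.re) :
    HasSum (fun m : ℕ ↦ z * (z ^ m * (m + alp + 1 : ℂ) ^ (-s))) (F s - (alp : ℂ) ^ (-s)) := by
  have h := (hasSum_nat_add_iff' 1).2 (hF.hasSum s hs)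
  rw [Finset.sum_range_one, pow_zero, one_mul, Nat.cast_zero, zero_add] at h
  refine h.congr_fun fun m ↦ ?_
  rw [pow_succ', mul_assoc, Nat.cast_succ, add_right_comm]

lemma sub_cpow_eq_of_one_lt_re (hF : IsLerchTranscendent z alp F) (hz : ‖z‖ ≤ 1)
    (halp : 0 < alp) (K : ℕ) {s : ℂ} (hs : 1 < s.re) :
    F s - (alp : ℂ) ^ (-s) =
      z * (∑ j ∈ Finset.range K, Ring.choose (-s) j * F (s + j) + lerchTail z alp K s) := by
  have hmain : HasSum
      (fun m : ℕ ↦ ∑ j ∈ Finset.range K,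
        Ring.choose (-s) j * (z ^ m * (m + alp : ℂ) ^ (-(s + j))))
      (∑ j ∈ Finset.range K, Ring.choose (-s) j * F (s + j)) :=
    hasSum_sum fun j _ ↦ (hF.hasSum _ (by simp; linarith [j.cast_nonneg (α := ℝ)])).mul_left _
  have htail := hasSum_lerchTail hz halp (K := K) (s := s)
    (by linarith [K.cast_nonneg (α := ℝ)])
  refine (hF.hasSum_sub_cpow hs).unique (((hmain.add htail).mul_left z).congr_fun fun m ↦ ?_)
  rw [binomRemainder, mul_sub, Finset.mul_sum]
  push_cast
  have hcancel : ∀ j ∈ Finset.range K,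
      Ring.choose (-s) j * (z ^ m * (m + alp : ℂ) ^ (-(s + j))) =
        z ^ m * (Ring.choose (-s) j * (m + alp : ℂ) ^ (-s - j) * 1 ^ j) := by
    intro j _
    rw [one_pow, neg_add']
    ring
  rw [Finset.sum_congr rfl hcancel, add_sub_cancel]

lemma sub_cpow_eq (hF : IsLerchTranscendent z alp F) (hz : ‖z‖ ≤ 1) (halp : 0 < alp) {s : ℂ}
    (hs : 1 < s.re + K) (him : 0 < s.im) :
    F s - (alp : ℂ) ^ (-s) =
      z * (∑ j ∈ Finset.range K, Ring.choose (-s) j * F (s + j) + lerchTail z alp K s) := by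
  set U : Set ℂ := {w | 1 - K < w.re} ∩ {w | 0 < w.im}
  have hU : IsOpen U := (isOpen_lt continuous_const Complex.continuous_re).inter
    (isOpen_lt continuous_const Complex.continuous_im)
  have hUconv : Convex ℝ U := (convex_halfSpace_re_gt _).inter (convex_halfSpace_im_gt _)
  have hFd : ∀ w : ℂ, 0 < w.im → DifferentiableAt ℂ F w := fun w hw ↦
    hF.differentiableAt w (by rintro rfl; simp at hw)
  have hl : DifferentiableOn ℂ (fun w ↦ F w - (alp : ℂ) ^ (-w)) U := fun w hw ↦
    ((hFd w hw.2).sub (differentiableAt_id.neg.const_cpow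
      (.inl (Complex.ofReal_ne_zero.2 halp.ne')))).differentiableWithinAt
  have hr : DifferentiableOn ℂ (fun w ↦ z * (∑ j ∈ Finset.range K,
      Ring.choose (-w) j * F (w + j) + lerchTail z alp K w)) U := fun w hw ↦ by
    have hshift : ∀ j : ℕ, DifferentiableAt ℂ (fun w ↦ F (w + j)) w := fun j ↦
      (hFd (w + j) (by simpa using hw.2)).comp w (by fun_prop)
    refine (((DifferentiableAt.fun_sum fun j _ ↦
      (((differentiable_ring_choose j).comp differentiable_neg) w).mul (hshift j)).add
      (differentiableAt_lerchTail hz halp ?_)).const_mul z).differentiableWithinAt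
    exact sub_lt_iff_lt_add.1 hw.1
  have hbase : (⟨2, 1⟩ : ℂ) ∈ U :=
    ⟨show (1 : ℝ) - K < 2 by linarith [K.cast_nonneg (α := ℝ)], zero_lt_one (α := ℝ)⟩
  have hnear : ∀ᶠ w : ℂ in 𝓝 ⟨2, 1⟩, 1 < w.re :=
    (isOpen_lt continuous_const Complex.continuous_re).mem_nhds (one_lt_two (α := ℝ))
  exact (hl.analyticOnNhd hU).eqOn_of_preconnected_of_eventuallyEq (hr.analyticOnNhd hU)
    hUconv.isPreconnected hbase
    (hnear.mono fun w hw ↦ hF.sub_cpow_eq_of_one_lt_re hz halp K hw)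
    ⟨sub_lt_iff_lt_add.2 hs, him⟩

lemma hasPolyGrowth_sub_sum (hF : IsLerchTranscendent z alp F) (hz : ‖z‖ ≤ 1) (halp : 0 < alp)
    {a b : ℝ} {J : ℕ} (hJK : J ≤ K) (ha : 1 < a + K)
    (h : ∀ j ∈ Finset.Ico J K, HasPolyGrowth (a + j) (b + j) F) :
    HasPolyGrowth a b fun s ↦
      F s - z * ∑ j ∈ Finset.range J, Ring.choose (-s) j * F (s + j) := by
  have hsum : HasPolyGrowth a b fun s ↦
      ∑ j ∈ Finset.Ico J K, Ring.choose (-s) j * F (s + j) :=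
    .sum fun j hj ↦ (HasPolyGrowth.ring_choose_neg a b j).mul
      (by simpa using (h j hj).comp_add (j : ℝ))
  refine ((hasPolyGrowth_ofReal_cpow_neg halp a b).add ((HasPolyGrowth.const a b z).mul
    (hsum.add (hasPolyGrowth_lerchTail hz halp b ha)))).congr' ?_
  filter_upwards [eventually_re_mem_Icc_stripAtTop a b, eventually_le_im_stripAtTop a b 1]
    with s hre him
  have hrec := hF.sub_cpow_eq hz halp (K := K) (s := s) (by linarith [hre.1]) (by linarith)
  rw [← Finset.sum_range_add_sum_Ico _ hJK] at hrec
  linear_combination -hrec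

lemma hasPolyGrowth_of_add_one_le (hF : IsLerchTranscendent z alp F) (hz : ‖z‖ ≤ 1)
    (halp : 0 < alp) {a : ℝ} (b : ℝ) (h : ∀ a' b', a + 1 ≤ a' → HasPolyGrowth a' b' F) :
    HasPolyGrowth a b F := by
  rcases eq_or_ne z 1 with rfl | hz1
  -- For `z = 1` the terms `F s` cancel, and the next one is `s * F (s + 1)`.
  · obtain ⟨K, hK⟩ := exists_nat_gt (max 2 (2 - a))
    rw [max_lt_iff] at hK
    have hmul : HasPolyGrowth (a - 1) (b - 1) fun s ↦ s * F (s + 1) := by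
      refine (hF.hasPolyGrowth_sub_sum hz halp (J := 2) (by exact_mod_cast hK.1.le)
        (by linarith) fun j hj ↦ h _ _ ?_).congr' (.of_eq (funext fun s ↦ ?_))
      · have : (2 : ℝ) ≤ j := by exact_mod_cast (Finset.mem_Ico.1 hj).1
        linarith
      · simp [Finset.sum_range_succ]
    have hshift : HasPolyGrowth (a - 1) (b - 1) fun s ↦ F (s + 1) := by
      refine hmul.of_isBigO (.of_bound 1 ?_)
      filter_upwards [eventually_le_im_stripAtTop (a - 1) (b - 1) 1] with s hs
      rw [one_mul, norm_mul]
      exact le_mul_of_one_le_left (norm_nonneg _)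
        (hs.trans ((le_abs_self _).trans (Complex.abs_im_le_norm s)))
    simpa [sub_eq_add_neg] using hshift.comp_add (a := a) (b := b) (-1)
  · obtain ⟨K, hK⟩ := exists_nat_gt (max 1 (1 - a))
    rw [max_lt_iff] at hK
    have hmul : HasPolyGrowth a b fun s ↦ (1 - z) * F s := by
      refine (hF.hasPolyGrowth_sub_sum hz halp (J := 1) (by exact_mod_cast hK.1.le)
        (by linarith) fun j hj ↦ h _ _ ?_).congr' (.of_eq (funext fun s ↦ ?_))
      · have : (1 : ℝ) ≤ j := by exact_mod_cast (Finset.mem_Ico.1 hj).1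
        linarith
      · simp [sub_mul]
    exact hmul.of_isBigO (isBigO_self_const_mul (sub_ne_zero.2 hz1.symm) _ _)

theorem hasPolyGrowth (hF : IsLerchTranscendent z alp F) (hz : ‖z‖ ≤ 1) (halp : 0 < alp)
    (a b : ℝ) : HasPolyGrowth a b F := by
  have key : ∀ (n : ℕ) (a b : ℝ), 2 - n ≤ a → HasPolyGrowth a b F := by
    intro n
    induction n with
    | zero =>
      intro a b ha
      simpa using hF.hasPolyGrowth_sub_sum hz halp (b := b) (le_refl 0)
        (by push_cast at ha ⊢; linarith) (by simp)
    | succ n ih =>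
      intro a b ha
      refine hF.hasPolyGrowth_of_add_one_le hz halp b fun a' b' ha' ↦ ih a' b' ?_
      push_cast at ha
      linarith
  obtain ⟨n, hn⟩ := exists_nat_ge (2 - a)
  exact key n a b (by linarith)

lemma norm_sub_cpow_le (hF : IsLerchTranscendent z alp F) (hz : ‖z‖ ≤ 1) (halp : 0 < alp) {s : ℂ}
    (hs : 2 ≤ s.re) : ‖F s - (alp : ℂ) ^ (-s)‖ ≤
      (alp + 1) ^ (2 - s.re) * ∑' m : ℕ, ((m : ℝ) + (alp + 1)) ^ (-2 : ℝ) := by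
  have hsum := (summable_nat_add_rpow_neg (by positivity : 0 < alp + 1) one_lt_two).hasSum.mul_left
    ((alp + 1) ^ (2 - s.re))
  rw [← (hF.hasSum_sub_cpow (by linarith)).tsum_eq]
  refine tsum_of_norm_bounded hsum fun m ↦ ?_
  have hm : 0 < (m : ℝ) + (alp + 1) := by positivity
  have hcast : (m + alp + 1 : ℂ) = ((m + (alp + 1) : ℝ) : ℂ) := by push_cast; ring
  calc ‖z * (z ^ m * (m + alp + 1 : ℂ) ^ (-s))‖
      = ‖z‖ ^ (m + 1) * (m + (alp + 1)) ^ (-s.re) := by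
        rw [hcast, ← mul_assoc, ← pow_succ', norm_mul, norm_pow,
          Complex.norm_cpow_eq_rpow_re_of_pos hm, Complex.neg_re]
    _ ≤ (m + (alp + 1)) ^ (2 - s.re) * (m + (alp + 1)) ^ (-2 : ℝ) := by
        rw [← Real.rpow_add hm, show 2 - s.re + -2 = -s.re by ring]
        exact mul_le_of_le_one_left (by positivity) (pow_le_one₀ (norm_nonneg z) hz)
    _ ≤ (alp + 1) ^ (2 - s.re) * (m + (alp + 1)) ^ (-2 : ℝ) := by
        gcongr ?_ * _
        exact Real.rpow_le_rpow_of_nonpos (by positivity) (by linarith [m.cast_nonneg (α := ℝ)])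
          (by linarith)

lemma exists_half_le_norm (hF : IsLerchTranscendent z alp F) (hz : ‖z‖ ≤ 1) (halp : 0 < alp)
    (halp1 : alp ≤ 1) : ∃ σ₁, ∀ s : ℂ, σ₁ ≤ s.re → 1 / 2 ≤ ‖F s‖ := by
  set A : ℝ := ∑' m : ℕ, ((m : ℝ) + (alp + 1)) ^ (-2 : ℝ)
  have hlim : Tendsto (fun σ : ℝ ↦ (alp + 1) ^ (2 - σ) * A) atTop (𝓝 (0 * A)) :=
    ((tendsto_rpow_atBot_of_base_gt_one _ (by linarith)).comp
      (tendsto_atBot_add_const_left _ 2 tendsto_neg_atTop_atBot)).mul_const A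
  rw [zero_mul] at hlim
  obtain ⟨σ₁, h⟩ := eventually_atTop.1
    ((hlim.eventually_le_const one_half_pos).and (eventually_ge_atTop 2))
  refine ⟨σ₁, fun s hs ↦ ?_⟩
  obtain ⟨hsmall, hs2⟩ := h s.re hs
  have hfirst : 1 ≤ ‖(alp : ℂ) ^ (-s)‖ := by
    rw [Complex.norm_cpow_eq_rpow_re_of_pos halp, Complex.neg_re]
    exact Real.one_le_rpow_of_pos_of_le_one_of_nonpos halp halp1 (by linarith)
  have hrest := (hF.norm_sub_cpow_le hz halp hs2).trans hsmall
  linarith [norm_sub_norm_le ((alp : ℂ) ^ (-s)) (F s), norm_sub_rev (F s) ((alp : ℂ) ^ (-s))]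

end IsLerchTranscendent

lemma IsLerch.isLerchTranscendent {lam alp : ℝ} {F : ℂ → ℂ} (hF : IsLerch lam alp F)
    (halp : 0 < alp) :
    IsLerchTranscendent (Complex.exp (2 * Real.pi * Complex.I * lam)) alp F := by
  refine ⟨hF.1, fun s hs ↦ ?_⟩
  have hterm : ∀ m : ℕ, Complex.exp (2 * Real.pi * Complex.I * lam * m) / (m + alp : ℂ) ^ s =
      Complex.exp (2 * Real.pi * Complex.I * lam) ^ m * (m + alp : ℂ) ^ (-s) := fun m ↦ by
    rw [← Complex.exp_nat_mul, mul_comm (m : ℂ), Complex.cpow_neg, div_eq_mul_inv]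
  rw [hF.2 s hs, lerchSeries]
  simp only [hterm]
  refine (Summable.of_norm_bounded (summable_nat_add_rpow_neg halp hs) fun m ↦ ?_).hasSum
  rw [norm_mul, norm_pow, ← Complex.ofReal_natCast, ← Complex.ofReal_add,
    Complex.norm_cpow_eq_rpow_re_of_pos (by positivity), Complex.neg_re]
  exact mul_le_of_le_one_left (by positivity)
    (pow_le_one₀ (norm_nonneg _) (by simp [Complex.norm_exp]))

end LerchTranscendent

theorem lerch_lower_bound_near_zeros_general {z : ℂ} (hz : ‖z‖ ≤ 1) {alp t₀ : ℝ} (sigma0 : ℝ)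
    (halp0 : 0 < alp) (halp1 : alp ≤ 1) (ht₀ : 1 < t₀) {F : ℂ → ℂ}
    (hF : IsLerchTranscendent z alp F) :
    ∃ C : ℝ, 0 < C ∧ ∀ s : ℂ, sigma0 ≤ s.re → t₀ ≤ s.im → F s ≠ 0 →
      1 / ‖F s‖ <
        Real.exp (C * (|Real.log (infDist s {ρ : ℂ | F ρ = 0})| + 1) * Real.log s.im) := by
  have hdiff : ∀ s : ℂ, 0 < s.im → DifferentiableAt ℂ F s := fun s hs ↦
    hF.differentiableAt s (by rintro rfl; simp at hs)
  obtain ⟨σ₁, hright⟩ := hF.exists_half_le_norm hz halp0 halp1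
  obtain ⟨C, hC, h⟩ := (zeroDistLowerBound_of_hasPolyGrowth ht₀ sigma0 hdiff
    (hF.hasPolyGrowth hz halp0) one_half_pos hright).exists_one_div_norm_lt ht₀
    fun s hs ↦ (hdiff s (by linarith [hs.2])).continuousAt
  exact ⟨C, hC, fun s hre him ↦ h s ⟨hre, him⟩ him⟩

/-- lower bound for the Lerch zeta-function in terms of the distance to
the nearest zero. -/
theorem lerch_lower_bound_near_zeros (lam alp sigma0 : ℝ) (hlam0 : 0 < lam) (hlam1 : lam ≤ 1)
    (halp0 : 0 < alp) (halp1 : alp ≤ 1) (F : ℂ → ℂ) (hF : IsLerch lam alp F) :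
    ∃ C : ℝ, 0 < C ∧ ∀ s : ℂ, sigma0 ≤ s.re → 2 ≤ s.im → F s ≠ 0 →
      1 / ‖F s‖ <
        Real.exp (C * (|Real.log (Metric.infDist s {ρ : ℂ | F ρ = 0})| + 1) * Real.log s.im) :=
  lerch_lower_bound_near_zeros_general (by simp [Complex.norm_exp]) sigma0 halp0 halp1 one_lt_two
    (hF.isLerchTranscendent halp0)
end

section
/- Let 0 < λ ≤ 1. There exist constants A > 0 and γ₀ > 0 such that for every nontrivial zero ρ = β + iγ of L(λ,λ,·) with γ ≥ γ₀, there is a radius r with exp(−Aγ/log γ) ≤ r ≤ exp(−Aγ/log γ)·(log γ)² such that the open discs {s : |s − ρ| < r} and {s : |s − (1 − conj(ρ))| < r} contain the same number of zeros of L(λ,λ,·), counted with multiplicity. -/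
open scoped Classical

/-!
For `0 < lam < 1` the functional equation of the Lerch zeta-function reads, in the upper half-plane,
`F z = M z * (conj (F (1 - conj z)) + exp (π i z) * G z)` with `M` zero-free and `G` of polynomial
growth. So in a disc around `ρ` the zeros of `F` are those of a perturbation of the reflection of
`F` of size `exp (-π γ)` up to powers of `γ = im ρ`, and by Rouché's theorem it suffices to find a
circle around `1 - conj ρ` on which `|F|` exceeds this perturbation. In a bounded disc
around that point `F` is a polynomial of degree `O(log γ)` times a zero-free function of controlled
size, by the maximum principle, the Borel–Carathéodory theorem and a lower bound for `F` on a
vertical line far to the right. Among the radii from `x = exp (-A γ / log γ)` to `x (log γ) ^ 2`,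
one keeps a distance at least `x` from the `O(log γ)` zeros, where `|F|` is at least about
`x ^ O(log γ) = exp (-O(A) γ)`; taking `A` small enough gives the claim. For `lam = 1` there
is no perturbation: the zeros of the Riemann zeta-function are exactly symmetric.
-/

section LocalAlmostSymmetry

open Complex Filter Topology Metric

section ZeroCounting

/-- The number of zeros of `F` in the open disc of radius `r` around `c`, counted with
multiplicity. -/
noncomputable def zeroCount (F : ℂ → ℂ) (c : ℂ) (r : ℝ) : ℕ :=
  ∑ᶠ z ∈ {z : ℂ | F z = 0 ∧ dist z c < r}, zeroOrder F z

lemma zeroOrder_eq_toNat (f : ℂ → ℂ) (z : ℂ) : zeroOrder f z = (analyticOrderAt f z).toNat := by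
  by_cases hf : AnalyticAt ℂ f z
  · simp [zeroOrder, hf]
  · simp [zeroOrder, hf]

lemma analyticOnNhd_dslope {f : ℂ → ℂ} {K : Set ℂ} (hf : AnalyticOnNhd ℂ f K) {w : ℂ}
    (hw : w ∈ K) : AnalyticOnNhd ℂ (dslope f w) K := by
  have hU : IsOpen {z | AnalyticAt ℂ f z} := isOpen_analyticAt ℂ f
  have hd : DifferentiableOn ℂ (dslope f w) {z | AnalyticAt ℂ f z} :=
    (Complex.differentiableOn_dslope (hU.mem_nhds (hf w hw))).2
      fun z hz => hz.differentiableAt.differentiableWithinAt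
  exact fun z hz => hd.analyticAt (hU.mem_nhds (hf z hz))

variable {h : ℂ → ℂ} (Z : Multiset ℂ)

lemma analyticAt_multiset_prod_sub (a : ℂ) :
    AnalyticAt ℂ (fun z => (Z.map fun w => z - w).prod) a := by
  induction Z using Multiset.induction_on with
  | empty => simpa using analyticAt_const
  | cons w Z ih =>
    simp only [Multiset.map_cons, Multiset.prod_cons]
    exact (by fun_prop : AnalyticAt ℂ (fun z => z - w) a).mul ih

lemma multiset_prod_sub_ne_zero {Z : Multiset ℂ} {z : ℂ} (hz : z ∉ Z) :
    (Z.map fun w => z - w).prod ≠ 0 := by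
  simp only [ne_eq, Multiset.prod_eq_zero_iff, Multiset.mem_map, not_exists, not_and]
  rintro w hw h0
  exact hz (sub_eq_zero.1 h0 ▸ hw)

lemma analyticOrderAt_multiset_prod_sub_mul {a : ℂ} (hh : AnalyticAt ℂ h a) :
    analyticOrderAt (fun z => (Z.map fun w => z - w).prod * h z) a =
      Z.count a + analyticOrderAt h a := by
  induction Z using Multiset.induction_on with
  | empty => simp
  | cons w Z ih =>
    have hfun : (fun z => ((w ::ₘ Z).map fun w => z - w).prod * h z) =
        (fun z => z - w) * fun z => (Z.map fun w => z - w).prod * h z := by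
      ext z; simp [mul_assoc]
    rw [hfun, analyticOrderAt_mul (by fun_prop)
      ((analyticAt_multiset_prod_sub Z a).fun_mul hh), ih, Multiset.count_cons]
    rcases eq_or_ne a w with rfl | haw
    · rw [analyticOrderAt_id_sub_const_self]
      simp only [if_true]
      push_cast
      ring
    · simp [analyticOrderAt_id_sub_const_of_ne haw, haw]

end ZeroCounting

section Factorization

variable {f : ℂ → ℂ} {K : Set ℂ}

lemma finite_zeros_of_isCompact (hf : AnalyticOnNhd ℂ f K) (hK : IsCompact K)
    (hord : ∀ z ∈ K, analyticOrderAt f z ≠ ⊤) : {z | z ∈ K ∧ f z = 0}.Finite := by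
  by_contra hinf
  obtain ⟨x, hxK, hx⟩ := Set.Infinite.exists_accPt_of_subset_isCompact hinf hK fun z hz => hz.1
  rw [accPt_iff_frequently] at hx
  refine hord x hxK (analyticOrderAt_eq_top.2 ?_)
  rw [← (hf x hxK).frequently_zero_iff_eventually_zero, frequently_nhdsWithin_iff]
  exact hx.mono fun y hy => ⟨hy.2.2, hy.1⟩

lemma analyticOrderAt_ne_top_of_apply_ne_zero {U : Set ℂ} {x : ℂ} (hf : AnalyticOnNhd ℂ f U)
    (hU : IsPreconnected U) (hx : x ∈ U) (hfx : f x ≠ 0) : ∀ z ∈ U, analyticOrderAt f z ≠ ⊤ := by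
  intro z hz
  refine hf.analyticOrderAt_ne_top_of_isPreconnected hU hx hz ?_
  rw [(hf x hx).analyticOrderAt_eq_zero.2 hfx]
  exact ENat.zero_ne_top

/-- `f` is the product of the monic polynomial with root multiset `Z` and a function `h` which is
analytic on a neighbourhood of `U`. -/
structure IsFactorization (f : ℂ → ℂ) (U : Set ℂ) (Z : Multiset ℂ) (h : ℂ → ℂ) : Prop where
  analyticOnNhd : AnalyticOnNhd ℂ h U
  eq_mul : ∀ z, f z = (Z.map fun w => z - w).prod * h z

namespace IsFactorization

variable {U : Set ℂ} {Z : Multiset ℂ} {h : ℂ → ℂ}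

lemma analyticOrderAt_eq (H : IsFactorization f U Z h) {a : ℂ} (ha : a ∈ U) :
    analyticOrderAt f a = Z.count a + analyticOrderAt h a := by
  rw [funext H.eq_mul, analyticOrderAt_multiset_prod_sub_mul Z (H.analyticOnNhd a ha)]

lemma cons_dslope (H : IsFactorization f U Z h) {w : ℂ} (hw : w ∈ U) (h0 : h w = 0) :
    IsFactorization f U (w ::ₘ Z) (dslope h w) where
  analyticOnNhd := analyticOnNhd_dslope H.analyticOnNhd hw
  eq_mul z := by
    have hz : h z = (z - w) * dslope h w z := by simp [← smul_eq_mul, sub_smul_dslope, h0]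
    simp only [H.eq_mul z, hz, Multiset.map_cons, Multiset.prod_cons]
    ring

lemma apply_eq_zero_of_mem (H : IsFactorization f U Z h) {w : ℂ} (hw : w ∈ Z) : f w = 0 := by
  rw [H.eq_mul w, Multiset.prod_eq_zero (Multiset.mem_map.2 ⟨w, hw, sub_self w⟩), zero_mul]

lemma card_le (H : IsFactorization f U Z h) (hZ : ∀ w ∈ Z, w ∈ U)
    {S : Finset ℂ} (hS : ∀ w ∈ Z, w ∈ S) (hord : ∀ z ∈ Z, analyticOrderAt f z ≠ ⊤) :
    Z.card ≤ ∑ z ∈ S, zeroOrder f z := by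
  rw [← Multiset.sum_count_eq_card hS]
  refine Finset.sum_le_sum fun z _ => ?_
  by_cases hz : z ∈ Z
  · rw [zeroOrder_eq_toNat, ← ENat.natCast_le_natCast, ENat.natCast_toNat (hord z hz),
      H.analyticOrderAt_eq (hZ z hz)]
    exact le_self_add
  · simp [Multiset.count_eq_zero_of_notMem hz]

end IsFactorization

/-- Divide out zeros one at a time; the total multiplicity of the zeros in `K` bounds the number
of divisions. -/
lemma exists_isFactorization {U : Set ℂ} (hf : AnalyticOnNhd ℂ f U) (hK : IsCompact K)
    (hKU : K ⊆ U) (hord : ∀ z ∈ K, analyticOrderAt f z ≠ ⊤) :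
    ∃ Z h, IsFactorization f U Z h ∧ (∀ w ∈ Z, w ∈ K) ∧ ∀ z ∈ K, h z ≠ 0 := by
  by_contra! hzero
  have hcard : ∀ n : ℕ, ∃ Z h, IsFactorization f U Z h ∧ (∀ w ∈ Z, w ∈ K) ∧ Z.card = n := by
    intro n
    induction n with
    | zero => exact ⟨0, f, ⟨hf, by simp⟩, by simp, rfl⟩
    | succ n ih =>
      obtain ⟨Z, h, H, hZ, rfl⟩ := ih
      obtain ⟨w, hw, h0⟩ := hzero Z h H hZ
      exact ⟨_, _, H.cons_dslope (hKU hw) h0, by simpa [hw] using hZ, by simp⟩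
  have hfin := finite_zeros_of_isCompact (hf.mono hKU) hK hord
  obtain ⟨Z, h, H, hZ, hZn⟩ := hcard (∑ z ∈ hfin.toFinset, zeroOrder f z + 1)
  have := H.card_le (fun w hw => hKU (hZ w hw)) (S := hfin.toFinset)
    (fun w hw => by simp [hZ w hw, H.apply_eq_zero_of_mem hw]) fun w hw => hord w (hZ w hw)
  lia

end Factorization

section Rouche

variable {f g : ℂ → ℂ} {c : ℂ} {R : ℝ}

lemma circleIntegral_logDeriv_eq_zero (hR : 0 ≤ R) (hf : AnalyticOnNhd ℂ f (closedBall c R))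
    (h0 : ∀ z ∈ closedBall c R, f z ≠ 0) : ∮ z in C(c, R), logDeriv f z = 0 := by
  have hd : ∀ z ∈ closedBall c R, DifferentiableAt ℂ (logDeriv f) z := fun z hz =>
    (hf z hz).deriv.differentiableAt.div (hf z hz).differentiableAt (h0 z hz)
  exact Complex.circleIntegral_eq_zero_of_differentiable_on_off_countable hR Set.countable_empty
    (fun z hz => (hd z hz).continuousAt.continuousWithinAt) fun z hz =>
    hd z (ball_subset_closedBall hz.1)

lemma circleIntegrable_logDeriv (hR : 0 ≤ R) (hf : ∀ z ∈ sphere c R, AnalyticAt ℂ f z)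
    (h0 : ∀ z ∈ sphere c R, f z ≠ 0) : CircleIntegrable (logDeriv f) c R :=
  ContinuousOn.circleIntegrable hR fun z hz =>
    ((hf z hz).deriv.continuousAt.div (hf z hz).continuousAt (h0 z hz)).continuousWithinAt

lemma circleIntegral_logDeriv_multiset_prod_sub_mul {h : ℂ → ℂ} {Z : Multiset ℂ}
    (hh : AnalyticOnNhd ℂ h (closedBall c R)) (h0 : ∀ z ∈ closedBall c R, h z ≠ 0)
    (hR : 0 ≤ R) (hZ : ∀ w ∈ Z, w ∈ ball c R) :
    ∮ z in C(c, R), logDeriv (fun z => (Z.map fun w => z - w).prod * h z) z =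
      2 * Real.pi * I * Z.card := by
  induction Z using Multiset.induction_on with
  | empty => simpa using circleIntegral_logDeriv_eq_zero hR hh h0
  | cons w Z ih =>
    simp only [Multiset.mem_cons, forall_eq_or_imp] at hZ
    set p : ℂ → ℂ := fun z => (Z.map fun w => z - w).prod * h z
    have hne : ∀ z ∈ sphere c R, ∀ v ∈ ball c R, z ≠ v := fun z hz v hv hzv =>
      (mem_ball.1 (hzv ▸ hv)).ne hz
    have hp : ∀ z ∈ sphere c R, AnalyticAt ℂ p z := fun z hz =>
      (analyticAt_multiset_prod_sub Z z).mul (hh z (sphere_subset_closedBall hz))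
    have hp0 : ∀ z ∈ sphere c R, p z ≠ 0 := fun z hz =>
      mul_ne_zero (multiset_prod_sub_ne_zero fun hzZ => hne z hz z (hZ.2 z hzZ) rfl)
        (h0 z (sphere_subset_closedBall hz))
    have hlog : ∀ z ∈ sphere c R,
        logDeriv (fun z => ((w ::ₘ Z).map fun w => z - w).prod * h z) z =
          (z - w)⁻¹ + logDeriv p z := by
      intro z hz
      have hfun : (fun z => ((w ::ₘ Z).map fun w => z - w).prod * h z) =
          fun z => (z - w) * p z := by ext z; simp [p, mul_assoc]
      rw [hfun, logDeriv_mul (f := fun z => z - w) z (sub_ne_zero.2 (hne z hz w hZ.1)) (hp0 z hz)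
        (by fun_prop) (hp z hz).differentiableAt]
      simp [logDeriv_apply]
    have hint : CircleIntegrable (fun z => (z - w)⁻¹) c R :=
      ContinuousOn.circleIntegrable hR <| ContinuousOn.inv₀ (by fun_prop) fun z hz =>
        sub_ne_zero.2 (hne z hz w hZ.1)
    rw [circleIntegral.integral_congr hR hlog,
      circleIntegral.integral_add hint (circleIntegrable_logDeriv hR hp hp0), ih hZ.2,
      circleIntegral.integral_sub_inv_of_mem_ball hZ.1]
    push_cast [Multiset.card_cons]
    ring

lemma IsFactorization.zeroCount_eq_card {Z : Multiset ℂ} {h : ℂ → ℂ}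
    (H : IsFactorization f (closedBall c R) Z h) (hZ : ∀ w ∈ Z, w ∈ closedBall c R)
    (h0 : ∀ z ∈ closedBall c R, h z ≠ 0) (hs : ∀ z ∈ sphere c R, f z ≠ 0) :
    zeroCount f c R = Z.card := by
  have hset : {z : ℂ | f z = 0 ∧ dist z c < R} = ↑Z.toFinset := by
    ext z
    simp only [Set.mem_ofPred_eq, Finset.mem_coe, Multiset.mem_toFinset]
    refine ⟨fun ⟨hz0, hz⟩ => ?_, fun hz => ⟨H.apply_eq_zero_of_mem hz, ?_⟩⟩
    · by_contra hzZ
      rw [H.eq_mul z] at hz0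
      exact mul_ne_zero (multiset_prod_sub_ne_zero hzZ) (h0 z hz.le) hz0
    · exact lt_of_le_of_ne (hZ z hz) fun hzs => hs z hzs (H.apply_eq_zero_of_mem hz)
  rw [zeroCount, hset, finsum_mem_coe_finset, ← Multiset.toFinset_sum_count_eq]
  refine Finset.sum_congr rfl fun z hz => ?_
  have hzK := hZ z (Multiset.mem_toFinset.1 hz)
  rw [zeroOrder_eq_toNat, H.analyticOrderAt_eq hzK,
    (H.analyticOnNhd z hzK).analyticOrderAt_eq_zero.2 (h0 z hzK)]
  simp

theorem circleIntegral_logDeriv_eq_zeroCount (hR : 0 ≤ R)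
    (hf : AnalyticOnNhd ℂ f (closedBall c R)) (hs : ∀ z ∈ sphere c R, f z ≠ 0) :
    ∮ z in C(c, R), logDeriv f z = 2 * Real.pi * I * zeroCount f c R := by
  have hx : c + R ∈ sphere c R := by simp [abs_of_nonneg hR]
  obtain ⟨Z, h, H, hZK, h0⟩ := exists_isFactorization hf (isCompact_closedBall c R) subset_rfl
    (analyticOrderAt_ne_top_of_apply_ne_zero hf (convex_closedBall c R).isPreconnected
      (sphere_subset_closedBall hx) (hs _ hx))
  have hZ : ∀ w ∈ Z, w ∈ ball c R := fun w hw =>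
    lt_of_le_of_ne (hZK w hw) fun hws => hs w hws (H.apply_eq_zero_of_mem hw)
  rw [H.zeroCount_eq_card hZK h0 hs, ← circleIntegral_logDeriv_multiset_prod_sub_mul
    H.analyticOnNhd h0 hR hZ, ← funext H.eq_mul]

/-- On the circle `log (f / g)` is a single-valued primitive of `f' / f - g' / g`. -/
lemma circleIntegral_logDeriv_sub_eq_zero (hR : 0 ≤ R) (hf : ∀ z ∈ sphere c R, AnalyticAt ℂ f z)
    (hg : ∀ z ∈ sphere c R, AnalyticAt ℂ g z) (hf0 : ∀ z ∈ sphere c R, f z ≠ 0)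
    (hg0 : ∀ z ∈ sphere c R, g z ≠ 0) (hs : ∀ z ∈ sphere c R, ‖f z - g z‖ < ‖g z‖) :
    ∮ z in C(c, R), (logDeriv f z - logDeriv g z) = 0 := by
  refine circleIntegral.integral_eq_zero_of_hasDerivWithinAt (f := fun z => log (f z / g z)) hR
    fun z hz => HasDerivAt.hasDerivWithinAt ?_
  have hslit : f z / g z ∈ slitPlane := by
    have hlt : ‖f z / g z - 1‖ < 1 := by
      rw [div_sub_one (hg0 z hz), norm_div, div_lt_one (norm_pos_iff.2 (hg0 z hz))]
      exact hs z hz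
    simpa using mem_slitPlane_of_norm_lt_one hlt
  refine (((hf z hz).differentiableAt.hasDerivAt.fun_div (hg z hz).differentiableAt.hasDerivAt
    (hg0 z hz)).clog hslit).congr_deriv ?_
  have := hf0 z hz
  have := hg0 z hz
  simp only [logDeriv_apply]
  field_simp

theorem zeroCount_eq_of_norm_sub_lt (hR : 0 ≤ R) (hf : AnalyticOnNhd ℂ f (closedBall c R))
    (hg : AnalyticOnNhd ℂ g (closedBall c R)) (hs : ∀ z ∈ sphere c R, ‖f z - g z‖ < ‖g z‖) :
    zeroCount f c R = zeroCount g c R := by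
  have hf0 : ∀ z ∈ sphere c R, f z ≠ 0 := by
    intro z hz h0
    simpa [h0] using hs z hz
  have hg0 : ∀ z ∈ sphere c R, g z ≠ 0 := fun z hz =>
    norm_pos_iff.1 ((norm_nonneg _).trans_lt (hs z hz))
  have hfs : ∀ z ∈ sphere c R, AnalyticAt ℂ f z := fun z hz => hf z (sphere_subset_closedBall hz)
  have hgs : ∀ z ∈ sphere c R, AnalyticAt ℂ g z := fun z hz => hg z (sphere_subset_closedBall hz)
  have hsub := circleIntegral_logDeriv_sub_eq_zero hR hfs hgs hf0 hg0 hs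
  rw [circleIntegral.integral_sub (circleIntegrable_logDeriv hR hfs hf0)
    (circleIntegrable_logDeriv hR hgs hg0), circleIntegral_logDeriv_eq_zeroCount hR hf hf0,
    circleIntegral_logDeriv_eq_zeroCount hR hg hg0, sub_eq_zero] at hsub
  exact_mod_cast mul_left_cancel₀ two_pi_I_ne_zero hsub

end Rouche

section MinimumModulus

variable {f h : ℂ → ℂ} {c : ℂ} {R M b : ℝ}

lemma exists_eq_mul_exp (hR : 0 < R) (hh : DifferentiableOn ℂ h (ball c R))
    (h0 : ∀ z ∈ ball c R, h z ≠ 0) :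
    ∃ l : ℂ → ℂ, DifferentiableOn ℂ l (ball c R) ∧ l c = 0 ∧
      ∀ z ∈ ball c R, h z = h c * exp (l z) := by
  have hlog : DifferentiableOn ℂ (logDeriv h) (ball c R) := fun z hz =>
    have hz' := hh.analyticAt (isOpen_ball.mem_nhds hz)
    (hz'.deriv.differentiableAt.div hz'.differentiableAt (h0 z hz)).differentiableWithinAt
  obtain ⟨l, hl⟩ := hlog.isExactOn_ball
  have hderiv : ∀ z ∈ ball c R, HasDerivAt (fun z => h z * exp (-l z)) 0 z := by
    intro z hz
    have hne := h0 z hz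
    refine ((hh.differentiableAt (isOpen_ball.mem_nhds hz)).hasDerivAt.mul
      (hl z hz).fun_neg.cexp).congr_deriv ?_
    rw [logDeriv_apply]
    field_simp
    ring
  have hconst : ∀ z ∈ ball c R, h z * exp (-l z) = h c * exp (-l c) := fun z hz =>
    isOpen_ball.is_const_of_deriv_eq_zero (convex_ball c R).isPreconnected
      (fun x hx => (hderiv x hx).differentiableAt.differentiableWithinAt)
      (fun x hx => (hderiv x hx).deriv) hz (mem_ball_self hR)
  refine ⟨fun z => l z - l c, fun z hz =>
    ((hl z hz).differentiableAt.sub_const _).differentiableWithinAt, sub_self _, fun z hz => ?_⟩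
  change h z = h c * exp (l z - l c)
  rw [sub_eq_neg_add, exp_add, ← mul_assoc, ← hconst z hz, mul_assoc, ← exp_add, neg_add_cancel,
    exp_zero, mul_one]

/-- Borel–Carathéodory for `log (h / h c)`, whose real part is at most `log (M / b)`. -/
lemma mul_sq_le_norm_of_ne_zero (hR : 0 < R) (hh : DifferentiableOn ℂ h (ball c R))
    (h0 : ∀ z ∈ ball c R, h z ≠ 0) (hM : ∀ z ∈ ball c R, ‖h z‖ ≤ M) (hb : 0 < b)
    (hbc : b ≤ ‖h c‖) (hbM : b < M) {z : ℂ} (hz : z ∈ closedBall c (R / 2)) :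
    b * (b / M) ^ 2 ≤ ‖h z‖ := by
  obtain ⟨l, hl, hlc, hexp⟩ := exists_eq_mul_exp hR hh h0
  have hM0 : 0 < M := hb.trans hbM
  have hnorm : ∀ w ∈ ball c R, ‖h w‖ = ‖h c‖ * Real.exp (l w).re := fun w hw => by
    rw [hexp w hw, norm_mul, norm_exp]
  have hre : ∀ w ∈ ball c R, (l w).re ≤ Real.log (M / b) := by
    intro w hw
    rw [Real.le_log_iff_exp_le (div_pos hM0 hb), le_div_iff₀' hb]
    calc b * Real.exp (l w).re ≤ ‖h c‖ * Real.exp (l w).re := by gcongr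
      _ ≤ M := hnorm w hw ▸ hM w hw
  have hL : 0 < Real.log (M / b) := Real.log_pos ((one_lt_div hb).2 hbM)
  have hdist : ‖z - c‖ ≤ R / 2 := by simpa [dist_eq_norm] using hz
  have hmaps : Set.MapsTo (fun w => c + w) (ball 0 R) (ball c R) := fun w hw => by simpa using hw
  have hBC : ‖l z‖ ≤ 2 * Real.log (M / b) * ‖z - c‖ / (R - ‖z - c‖) := by
    simpa using borelCaratheodory_zero (f := fun w => l (c + w)) (z := z - c) hL
      (hl.comp (by fun_prop) hmaps) (fun w hw => hre _ (hmaps hw)) hR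
      (by simpa using hdist.trans_lt (half_lt_self hR)) (by simpa using hlc)
  have hlz : ‖l z‖ ≤ 2 * Real.log (M / b) := by
    refine hBC.trans ?_
    rw [mul_div_assoc]
    exact mul_le_of_le_one_right (by positivity) (div_le_one_of_le₀ (by linarith) (by linarith))
  have hzball : z ∈ ball c R := closedBall_subset_ball (half_lt_self hR) hz
  have hsq : (b / M) ^ 2 = Real.exp (-(2 * Real.log (M / b))) := by
    rw [Real.exp_neg, two_mul, Real.exp_add, Real.exp_log (by positivity), ← sq, ← inv_pow,
      inv_div]
  rw [hnorm z hzball, hsq]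
  gcongr
  linarith [neg_abs_le (l z).re, abs_re_le_norm (l z)]

lemma norm_multiset_prod_sub_le {Z : Multiset ℂ} {z : ℂ} {r : ℝ} (hZ : ∀ w ∈ Z, dist z w ≤ r) :
    ‖(Z.map fun w => z - w).prod‖ ≤ r ^ Z.card := by
  induction Z using Multiset.induction_on with
  | empty => simp
  | cons w Z ih =>
    simp only [Multiset.mem_cons, forall_eq_or_imp] at hZ
    simp only [Multiset.map_cons, Multiset.prod_cons, norm_mul, Multiset.card_cons, pow_succ']
    exact mul_le_mul (dist_eq_norm z w ▸ hZ.1) (ih hZ.2) (norm_nonneg _)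
      (dist_nonneg.trans hZ.1)

lemma pow_card_le_norm_multiset_prod_sub {Z : Multiset ℂ} {z : ℂ} {r : ℝ} (hr : 0 ≤ r)
    (hZ : ∀ w ∈ Z, r ≤ dist z w) : r ^ Z.card ≤ ‖(Z.map fun w => z - w).prod‖ := by
  induction Z using Multiset.induction_on with
  | empty => simp
  | cons w Z ih =>
    simp only [Multiset.mem_cons, forall_eq_or_imp] at hZ
    simp only [Multiset.map_cons, Multiset.prod_cons, norm_mul, Multiset.card_cons, pow_succ']
    exact mul_le_mul (dist_eq_norm z w ▸ hZ.1) (ih hZ.2) (pow_nonneg hr _) (norm_nonneg _)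

lemma norm_le_of_forall_mem_sphere_norm_le (hR : 0 < R) (hf : AnalyticOnNhd ℂ f (closedBall c R))
    (hM : ∀ z ∈ sphere c R, ‖f z‖ ≤ M) : ∀ z ∈ closedBall c R, ‖f z‖ ≤ M := by
  intro z hz
  rw [← closure_ball c hR.ne'] at hz hf
  exact Complex.norm_le_of_forall_mem_frontier_norm_le isBounded_ball
    hf.differentiableOn.diffContOnCl (by rwa [frontier_ball c hR.ne']) hz

/-- Divide out the zeros in `closedBall c R`. On the sphere of radius `3 * R` each factor is at
least `2 * R`, while at `c` it is at most `R`; this gains `2` per zero. -/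
theorem exists_multiset_mul_prod_le_norm (hR : 0 < R)
    (hf : AnalyticOnNhd ℂ f (closedBall c (3 * R))) (hM : ∀ z ∈ closedBall c (3 * R), ‖f z‖ ≤ M)
    (hb : 0 < b) (hbc : b ≤ ‖f c‖) (hbM : b < M) :
    ∃ Z : Multiset ℂ, 2 ^ Z.card ≤ M / b ∧ ∀ z ∈ closedBall c (R / 2),
      b * (b / M) ^ 2 * (‖(Z.map fun w => z - w).prod‖ / R ^ Z.card) ≤ ‖f z‖ := by
  have hM0 : 0 ≤ M := (hb.trans hbM).le
  have hcmem : c ∈ closedBall c (3 * R) := mem_closedBall_self (by positivity)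
  have hsub : closedBall c R ⊆ closedBall c (3 * R) := closedBall_subset_closedBall (by linarith)
  obtain ⟨Z, h, H, hZ, h0⟩ := exists_isFactorization hf (isCompact_closedBall c R) hsub
    fun z hz => analyticOrderAt_ne_top_of_apply_ne_zero hf (convex_closedBall c _).isPreconnected
      hcmem (norm_pos_iff.1 (hb.trans_le hbc)) z (hsub hz)
  have hnorm : ∀ z, ‖f z‖ = ‖(Z.map fun w => z - w).prod‖ * ‖h z‖ := fun z => by
    rw [H.eq_mul z, norm_mul]
  have hsphere : ∀ z ∈ sphere c (3 * R), ‖h z‖ ≤ M / (2 * R) ^ Z.card := by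
    intro z hz
    rw [le_div_iff₀' (by positivity)]
    refine le_trans ?_ (hnorm z ▸ hM z (sphere_subset_closedBall hz))
    refine mul_le_mul_of_nonneg_right (pow_card_le_norm_multiset_prod_sub (by positivity)
      fun w hw => ?_) (norm_nonneg _)
    linarith [mem_sphere.1 hz, mem_closedBall.1 (hZ w hw), dist_triangle z w c]
  have hball := norm_le_of_forall_mem_sphere_norm_le (by positivity) H.analyticOnNhd hsphere
  have hcenter : b / R ^ Z.card ≤ ‖h c‖ := by
    rw [div_le_iff₀' (by positivity)]
    refine hbc.trans (hnorm c ▸ mul_le_mul_of_nonneg_right (norm_multiset_prod_sub_le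
      fun w hw => ?_) (norm_nonneg _))
    exact dist_comm c w ▸ hZ w hw
  have hcard : 2 ^ Z.card ≤ M / b := by
    have hle := hcenter.trans (hball c hcmem)
    rw [mul_pow, div_le_div_iff₀ (by positivity) (by positivity), ← mul_assoc] at hle
    rw [le_div_iff₀' hb]
    exact le_of_mul_le_mul_right hle (by positivity)
  refine ⟨Z, hcard, fun z hz => ?_⟩
  have hle := mul_sq_le_norm_of_ne_zero hR
    (H.analyticOnNhd.differentiableOn.mono (ball_subset_closedBall.trans hsub))
    (fun w hw => h0 w (ball_subset_closedBall hw))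
    (fun w hw => (hball w (hsub (ball_subset_closedBall hw))).trans
      (div_le_div_of_nonneg_left hM0 (by positivity)
        (pow_le_pow_left₀ hR.le (by linarith) Z.card)))
    (by positivity) hcenter (by gcongr) hz
  rw [div_div_div_cancel_right₀ (by positivity)] at hle
  calc b * (b / M) ^ 2 * (‖(Z.map fun w => z - w).prod‖ / R ^ Z.card)
      = ‖(Z.map fun w => z - w).prod‖ * (b / R ^ Z.card * (b / M) ^ 2) := by ring
    _ ≤ ‖f z‖ := by rw [hnorm z]; gcongr

end MinimumModulus

section Reflection

open scoped ComplexConjugate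

/-- The reflection `z ↦ conj (F (1 - conj z))` of `F` in the critical line `re z = 1 / 2`. -/
noncomputable def schwarzReflection (F : ℂ → ℂ) (z : ℂ) : ℂ := conj (F (1 - conj z))

@[simp]
lemma schwarzReflection_schwarzReflection (F : ℂ → ℂ) :
    schwarzReflection (schwarzReflection F) = F := by
  ext z
  simp [schwarzReflection]

lemma tendsto_one_sub_conj (z : ℂ) : Tendsto (fun u => 1 - conj u) (𝓝 z) (𝓝 (1 - conj z)) :=
  (continuous_const.sub continuous_conj).tendsto z

lemma differentiableAt_schwarzReflection {F : ℂ → ℂ} {z : ℂ}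
    (hF : DifferentiableAt ℂ F (1 - conj z)) : DifferentiableAt ℂ (schwarzReflection F) z := by
  have hcomp : DifferentiableAt ℂ (fun v => F (1 - v)) (conj z) :=
    hF.comp (conj z) ((differentiableAt_const 1).sub differentiableAt_id)
  have hconj := hcomp.conj_conj
  rwa [Complex.conj_conj] at hconj

lemma analyticAt_schwarzReflection {F : ℂ → ℂ} {z : ℂ} (hF : AnalyticAt ℂ F (1 - conj z)) :
    AnalyticAt ℂ (schwarzReflection F) z := by
  rw [analyticAt_iff_eventually_differentiableAt] at hF ⊢
  filter_upwards [(tendsto_one_sub_conj z).eventually hF] with u hu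
  exact differentiableAt_schwarzReflection hu

lemma analyticAt_schwarzReflection_iff {F : ℂ → ℂ} {z : ℂ} :
    AnalyticAt ℂ (schwarzReflection F) z ↔ AnalyticAt ℂ F (1 - conj z) := by
  refine ⟨fun h => ?_, analyticAt_schwarzReflection⟩
  rw [← schwarzReflection_schwarzReflection F]
  exact analyticAt_schwarzReflection (by simpa using h)

lemma analyticOrderAt_schwarzReflection {F : ℂ → ℂ} {z : ℂ} (hF : AnalyticAt ℂ F (1 - conj z)) :
    analyticOrderAt (schwarzReflection F) z = analyticOrderAt F (1 - conj z) := by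
  by_cases htop : analyticOrderAt F (1 - conj z) = ⊤
  · rw [htop]
    rw [analyticOrderAt_eq_top] at htop ⊢
    filter_upwards [(tendsto_one_sub_conj z).eventually htop] with u hu
    simp [schwarzReflection, hu]
  · obtain ⟨n, hn⟩ := ENat.ne_top_iff_exists.mp htop
    obtain ⟨g, hg, hg0, hFg⟩ := hF.analyticOrderAt_eq_natCast.1 hn.symm
    rw [← hn, (analyticAt_schwarzReflection hF).analyticOrderAt_eq_natCast]
    refine ⟨fun u => (-1) ^ n * schwarzReflection g u,
      analyticAt_const.mul (analyticAt_schwarzReflection hg), by simp [schwarzReflection, hg0], ?_⟩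
    filter_upwards [(tendsto_one_sub_conj z).eventually hFg] with u hu
    have hsub : conj (1 - conj u - (1 - conj z)) = -1 * (u - z) := by simp
    simp only [schwarzReflection, hu, smul_eq_mul, map_mul, map_pow, hsub, mul_pow]
    ring

lemma zeroOrder_schwarzReflection (F : ℂ → ℂ) (z : ℂ) :
    zeroOrder (schwarzReflection F) z = zeroOrder F (1 - conj z) := by
  by_cases hF : AnalyticAt ℂ F (1 - conj z)
  · rw [zeroOrder_eq_toNat, zeroOrder_eq_toNat, analyticOrderAt_schwarzReflection hF]
  · simp [zeroOrder, analyticAt_schwarzReflection_iff, hF]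

theorem zeroCount_schwarzReflection (F : ℂ → ℂ) (c : ℂ) (r : ℝ) :
    zeroCount (schwarzReflection F) c r = zeroCount F (1 - conj c) r := by
  have hdist : ∀ z w : ℂ, dist (1 - conj z) (1 - conj w) = dist z w := fun z w => by
    rw [dist_sub_left, Complex.dist_conj_conj]
  refine finsum_mem_eq_of_bijOn (fun z => 1 - conj z) ⟨?_, ?_, ?_⟩
    fun z _ => zeroOrder_schwarzReflection F z
  · rintro z ⟨hz0, hz⟩
    exact ⟨by simpa [schwarzReflection] using hz0, by rwa [hdist]⟩
  · intro a _ b _ hab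
    exact (starRingEnd ℂ).injective (by simpa using hab)
  · rintro w ⟨hw0, hw⟩
    exact ⟨1 - conj w, ⟨by simp [schwarzReflection, hw0], by rw [← hdist]; simpa using hw⟩,
      by simp⟩

lemma zeroCount_eq_of_eqOn_mul {F M G : ℂ → ℂ} {c : ℂ} {r : ℝ} (hM : AnalyticOnNhd ℂ M (ball c r))
    (hG : AnalyticOnNhd ℂ G (ball c r)) (hM0 : ∀ z ∈ ball c r, M z ≠ 0)
    (hF : Set.EqOn F (M * G) (ball c r)) : zeroCount F c r = zeroCount G c r := by
  have hset : {z : ℂ | F z = 0 ∧ dist z c < r} = {z : ℂ | G z = 0 ∧ dist z c < r} := by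
    ext z
    refine and_congr_left fun hz => ?_
    simp [hF hz, hM0 z hz]
  unfold zeroCount
  rw [hset]
  refine finsum_mem_congr rfl fun z ⟨_, hz⟩ => ?_
  rw [zeroOrder_eq_toNat, zeroOrder_eq_toNat,
    analyticOrderAt_congr (hF.eventuallyEq_of_mem (isOpen_ball.mem_nhds hz)),
    analyticOrderAt_mul (hM z hz) (hG z hz), (hM z hz).analyticOrderAt_eq_zero.2 (hM0 z hz),
    zero_add]

end Reflection

section PolynomialGrowth

lemma eventually_comap_im_atTop_iff {p : ℂ → Prop} :
    (∀ᶠ s in comap im atTop, p s) ↔ ∃ T, ∀ s, T ≤ s.im → p s := by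
  simp [((atTop_basis (α := ℝ)).comap im).eventually_iff]

lemma eventually_comap_im_atTop_of_eventually_atTop {p : ℝ → Prop} (hp : ∀ᶠ t in atTop, p t) :
    ∀ᶠ s in comap im atTop, p s.im :=
  tendsto_comap.eventually hp

lemma eventually_comap_im_atTop_forall_closedBall {p : ℂ → Prop}
    (hp : ∀ᶠ s in comap im atTop, p s) (R : ℝ) :
    ∀ᶠ s in comap im atTop, ∀ z ∈ closedBall s R, p z := by
  rw [eventually_comap_im_atTop_iff] at hp ⊢
  obtain ⟨T, hT⟩ := hp
  refine ⟨T + R, fun s hs z hz => hT z ?_⟩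
  have him := (abs_le.1 ((abs_im_le_norm (z - s)).trans (mem_closedBall_iff_norm.1 hz))).1
  rw [sub_im] at him
  linarith

lemma eventually_comap_im_atTop_mem_upperHalfPlaneSet :
    ∀ᶠ s in comap im atTop, s ∈ UpperHalfPlane.upperHalfPlaneSet :=
  eventually_comap_im_atTop_of_eventually_atTop (eventually_gt_atTop 0)

/-- `f` grows at most polynomially as the imaginary part tends to `+∞` within `S`. -/
def HasPolynomialGrowthOn (f : ℂ → ℂ) (S : Set ℂ) : Prop :=
  ∃ k : ℕ, ∀ᶠ s in comap im atTop, s ∈ S → ‖f s‖ ≤ s.im ^ k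

/-- `f` grows at most polynomially as the imaginary part tends to `+∞`, uniformly in every
vertical strip of finite width. -/
def HasPolynomialGrowth (f : ℂ → ℂ) : Prop :=
  ∀ B : ℝ, HasPolynomialGrowthOn f {s | |s.re| ≤ B}

lemma hasPolynomialGrowthOn_of_forall_norm_le {f : ℂ → ℂ} {S : Set ℂ} {C : ℝ}
    (hf : ∀ s ∈ S, ‖f s‖ ≤ C) : HasPolynomialGrowthOn f S := by
  refine ⟨1, ?_⟩
  filter_upwards [eventually_comap_im_atTop_of_eventually_atTop (eventually_ge_atTop C)]
    with s hC hs
  rw [pow_one]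
  exact (hf s hs).trans hC

lemma HasPolynomialGrowthOn.const_mul {f : ℂ → ℂ} {S : Set ℂ} (hf : HasPolynomialGrowthOn f S)
    (a : ℂ) : HasPolynomialGrowthOn (fun s => a * f s) S := by
  obtain ⟨k, hk⟩ := hf
  refine ⟨k + 1, ?_⟩
  filter_upwards [hk, eventually_comap_im_atTop_of_eventually_atTop (eventually_ge_atTop ‖a‖)]
    with s hs ha hS
  rw [norm_mul, pow_succ']
  exact mul_le_mul ha (hs hS) (norm_nonneg _) ((norm_nonneg a).trans ha)

lemma HasPolynomialGrowthOn.add {f g : ℂ → ℂ} {S : Set ℂ} (hf : HasPolynomialGrowthOn f S)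
    (hg : HasPolynomialGrowthOn g S) : HasPolynomialGrowthOn (fun s => f s + g s) S := by
  obtain ⟨k, hk⟩ := hf
  obtain ⟨l, hl⟩ := hg
  refine ⟨k + l + 1, ?_⟩
  filter_upwards [hk, hl, eventually_comap_im_atTop_of_eventually_atTop (eventually_ge_atTop 2)]
    with s hfs hgs him hS
  have h1 : 1 ≤ s.im := by linarith
  calc ‖f s + g s‖ ≤ s.im ^ k + s.im ^ l :=
        (norm_add_le _ _).trans (add_le_add (hfs hS) (hgs hS))
    _ ≤ s.im ^ (k + l) + s.im ^ (k + l) := by gcongr <;> first | exact h1 | omega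
    _ = 2 * s.im ^ (k + l) := (two_mul _).symm
    _ ≤ s.im ^ (k + l + 1) := by rw [pow_succ']; gcongr

lemma HasPolynomialGrowthOn.congr {f g : ℂ → ℂ} {S : Set ℂ} (hf : HasPolynomialGrowthOn f S)
    (hfg : ∀ᶠ s in comap im atTop, s ∈ S → f s = g s) : HasPolynomialGrowthOn g S := by
  obtain ⟨k, hk⟩ := hf
  refine ⟨k, ?_⟩
  filter_upwards [hk, hfg] with s hs heq hS
  exact heq hS ▸ hs hS

lemma hasPolynomialGrowth_schwarzReflection {f : ℂ → ℂ} (hf : HasPolynomialGrowth f) :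
    HasPolynomialGrowth (schwarzReflection f) := fun B => by
  obtain ⟨k, hk⟩ := hf (1 + B)
  refine ⟨k, ?_⟩
  rw [eventually_comap_im_atTop_iff] at hk ⊢
  obtain ⟨T, hT⟩ := hk
  refine ⟨T, fun s hs hB => ?_⟩
  have hre : |(1 - (starRingEnd ℂ) s).re| ≤ 1 + B := by
    simpa using (abs_sub (1 : ℝ) s.re).trans (by simpa using hB)
  simpa [schwarzReflection] using hT (1 - (starRingEnd ℂ) s) (by simpa using hs) hre

lemma HasPolynomialGrowth.eventually_forall_closedBall {f : ℂ → ℂ} (hf : HasPolynomialGrowth f)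
    (B R : ℝ) :
    ∃ k : ℕ, ∀ᶠ s in comap im atTop, |s.re| ≤ B → ∀ z ∈ closedBall s R, ‖f z‖ ≤ s.im ^ k := by
  obtain ⟨k, hk⟩ := hf (B + R)
  refine ⟨2 * k, ?_⟩
  filter_upwards [eventually_comap_im_atTop_forall_closedBall
    (hk.and eventually_comap_im_atTop_mem_upperHalfPlaneSet) R,
    eventually_comap_im_atTop_of_eventually_atTop (eventually_ge_atTop (max R 2))]
    with s hs hsR hB z hz
  have hzs := mem_closedBall_iff_norm.1 hz
  have hre := (abs_re_le_norm (z - s)).trans hzs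
  have him := (le_abs_self _).trans ((abs_im_le_norm (z - s)).trans hzs)
  rw [sub_re] at hre
  rw [sub_im] at him
  have hz_pos : 0 < z.im := (hs z hz).2
  calc ‖f z‖ ≤ z.im ^ k := (hs z hz).1 (by linarith [abs_sub_abs_le_abs_sub z.re s.re])
    _ ≤ (s.im ^ 2) ^ k :=
      pow_le_pow_left₀ hz_pos.le (by nlinarith [max_le_iff.1 hsR]) k
    _ = s.im ^ (2 * k) := (pow_mul _ _ _).symm

end PolynomialGrowth

section LowerBoundOnCircles

lemma natCast_le_of_two_pow_le {b t : ℝ} {k N : ℕ} (hb : 0 < b) (ht : 0 < t)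
    (hbt : |Real.log b| ≤ Real.log t) (hN : 2 ^ N ≤ t ^ k / b) :
    N ≤ 2 * (k + 1) * Real.log t := by
  have hlog : N * Real.log 2 ≤ k * Real.log t - Real.log b := by
    simpa [Real.log_div (pow_ne_zero k ht.ne') hb.ne'] using Real.log_le_log (by positivity) hN
  nlinarith [Real.log_two_gt_d9, neg_abs_le (Real.log b), N.cast_nonneg (α := ℝ)]

lemma exp_neg_mul_log_le {b t R : ℝ} {k N : ℕ} (hb : 0 < b) (ht : 0 < t) (hR : 1 ≤ R)
    (hbt : 3 * |Real.log b| ≤ Real.log t) (hN : N ≤ 2 * (k + 1) * Real.log t) :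
    Real.exp (-((2 * (k + 1) * (1 + Real.log R)) * Real.log t)) ≤
      b * (b / t ^ k) ^ 2 / R ^ N := by
  have _ : 0 < R := by linarith
  rw [← Real.le_log_iff_exp_le (by positivity), Real.log_div (by positivity) (by positivity),
    Real.log_mul hb.ne' (by positivity), Real.log_pow, Real.log_pow,
    Real.log_div hb.ne' (by positivity), Real.log_pow]
  push_cast
  nlinarith [mul_le_mul_of_nonneg_right hN (Real.log_nonneg hR), neg_abs_le (Real.log b),
    abs_nonneg (Real.log b)]

lemma exists_multiset_exp_mul_prod_le_norm {F : ℂ → ℂ} {b σ R : ℝ}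
    (hF : AnalyticOnNhd ℂ F UpperHalfPlane.upperHalfPlaneSet) (hgrowth : HasPolynomialGrowth F)
    (hb : 0 < b) (hσ : ∀ s : ℂ, s.re = σ → b ≤ ‖F s‖) (hR : 1 ≤ R) :
    ∃ κ : ℝ, 0 < κ ∧ ∀ᶠ c in comap im atTop, c.re = σ →
      ∃ Z : Multiset ℂ, Z.card ≤ κ * Real.log c.im ∧ ∀ z ∈ closedBall c (R / 2),
        Real.exp (-(κ * Real.log c.im)) * ‖(Z.map fun w => z - w).prod‖ ≤ ‖F z‖ := by
  obtain ⟨k, hk⟩ := hgrowth.eventually_forall_closedBall |σ| (3 * R)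
  have hlogR := Real.log_nonneg hR
  refine ⟨2 * ((k + 1 : ℕ) + 1) * (1 + Real.log R), by positivity, ?_⟩
  filter_upwards [hk, eventually_comap_im_atTop_forall_closedBall
      eventually_comap_im_atTop_mem_upperHalfPlaneSet (3 * R),
    eventually_comap_im_atTop_of_eventually_atTop
      (Real.tendsto_log_atTop.eventually_ge_atTop (3 * |Real.log b|)),
    eventually_comap_im_atTop_of_eventually_atTop (eventually_gt_atTop (max b 1))]
    with c hgrow hsub hlog hc hcσ
  obtain ⟨hbc, h1c⟩ := max_lt_iff.1 hc
  have hlogc : 0 ≤ Real.log c.im := Real.log_nonneg h1c.le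
  obtain ⟨Z, hcard, hZ⟩ := exists_multiset_mul_prod_le_norm (by linarith) (hF.mono hsub)
    (fun z hz =>
      (hgrow (by rw [hcσ]) z hz).trans (pow_le_pow_right₀ h1c.le (Nat.le_add_right k 1))) hb
    (hσ c hcσ) (hbc.trans_le (le_self_pow₀ h1c.le (Nat.succ_ne_zero k)))
  have hcard' := natCast_le_of_two_pow_le hb (by linarith)
    (by linarith [abs_nonneg (Real.log b)]) hcard
  refine ⟨Z, hcard'.trans ?_, fun z hz => le_trans ?_ (hZ z hz)⟩
  · rw [mul_assoc _ (1 + _)]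
    exact mul_le_mul_of_nonneg_left (le_mul_of_one_le_left hlogc (by linarith)) (by positivity)
  · rw [mul_div_left_comm, mul_comm ‖_‖]
    gcongr
    exact exp_neg_mul_log_le hb (by linarith) hR hlog hcard'

lemma exists_forall_le_abs_sub {ι : Type*} (S : Finset ι) (d : ι → ℝ) {x : ℝ} (hx : 0 < x) :
    ∃ r, x ≤ r ∧ r ≤ x * (1 + 2 * S.card) ∧ ∀ w ∈ S, x ≤ |r - d w| := by
  by_contra! hc
  -- Otherwise each of the `S.card + 1` candidates `x (1 + 2 j)` is close to some `d w`.
  have hcard := Finset.card_le_card_of_forall_subsingleton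
    (s := Finset.range (S.card + 1)) (t := S) (fun (j : ℕ) w => |x * (1 + 2 * j) - d w| < x)
    (fun j hj => hc _ (by nlinarith [j.cast_nonneg (α := ℝ)])
      (by gcongr; exact Finset.mem_range_succ_iff.1 hj)) fun w _ i hi j hj => by
    have hlti := abs_sub_lt_iff.1 hi.2
    have hltj := abs_sub_lt_iff.1 hj.2
    by_contra hij
    rcases lt_or_gt_of_ne hij with h | h
    · have : (i : ℝ) + 1 ≤ j := mod_cast h
      nlinarith
    · have : (j : ℝ) + 1 ≤ i := mod_cast h
      nlinarith
  simp at hcard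

lemma exists_radius_pow_card_le_norm_multiset_prod_sub (Z : Multiset ℂ) (s : ℂ) {x : ℝ}
    (hx : 0 < x) :
    ∃ r, x ≤ r ∧ r ≤ x * (1 + 2 * Z.card) ∧
      ∀ z ∈ sphere s r, x ^ Z.card ≤ ‖(Z.map fun w => z - w).prod‖ := by
  obtain ⟨r, hxr, hrx, hr⟩ := exists_forall_le_abs_sub Z.toFinset (dist · s) hx
  have hcard : (Z.toFinset.card : ℝ) ≤ Z.card := mod_cast Z.toFinset_card_le
  refine ⟨r, hxr, hrx.trans (by gcongr), fun z hz => ?_⟩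
  refine pow_card_le_norm_multiset_prod_sub hx.le fun w hw =>
    (hr w (Multiset.mem_toFinset.2 hw)).trans ?_
  rw [← mem_sphere.1 hz]
  exact abs_dist_sub_le z w s

lemma eventually_exp_mul_log_sq_le_one {A : ℝ} (hA : 0 < A) :
    ∀ᶠ t in atTop, Real.exp (-A * t / Real.log t) * Real.log t ^ 2 ≤ 1 := by
  filter_upwards [(Real.isLittleO_pow_log_id_atTop (n := 3)).bound hA,
    Real.tendsto_log_atTop.eventually_gt_atTop 0, eventually_gt_atTop 0] with t hlog hL ht
  rw [id_eq, Real.norm_of_nonneg (by positivity), Real.norm_of_nonneg ht.le] at hlog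
  calc Real.exp (-A * t / Real.log t) * Real.log t ^ 2
      ≤ Real.exp (-A * t / Real.log t) * Real.exp (A * t / Real.log t) := by
        gcongr
        refine le_trans ?_ (le_of_lt (lt_of_lt_of_le (lt_add_one _) (Real.add_one_le_exp _)))
        rw [le_div_iff₀ hL]
        linarith
    _ = 1 := by rw [← Real.exp_add]; ring_nf; exact Real.exp_zero

lemma eventually_mul_log_le (κ : ℝ) {ε : ℝ} (hε : 0 < ε) :
    ∀ᶠ t in atTop, κ * Real.log t ≤ ε * t := by
  filter_upwards [(Real.isLittleO_log_id_atTop.const_mul_left κ).bound hε, eventually_ge_atTop 0]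
    with t ht ht0
  rw [id_eq, Real.norm_of_nonneg ht0] at ht
  exact (le_abs_self _).trans ht

lemma exp_neg_mul_le_exp_mul_exp_pow {ε κ L t : ℝ} {N : ℕ} (hε : 0 ≤ ε) (hκ : 0 < κ) (hL : 0 < L)
    (ht : 0 ≤ t) (hN : N ≤ κ * L) (hLt : κ * L ≤ ε / 2 * t) :
    Real.exp (-(ε * t)) ≤ Real.exp (-(κ * L)) * Real.exp (-(ε / (2 * κ)) * t / L) ^ N := by
  rw [← Real.exp_nat_mul, ← Real.exp_add, Real.exp_le_exp]
  have hNt : N * (ε / (2 * κ) * t / L) ≤ κ * L * (ε / (2 * κ) * t / L) := by gcongr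
  have hcancel : κ * L * (ε / (2 * κ) * t / L) = ε / 2 * t := by field_simp
  rw [neg_mul, neg_div, mul_neg]
  linarith

lemma exists_radius_exp_neg_mul_le_norm {F : ℂ → ℂ} {b σ : ℝ}
    (hF : AnalyticOnNhd ℂ F UpperHalfPlane.upperHalfPlaneSet) (hgrowth : HasPolynomialGrowth F)
    (hb : 0 < b) (hσ : ∀ s : ℂ, s.re = σ → b ≤ ‖F s‖) (B : ℝ) {ε : ℝ} (hε : 0 < ε) :
    ∃ A : ℝ, 0 < A ∧ ∀ᶠ s in comap im atTop, |s.re| ≤ B →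
      ∃ r, Real.exp (-A * s.im / Real.log s.im) ≤ r ∧
        r ≤ Real.exp (-A * s.im / Real.log s.im) * Real.log s.im ^ 2 ∧
        ∀ z ∈ sphere s r, Real.exp (-(ε * s.im)) ≤ ‖F z‖ := by
  obtain ⟨κ, hκ, hZ⟩ := exists_multiset_exp_mul_prod_le_norm (R := 2 * (|σ| + |B| + 1)) hF hgrowth
    hb hσ (by linarith [abs_nonneg σ, abs_nonneg B])
  obtain ⟨T, hT⟩ := eventually_comap_im_atTop_iff.1 hZ
  have hA : 0 < ε / (2 * κ) := by positivity
  refine ⟨ε / (2 * κ), hA, ?_⟩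
  filter_upwards [eventually_comap_im_atTop_of_eventually_atTop (eventually_ge_atTop T),
    eventually_comap_im_atTop_of_eventually_atTop (eventually_mul_log_le κ (half_pos hε)),
    eventually_comap_im_atTop_of_eventually_atTop (eventually_exp_mul_log_sq_le_one hA),
    eventually_comap_im_atTop_of_eventually_atTop
      (Real.tendsto_log_atTop.eventually_ge_atTop (1 + 2 * κ)),
    eventually_comap_im_atTop_of_eventually_atTop (eventually_gt_atTop 0)]
    with s hsT hsmall hone hlog hs0 hB
  obtain ⟨Z, hcard, hZ⟩ := hT ⟨σ, s.im⟩ hsT rfl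
  set x := Real.exp (-(ε / (2 * κ)) * s.im / Real.log s.im)
  obtain ⟨r, hxr, hrx, hprod⟩ :=
    exists_radius_pow_card_le_norm_multiset_prod_sub Z s (Real.exp_pos _ : 0 < x)
  have hr_le : r ≤ x * Real.log s.im ^ 2 := hrx.trans (by gcongr; nlinarith)
  refine ⟨r, hxr, hr_le, fun z hz => ?_⟩
  have hzc : z ∈ closedBall (⟨σ, s.im⟩ : ℂ) (2 * (|σ| + |B| + 1) / 2) := by
    have hsc : dist s ⟨σ, s.im⟩ ≤ |s.re| + |σ| :=
      (dist_of_im_eq (z := s) (w := ⟨σ, s.im⟩) rfl).trans_le (abs_sub _ _)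
    rw [mem_closedBall]
    linarith [dist_triangle z s ⟨σ, s.im⟩, mem_sphere.1 hz, le_abs_self B]
  calc Real.exp (-(ε * s.im)) ≤ Real.exp (-(κ * Real.log s.im)) * x ^ Z.card :=
        exp_neg_mul_le_exp_mul_exp_pow hε.le hκ (by linarith) hs0.le hcard hsmall
    _ ≤ Real.exp (-(κ * Real.log s.im)) * ‖(Z.map fun w => z - w).prod‖ := by
        gcongr; exact hprod z hz
    _ ≤ ‖F z‖ := hZ z hzc

end LowerBoundOnCircles

section AlmostSymmetry

open scoped ComplexConjugate

lemma eventually_pow_lt_exp_mul_sub_one {c : ℝ} (hc : 0 < c) (k : ℕ) :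
    ∀ᶠ t : ℝ in atTop, t ^ k < Real.exp (c * (t - 1)) := by
  filter_upwards [(isLittleO_pow_exp_pos_mul_atTop k hc).bound (half_pos (Real.exp_pos (-c))),
    eventually_gt_atTop 0] with t ht ht0
  rw [Real.norm_of_nonneg (by positivity), Real.norm_of_nonneg (by positivity)] at ht
  rw [mul_sub_one, sub_eq_add_neg, add_comm, Real.exp_add]
  nlinarith [mul_pos (Real.exp_pos (-c)) (Real.exp_pos (c * t))]

lemma eventually_norm_exp_mul_lt {G : ℂ → ℂ} {c : ℝ} (hG : HasPolynomialGrowth G) (hc : 0 < c)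
    (B : ℝ) :
    ∀ᶠ s in comap im atTop, |s.re| ≤ B →
      ‖cexp (c * I * s) * G s‖ < Real.exp (-(c / 2 * (s.im + 1))) := by
  obtain ⟨k, hk⟩ := hG B
  filter_upwards [hk, eventually_comap_im_atTop_of_eventually_atTop
    (eventually_pow_lt_exp_mul_sub_one (half_pos hc) k)] with s hs hlt hB
  have hexp : ‖cexp (c * I * s)‖ = Real.exp (-(c * s.im)) := by simp [norm_exp]
  calc ‖cexp (c * I * s) * G s‖ ≤ Real.exp (-(c * s.im)) * s.im ^ k := by
        rw [norm_mul, hexp]; gcongr; exact hs hB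
    _ < Real.exp (-(c * s.im)) * Real.exp (c / 2 * (s.im - 1)) := by gcongr
    _ = Real.exp (-(c / 2 * (s.im + 1))) := by rw [← Real.exp_add]; ring_nf

lemma zeroCount_eq_of_eqOn_mul_schwarzReflection_add {F M E : ℂ → ℂ} {ρ : ℂ} {r : ℝ} (hr : 0 ≤ r)
    (hF : ∀ z ∈ closedBall ρ r, AnalyticAt ℂ F (1 - conj z))
    (hM : AnalyticOnNhd ℂ M (closedBall ρ r)) (hM0 : ∀ z ∈ closedBall ρ r, M z ≠ 0)
    (hE : AnalyticOnNhd ℂ E (closedBall ρ r))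
    (hFE : Set.EqOn F (M * (schwarzReflection F + E)) (closedBall ρ r))
    (hlt : ∀ z ∈ sphere ρ r, ‖E z‖ < ‖F (1 - conj z)‖) :
    zeroCount F ρ r = zeroCount F (1 - conj ρ) r := by
  have hrefl : AnalyticOnNhd ℂ (schwarzReflection F) (closedBall ρ r) := fun z hz =>
    analyticAt_schwarzReflection (hF z hz)
  calc zeroCount F ρ r = zeroCount (schwarzReflection F + E) ρ r :=
        zeroCount_eq_of_eqOn_mul (hM.mono ball_subset_closedBall)
          ((hrefl.add hE).mono ball_subset_closedBall)
          (fun z hz => hM0 z (ball_subset_closedBall hz)) (hFE.mono ball_subset_closedBall)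
    _ = zeroCount (schwarzReflection F) ρ r :=
        zeroCount_eq_of_norm_sub_lt hr (hrefl.add hE) hrefl fun z hz => by
          simpa [schwarzReflection] using hlt z hz
    _ = zeroCount F (1 - conj ρ) r := zeroCount_schwarzReflection F ρ r

/-- In every vertical strip, each `ρ` of sufficiently large imaginary part `γ` has a radius between
`exp (-A γ / log γ)` and `exp (-A γ / log γ) (log γ) ^ 2` for which the discs around `ρ` and around
its mirror image in the critical line contain the same number of zeros of `F`. -/
def HasAlmostSymmetricZeros (F : ℂ → ℂ) : Prop :=
  ∀ B : ℝ, ∃ A : ℝ, 0 < A ∧ ∀ᶠ ρ in comap im atTop, |ρ.re| ≤ B →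
    ∃ r, Real.exp (-A * ρ.im / Real.log ρ.im) ≤ r ∧
      r ≤ Real.exp (-A * ρ.im / Real.log ρ.im) * Real.log ρ.im ^ 2 ∧
      zeroCount F ρ r = zeroCount F (1 - conj ρ) r

theorem hasAlmostSymmetricZeros_of_eqOn_mul_schwarzReflection {F M : ℂ → ℂ}
    (hF : AnalyticOnNhd ℂ F UpperHalfPlane.upperHalfPlaneSet)
    (hM : AnalyticOnNhd ℂ M UpperHalfPlane.upperHalfPlaneSet)
    (hM0 : ∀ z ∈ UpperHalfPlane.upperHalfPlaneSet, M z ≠ 0)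
    (hFE : Set.EqOn F (M * schwarzReflection F) UpperHalfPlane.upperHalfPlaneSet) :
    HasAlmostSymmetricZeros F := fun B => by
  refine ⟨1, one_pos, ?_⟩
  filter_upwards [
    eventually_comap_im_atTop_forall_closedBall eventually_comap_im_atTop_mem_upperHalfPlaneSet 1,
    eventually_comap_im_atTop_of_eventually_atTop (eventually_exp_mul_log_sq_le_one one_pos),
    eventually_comap_im_atTop_of_eventually_atTop
      (Real.tendsto_log_atTop.eventually_ge_atTop 1)] with ρ hball hone hlog _
  have hrx := le_mul_of_one_le_right (Real.exp_pos (-1 * ρ.im / Real.log ρ.im)).le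
    (one_le_pow₀ hlog (n := 2))
  have hUH : ball ρ (Real.exp (-1 * ρ.im / Real.log ρ.im)) ⊆ UpperHalfPlane.upperHalfPlaneSet :=
    (ball_subset_closedBall.trans (closedBall_subset_closedBall (hrx.trans hone))).trans hball
  refine ⟨_, le_rfl, hrx, ?_⟩
  rw [← zeroCount_schwarzReflection]
  exact zeroCount_eq_of_eqOn_mul (hM.mono hUH)
    (fun z hz => analyticAt_schwarzReflection (hF _ (by simpa using hUH hz)))
    (fun z hz => hM0 z (hUH hz)) (hFE.mono hUH)

theorem hasAlmostSymmetricZeros_of_eqOn_mul_schwarzReflection_add {F M G : ℂ → ℂ} {b c σ : ℝ}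
    (hF : AnalyticOnNhd ℂ F UpperHalfPlane.upperHalfPlaneSet)
    (hM : AnalyticOnNhd ℂ M UpperHalfPlane.upperHalfPlaneSet)
    (hM0 : ∀ z ∈ UpperHalfPlane.upperHalfPlaneSet, M z ≠ 0)
    (hG : AnalyticOnNhd ℂ G UpperHalfPlane.upperHalfPlaneSet)
    (hFE : Set.EqOn F (M * (schwarzReflection F + fun z => cexp (c * I * z) * G z))
      UpperHalfPlane.upperHalfPlaneSet)
    (hF_growth : HasPolynomialGrowth F) (hG_growth : HasPolynomialGrowth G)
    (hb : 0 < b) (hσ : ∀ s : ℂ, s.re = σ → b ≤ ‖F s‖) (hc : 0 < c) :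
    HasAlmostSymmetricZeros F := fun B => by
  obtain ⟨A, hA, hlow⟩ :=
    exists_radius_exp_neg_mul_le_norm hF hF_growth hb hσ (1 + B) (half_pos hc)
  obtain ⟨T, hT⟩ := eventually_comap_im_atTop_iff.1 hlow
  refine ⟨A, hA, ?_⟩
  filter_upwards [eventually_comap_im_atTop_of_eventually_atTop (eventually_ge_atTop T),
    eventually_comap_im_atTop_of_eventually_atTop (eventually_exp_mul_log_sq_le_one hA),
    eventually_comap_im_atTop_forall_closedBall
      (eventually_comap_im_atTop_mem_upperHalfPlaneSet.and
        (eventually_norm_exp_mul_lt hG_growth hc (B + 1))) 1] with ρ hρT hone hball hB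
  have hre : |(1 - conj ρ).re| ≤ 1 + B := by
    simpa using (abs_sub (1 : ℝ) ρ.re).trans (by simpa using hB)
  have him : (1 - conj ρ).im = ρ.im := by simp
  obtain ⟨r, hxr, hrx, hr⟩ := hT (1 - conj ρ) (by rwa [him]) hre
  rw [him] at hxr hrx hr
  have hsub : closedBall ρ r ⊆ closedBall ρ 1 := closedBall_subset_closedBall (hrx.trans hone)
  have hUH : closedBall ρ r ⊆ UpperHalfPlane.upperHalfPlaneSet :=
    fun z hz => (hball z (hsub hz)).1
  have hexp : AnalyticOnNhd ℂ (fun z : ℂ => cexp (c * I * z)) (closedBall ρ r) := fun z _ => by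
    fun_prop
  refine ⟨r, hxr, hrx, zeroCount_eq_of_eqOn_mul_schwarzReflection_add
    ((Real.exp_pos _).le.trans hxr) (fun z hz => hF _ (by simpa using hUH hz)) (hM.mono hUH)
    (fun z hz => hM0 z (hUH hz)) (hexp.mul (hG.mono hUH)) (hFE.mono hUH) fun z hz => ?_⟩
  have hz1 := mem_closedBall_iff_norm.1 (hsub (sphere_subset_closedBall hz))
  have hz_re := (abs_re_le_norm (z - ρ)).trans hz1
  have hz_im := (abs_im_le_norm (z - ρ)).trans hz1
  rw [sub_re] at hz_re
  rw [sub_im, abs_le] at hz_im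
  have hz_reflect : 1 - conj z ∈ sphere (1 - conj ρ) r := by
    rw [mem_sphere, dist_sub_left, dist_conj_conj, mem_sphere.1 hz]
  calc ‖cexp (c * I * z) * G z‖ < Real.exp (-(c / 2 * (z.im + 1))) :=
        (hball z (hsub (sphere_subset_closedBall hz))).2
          (by linarith [abs_sub_abs_le_abs_sub z.re ρ.re])
    _ ≤ Real.exp (-(c / 2 * ρ.im)) := by gcongr; linarith
    _ ≤ ‖F (1 - conj z)‖ := hr _ hz_reflect

end AlmostSymmetry

section SummationByParts

open scoped fwdDiff

lemma summable_pow_mul_fwdDiff {e : ℂ} (he : e ≠ 0) {g : ℝ → ℂ} {a : ℝ}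
    (hg : Summable fun m : ℕ => e ^ m * g (m + a)) :
    Summable fun m : ℕ => e ^ m * Δ_[1] g (m + a) := by
  have hshift := ((summable_nat_add_iff 1).2 hg).mul_left e⁻¹
  refine (hshift.sub hg).congr fun m => ?_
  rw [fwdDiff, Nat.cast_succ, add_right_comm, pow_succ]
  field_simp

lemma tsum_pow_mul_eq_add_tsum_fwdDiff {e : ℂ} (he1 : e ≠ 1) {g : ℝ → ℂ} {a : ℝ}
    (hg : Summable fun m : ℕ => e ^ m * g (m + a)) :
    ∑' m : ℕ, e ^ m * g (m + a) =
      g a / (1 - e) + e / (1 - e) * ∑' m : ℕ, e ^ m * Δ_[1] g (m + a) := by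
  have hzero := hg.tsum_eq_zero_add
  have hdiff : e * ∑' m : ℕ, e ^ m * Δ_[1] g (m + a) =
      ∑' m : ℕ, e ^ (m + 1) * g ((m + 1 : ℕ) + a) - e * ∑' m : ℕ, e ^ m * g (m + a) := by
    rw [← tsum_mul_left, ← tsum_mul_left,
      ← ((summable_nat_add_iff 1).2 hg).tsum_sub (hg.mul_left e)]
    refine tsum_congr fun m => ?_
    rw [fwdDiff, Nat.cast_succ, add_right_comm]
    ring
  have hsub : 1 - e ≠ 0 := sub_ne_zero.2 he1.symm
  rw [div_mul_eq_mul_div, ← add_div, eq_div_iff hsub, hdiff]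
  simp only [pow_zero, Nat.cast_zero, zero_add, one_mul] at hzero
  linear_combination hzero

lemma tsum_pow_mul_eq_sum_add_tsum_iterate_fwdDiff {e : ℂ} (he : e ≠ 0) (he1 : e ≠ 1)
    {g : ℝ → ℂ} {a : ℝ} (hg : Summable fun m : ℕ => e ^ m * g (m + a)) (K : ℕ) :
    ∑' m : ℕ, e ^ m * g (m + a) =
      ∑ j ∈ Finset.range K, e ^ j / (1 - e) ^ (j + 1) * Δ_[1] ^[j] g a +
        (e / (1 - e)) ^ K * ∑' m : ℕ, e ^ m * Δ_[1] ^[K] g (m + a) := by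
  have hsum : ∀ j, Summable fun m : ℕ => e ^ m * Δ_[1] ^[j] g (m + a) := fun j => by
    induction j with
    | zero => exact hg
    | succ j ih => simpa only [Function.iterate_succ_apply'] using summable_pow_mul_fwdDiff he ih
  induction K with
  | zero => simp
  | succ K ih =>
    have hcoeff (x : ℂ) : (e / (1 - e)) ^ K * (x / (1 - e)) = e ^ K / (1 - e) ^ (K + 1) * x := by
      rw [div_pow, pow_succ, div_mul_div_comm, mul_div_right_comm]
    rw [ih, tsum_pow_mul_eq_add_tsum_fwdDiff he1 (hsum K), Finset.sum_range_succ, mul_add, hcoeff,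
      ← mul_assoc, ← pow_succ, ← add_assoc]
    simp only [Function.iterate_succ_apply']

lemma hasDerivAt_iterate_fwdDiff {g g' : ℝ → ℂ} {a : ℝ}
    (hg : ∀ x, a < x → HasDerivAt g (g' x) x) (K : ℕ) {x : ℝ} (hx : a < x) :
    HasDerivAt (Δ_[1] ^[K] g) (Δ_[1] ^[K] g' x) x := by
  induction K generalizing x with
  | zero => exact hg x hx
  | succ K ih =>
    simp only [Function.iterate_succ_apply']
    exact ((ih (by linarith)).comp_add_const x 1).sub (ih hx)

lemma hasDerivAt_ofReal_cpow_neg (s : ℂ) {x : ℝ} (hx : 0 < x) :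
    HasDerivAt (fun y : ℝ => (y : ℂ) ^ (-s)) (-s * (x : ℂ) ^ (-(s + 1))) x := by
  have h := ((hasDerivAt_id (x : ℂ)).cpow_const (c := -s) (Or.inl (by simpa using hx))).comp_ofReal
  simpa [neg_add', sub_eq_add_neg, add_comm] using h

lemma norm_iterate_fwdDiff_cpow_neg_le (K : ℕ) {s : ℂ} (hs : 0 ≤ s.re + K) {x : ℝ} (hx : 0 < x) :
    ‖Δ_[1] ^[K] (fun y : ℝ => (y : ℂ) ^ (-s)) x‖ ≤
      (∏ j ∈ Finset.range K, ‖s + j‖) * x ^ (-(s.re + K)) := by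
  induction K generalizing s x with
  | zero => simp [norm_cpow_eq_rpow_re_of_pos hx]
  | succ K ih =>
    have hre : (s + 1).re + K = s.re + (K + 1 : ℕ) := by simp; ring
    have hderiv : ∀ y ∈ Set.Icc x (x + 1), HasDerivWithinAt
        (Δ_[1] ^[K] fun y : ℝ => (y : ℂ) ^ (-s))
        (-s * Δ_[1] ^[K] (fun y : ℝ => (y : ℂ) ^ (-(s + 1))) y) (Set.Icc x (x + 1)) y := by
      intro y hy
      have h := hasDerivAt_iterate_fwdDiff (fun z hz => hasDerivAt_ofReal_cpow_neg s hz) K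
        (hx.trans_le hy.1)
      rw [← smul_eq_mul, ← Pi.smul_apply, ← fwdDiff_iter_const_smul]
      exact h.hasDerivWithinAt
    have hbound : ∀ y ∈ Set.Icc x (x + 1),
        ‖-s * Δ_[1] ^[K] (fun y : ℝ => (y : ℂ) ^ (-(s + 1))) y‖ ≤
          (∏ j ∈ Finset.range (K + 1), ‖s + j‖) * x ^ (-(s.re + (K + 1 : ℕ))) := by
      intro y hy
      have hprod : ∏ j ∈ Finset.range (K + 1), ‖s + j‖ =
          ‖s‖ * ∏ j ∈ Finset.range K, ‖s + 1 + j‖ := by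
        rw [Finset.prod_range_succ', mul_comm]
        simp [add_assoc, add_comm (1 : ℂ)]
      rw [norm_mul, norm_neg, hprod, mul_assoc, ← hre]
      have hmono := Real.rpow_le_rpow_of_nonpos hx hy.1 (neg_nonpos.2 (hre ▸ hs))
      gcongr
      exact (ih (hre ▸ hs) (hx.trans_le hy.1)).trans (by gcongr)
    simpa only [Function.iterate_succ_apply', fwdDiff, add_sub_cancel_left, norm_one, mul_one]
      using (convex_Icc x (x + 1)).norm_image_sub_le_of_norm_hasDerivWithin_le hderiv hbound
        (Set.left_mem_Icc.2 (by linarith)) (Set.right_mem_Icc.2 (by linarith))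

lemma rpow_neg_le_rpow_neg_add_rpow_neg {x p q t : ℝ} (hx : 0 < x) (hp : p ≤ t) (hq : t ≤ q) :
    x ^ (-t) ≤ x ^ (-p) + x ^ (-q) := by
  rcases le_total 1 x with h | h
  · exact (Real.rpow_le_rpow_of_exponent_le h (neg_le_neg hp)).trans
      (le_add_of_nonneg_right (by positivity))
  · exact (Real.rpow_le_rpow_of_exponent_ge hx h (neg_le_neg hq)).trans
      (le_add_of_nonneg_left (by positivity))

lemma prod_norm_add_natCast_le (s : ℂ) (K : ℕ) :
    ∏ j ∈ Finset.range K, ‖s + j‖ ≤ (‖s‖ + K) ^ K := by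
  calc ∏ j ∈ Finset.range K, ‖s + j‖ ≤ ∏ _j ∈ Finset.range K, (‖s‖ + K) := by
        refine Finset.prod_le_prod (fun _ _ => norm_nonneg _) fun j hj => ?_
        refine (norm_add_le _ _).trans ?_
        rw [norm_natCast]
        gcongr
        exact (Finset.mem_range.1 hj).le
    _ = (‖s‖ + K) ^ K := by simp

lemma summable_natCast_add_rpow_neg {a p : ℝ} (ha : 0 < a) (hp : 1 < p) :
    Summable fun m : ℕ => (m + a) ^ (-p) := by
  refine ((Real.summable_one_div_nat_add_rpow a p).2 hp).congr fun m => ?_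
  rw [abs_of_pos (by positivity), Real.rpow_neg (by positivity), one_div]

lemma norm_iterate_fwdDiff_cpow_neg_le_pow_mul (K : ℕ) {q : ℝ} {s : ℂ} (hs : 2 ≤ s.re + K)
    (hq : s.re + K ≤ q) {x : ℝ} (hx : 0 < x) :
    ‖Δ_[1] ^[K] (fun y : ℝ => (y : ℂ) ^ (-s)) x‖ ≤
      (‖s‖ + K) ^ K * (x ^ (-2 : ℝ) + x ^ (-q)) := by
  refine (norm_iterate_fwdDiff_cpow_neg_le K (by linarith) hx).trans ?_
  gcongr
  · exact prod_norm_add_natCast_le s K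
  · exact rpow_neg_le_rpow_neg_add_rpow_neg hx hs hq

end SummationByParts

section GrowthOfDirichletSeries

open scoped fwdDiff

lemma differentiable_iterate_fwdDiff_cpow_neg (K : ℕ) {x : ℝ} (hx : 0 < x) :
    Differentiable ℂ fun s : ℂ => Δ_[1] ^[K] (fun y : ℝ => (y : ℂ) ^ (-s)) x := by
  induction K generalizing x with
  | zero =>
    exact differentiable_neg.const_cpow (Or.inl (ofReal_ne_zero.2 hx.ne'))
  | succ K ih =>
    simp only [Function.iterate_succ_apply']
    exact (ih (by positivity)).sub (ih hx)

lemma hasPolynomialGrowth_iterate_fwdDiff_cpow_neg (K : ℕ) {x : ℝ} (hx : 0 < x) :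
    HasPolynomialGrowth fun s : ℂ => Δ_[1] ^[K] (fun y : ℝ => (y : ℂ) ^ (-s)) x := fun B => by
  induction K generalizing x with
  | zero =>
    refine hasPolynomialGrowthOn_of_forall_norm_le (C := x ^ B + x ^ (-B)) fun s hs => ?_
    rw [Function.iterate_zero, id_eq, norm_cpow_eq_rpow_re_of_pos hx, neg_re]
    simpa using rpow_neg_le_rpow_neg_add_rpow_neg hx (abs_le.1 hs).1 (abs_le.1 hs).2
  | succ K ih =>
    simpa only [Function.iterate_succ_apply', fwdDiff, neg_one_mul, ← sub_eq_add_neg]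
      using (ih (by positivity : 0 < x + 1)).add ((ih hx).const_mul (-1))

lemma hasPolynomialGrowthOn_sum_range {f : ℕ → ℂ → ℂ} {S : Set ℂ}
    (hf : ∀ j, HasPolynomialGrowthOn (f j) S) (K : ℕ) :
    HasPolynomialGrowthOn (fun s => ∑ j ∈ Finset.range K, f j s) S := by
  induction K with
  | zero => exact hasPolynomialGrowthOn_of_forall_norm_le (C := 0) (by simp)
  | succ K ih => simpa only [Finset.sum_range_succ] using ih.add (hf K)

variable {e : ℂ} {a : ℝ}

lemma norm_pow_mul_iterate_fwdDiff_cpow_neg_le (he : ‖e‖ = 1) (ha : 0 < a) (K m : ℕ) {q : ℝ} {s : ℂ}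
    (hs : 2 ≤ s.re + K) (hq : s.re + K ≤ q) :
    ‖e ^ m * Δ_[1] ^[K] (fun y : ℝ => (y : ℂ) ^ (-s)) (m + a)‖ ≤
      (‖s‖ + K) ^ K * ((m + a) ^ (-2 : ℝ) + (m + a) ^ (-q)) := by
  rw [norm_mul, norm_pow, he, one_pow, one_mul]
  exact norm_iterate_fwdDiff_cpow_neg_le_pow_mul K hs hq (by positivity)

lemma differentiableOn_tsum_iterate_fwdDiff_cpow_neg (he : ‖e‖ = 1) (ha : 0 < a) (K : ℕ) :
    DifferentiableOn ℂ
      (fun s : ℂ => ∑' m : ℕ, e ^ m * Δ_[1] ^[K] (fun y : ℝ => (y : ℂ) ^ (-s)) (m + a))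
      {s | 2 < s.re + K} := by
  intro s hs
  have hV : IsOpen ({z : ℂ | 2 < z.re + K} ∩ ball 0 (‖s‖ + 1)) :=
    (isOpen_lt continuous_const (by fun_prop)).inter isOpen_ball
  have hsV : s ∈ {z : ℂ | 2 < z.re + K} ∩ ball 0 (‖s‖ + 1) := ⟨hs, by simp⟩
  have hs_lt := re_le_norm s
  refine ((differentiableOn_tsum_of_summable_norm
    (((summable_natCast_add_rpow_neg ha one_lt_two).add
      (summable_natCast_add_rpow_neg ha (p := ‖s‖ + 1 + K)
        (by linarith [hs.out]))).mul_left ((‖s‖ + 1 + K) ^ K))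
    (fun m => ((differentiable_iterate_fwdDiff_cpow_neg K
      (by positivity)).const_mul _).differentiableOn) hV fun m w hw => ?_).differentiableAt
    (hV.mem_nhds hsV)).differentiableWithinAt
  have hw_norm : ‖w‖ ≤ ‖s‖ + 1 := (mem_ball_zero_iff.1 hw.2).le
  refine (norm_pow_mul_iterate_fwdDiff_cpow_neg_le he ha K m hw.1.out.le
    (add_le_add_left ((re_le_norm w).trans hw_norm) _)).trans ?_
  gcongr

lemma hasPolynomialGrowthOn_tsum_iterate_fwdDiff_cpow_neg (he : ‖e‖ = 1) (ha : 0 < a) {K : ℕ}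
    {B : ℝ} (hK : |B| + 2 ≤ K) :
    HasPolynomialGrowthOn
      (fun s : ℂ => ∑' m : ℕ, e ^ m * Δ_[1] ^[K] (fun y : ℝ => (y : ℂ) ^ (-s)) (m + a))
      {s | |s.re| ≤ B} := by
  have hB := le_abs_self B
  have hsum := (summable_natCast_add_rpow_neg ha one_lt_two).add
    (summable_natCast_add_rpow_neg ha (p := |B| + K) (by linarith [abs_nonneg B]))
  set C := ∑' m : ℕ, ((m + a) ^ (-2 : ℝ) + (m + a) ^ (-(|B| + K)))
  refine ⟨2 * K + 1, ?_⟩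
  filter_upwards [eventually_comap_im_atTop_of_eventually_atTop (eventually_ge_atTop 2),
    eventually_comap_im_atTop_of_eventually_atTop (eventually_ge_atTop C),
    eventually_comap_im_atTop_of_eventually_atTop (eventually_ge_atTop (B + K))]
    with s h2 hCs hBK hs
  have hre := abs_le.1 hs
  have hnorm : ‖s‖ + K ≤ s.im ^ 2 := by
    have := norm_le_abs_re_add_abs_im s
    rw [abs_of_nonneg (by linarith : 0 ≤ s.im)] at this
    nlinarith
  calc ‖∑' m : ℕ, e ^ m * Δ_[1] ^[K] (fun y : ℝ => (y : ℂ) ^ (-s)) (m + a)‖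
      ≤ (‖s‖ + K) ^ K * C :=
        tsum_of_norm_bounded (hsum.hasSum.mul_left _) fun m =>
          norm_pow_mul_iterate_fwdDiff_cpow_neg_le he ha K m (by linarith) (by linarith)
    _ ≤ (s.im ^ 2) ^ K * s.im := by gcongr
    _ = s.im ^ (2 * K + 1) := by ring

lemma tsum_pow_mul_cpow_neg_eq (he : ‖e‖ = 1) (he1 : e ≠ 1) (ha : 0 < a) (K : ℕ) {s : ℂ}
    (hs : 1 < s.re) :
    ∑' m : ℕ, e ^ m * ((m + a : ℝ) : ℂ) ^ (-s) =
      ∑ j ∈ Finset.range K,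
          e ^ j / (1 - e) ^ (j + 1) * Δ_[1] ^[j] (fun y : ℝ => (y : ℂ) ^ (-s)) a +
        (e / (1 - e)) ^ K *
          ∑' m : ℕ, e ^ m * Δ_[1] ^[K] (fun y : ℝ => (y : ℂ) ^ (-s)) (m + a) := by
  refine tsum_pow_mul_eq_sum_add_tsum_iterate_fwdDiff (norm_ne_zero_iff.1 (he ▸ one_ne_zero)) he1
    (g := fun y : ℝ => (y : ℂ) ^ (-s)) (.of_norm_bounded (summable_natCast_add_rpow_neg ha hs)
      fun m => ?_) K
  rw [norm_mul, norm_pow, he, one_pow, one_mul, norm_cpow_eq_rpow_re_of_pos (by positivity), neg_re]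

lemma eqOn_of_forall_lt_re {f g : ℂ → ℂ} {U : Set ℂ} {c : ℝ} {z₀ : ℂ} (hU : IsPreconnected U)
    (hf : AnalyticOnNhd ℂ f U) (hg : AnalyticOnNhd ℂ g U) (hz₀ : z₀ ∈ U) (hre : c < z₀.re)
    (hfg : ∀ s : ℂ, c < s.re → f s = g s) : Set.EqOn f g U :=
  hf.eqOn_of_preconnected_of_eventuallyEq hg hU hz₀ <| by
    filter_upwards [(isOpen_lt continuous_const continuous_re).mem_nhds hre] with s hs
    exact hfg s hs

/-- Summing by parts `K` times continues the series to the half-plane `2 - K < re s`, at the cost of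
a factor `(‖s‖ + K) ^ K`. -/
theorem hasPolynomialGrowth_of_eq_tsum_pow_mul_cpow_neg (he : ‖e‖ = 1) (he1 : e ≠ 1) (ha : 0 < a)
    {f : ℂ → ℂ} (hf : AnalyticOnNhd ℂ f UpperHalfPlane.upperHalfPlaneSet)
    (hseries : ∀ s, 1 < s.re → f s = ∑' m : ℕ, e ^ m * ((m + a : ℝ) : ℂ) ^ (-s)) :
    HasPolynomialGrowth f := fun B => by
  obtain ⟨K, hK⟩ := exists_nat_ge (|B| + 3)
  have hK_pos : (0 : ℝ) < K := by linarith [abs_nonneg B]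
  set V : Set ℂ := {s | 2 < s.re + K} ∩ UpperHalfPlane.upperHalfPlaneSet
  have hVo : IsOpen V := (isOpen_lt continuous_const (by fun_prop)).inter
    UpperHalfPlane.isOpen_upperHalfPlaneSet
  have hVc : Convex ℝ V := by
    refine Convex.inter ?_ (convex_halfSpace_im_gt 0)
    simpa only [sub_lt_iff_lt_add] using convex_halfSpace_re_gt (2 - K)
  set g : ℂ → ℂ := fun s =>
    ∑ j ∈ Finset.range K,
        e ^ j / (1 - e) ^ (j + 1) * Δ_[1] ^[j] (fun y : ℝ => (y : ℂ) ^ (-s)) a +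
      (e / (1 - e)) ^ K *
        ∑' m : ℕ, e ^ m * Δ_[1] ^[K] (fun y : ℝ => (y : ℂ) ^ (-s)) (m + a)
  have hg_diff : DifferentiableOn ℂ g V :=
    (DifferentiableOn.fun_sum fun j _ =>
      ((differentiable_iterate_fwdDiff_cpow_neg j ha).const_mul _).differentiableOn).add
    (((differentiableOn_tsum_iterate_fwdDiff_cpow_neg he ha K).mono
      Set.inter_subset_left).const_mul _)
  have hfg : Set.EqOn g f V := by
    refine eqOn_of_forall_lt_re hVc.isPreconnected (hg_diff.analyticOnNhd hVo)
      (hf.mono Set.inter_subset_right) (c := 1) (z₀ := 2 + I) ⟨by simpa using hK_pos, by simp⟩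
      (by simp) fun s hs => ?_
    rw [hseries s hs, tsum_pow_mul_cpow_neg_eq he he1 ha K hs]
  have hg_growth : HasPolynomialGrowthOn g {s | |s.re| ≤ B} :=
    (hasPolynomialGrowthOn_sum_range (fun j =>
      (hasPolynomialGrowth_iterate_fwdDiff_cpow_neg j ha B).const_mul _) K).add
    ((hasPolynomialGrowthOn_tsum_iterate_fwdDiff_cpow_neg he ha (by linarith)).const_mul _)
  refine hg_growth.congr ?_
  filter_upwards [eventually_comap_im_atTop_mem_upperHalfPlaneSet] with s hs_im hs
  exact hfg ⟨by simp only [Set.mem_ofPred_eq]; linarith [(abs_le.1 hs).1, le_abs_self B], hs_im⟩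

end GrowthOfDirichletSeries

section LerchKernels

open Asymptotics

variable (lam alp : ℝ) {x : ℝ}

/-- The theta series `∑ n : ℤ, exp (2 π i lam n) * exp (-π (n + alp) ^ 2 x)`, whose Mellin transform
is the even part of the Lerch zeta-function. -/
noncomputable def lerchEvenKernel (x : ℝ) : ℂ :=
  cexp (-Real.pi * alp ^ 2 * x) * jacobiTheta₂ (lam + alp * I * x) (I * x)

/-- The theta series `∑ n : ℤ, exp (2 π i lam n) * (n + alp) * exp (-π (n + alp) ^ 2 x)`, whose
Mellin transform is the odd part of the Lerch zeta-function. -/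
noncomputable def lerchOddKernel (x : ℝ) : ℂ :=
  cexp (-Real.pi * alp ^ 2 * x) *
    (jacobiTheta₂' (lam + alp * I * x) (I * x) / (2 * Real.pi * I) +
      alp * jacobiTheta₂ (lam + alp * I * x) (I * x))

lemma exp_mul_jacobiTheta₂_term (n : ℤ) (x : ℝ) :
    cexp (-Real.pi * alp ^ 2 * x) * jacobiTheta₂_term n (lam + alp * I * x) (I * x) =
      cexp (2 * Real.pi * I * lam * n) * Real.exp (-Real.pi * (n + alp) ^ 2 * x) := by
  rw [jacobiTheta₂_term, ofReal_exp, ← Complex.exp_add, ← Complex.exp_add]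
  push_cast
  congr 1
  linear_combination (Real.pi * n ^ 2 * x + 2 * Real.pi * n * alp * x : ℂ) * I_sq

lemma hasSum_lerchEvenKernel (hx : 0 < x) :
    HasSum (fun n : ℤ => cexp (2 * Real.pi * I * lam * n) * Real.exp (-Real.pi * (n + alp) ^ 2 * x))
      (lerchEvenKernel lam alp x) := by
  have h := hasSum_jacobiTheta₂_term (lam + alp * I * x) (τ := I * x) (by simpa)
  exact (h.mul_left _).congr_fun fun n => (exp_mul_jacobiTheta₂_term lam alp n x).symm

lemma hasSum_lerchOddKernel (hx : 0 < x) :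
    HasSum (fun n : ℤ => cexp (2 * Real.pi * I * lam * n) * ((n + alp : ℝ) : ℂ) *
        Real.exp (-Real.pi * (n + alp) ^ 2 * x)) (lerchOddKernel lam alp x) := by
  have h := hasSum_jacobiTheta₂_term (lam + alp * I * x) (τ := I * x) (by simpa)
  have h' := hasSum_jacobiTheta₂'_term (lam + alp * I * x) (τ := I * x) (by simpa)
  refine (((h'.div_const (2 * Real.pi * I)).add (h.mul_left (alp : ℂ))).mul_left
    (cexp (-Real.pi * alp ^ 2 * x))).congr_fun fun n => ?_
  rw [jacobiTheta₂'_term, mul_right_comm, ← exp_mul_jacobiTheta₂_term]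
  push_cast
  field [two_pi_I_ne_zero]

lemma continuousOn_lerchEvenKernel : ContinuousOn (lerchEvenKernel lam alp) (Set.Ioi 0) := by
  refine continuousOn_of_forall_continuousAt fun x hx => .mul (by fun_prop) ?_
  exact (continuousAt_jacobiTheta₂ (lam + alp * I * x) (by simpa)).comp
    (f := fun u : ℝ => ((lam : ℂ) + alp * I * u, I * (u : ℂ))) (by fun_prop)

lemma continuousOn_lerchOddKernel : ContinuousOn (lerchOddKernel lam alp) (Set.Ioi 0) := by
  refine continuousOn_of_forall_continuousAt fun x hx => .mul (by fun_prop) (.add ?_ ?_)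
  · exact ((continuousAt_jacobiTheta₂' (lam + alp * I * x) (by simpa)).comp
      (f := fun u : ℝ => ((lam : ℂ) + alp * I * u, I * (u : ℂ))) (by fun_prop)).div_const _
  · exact continuousAt_const.mul ((continuousAt_jacobiTheta₂ (lam + alp * I * x) (by simpa)).comp
      (f := fun u : ℝ => ((lam : ℂ) + alp * I * u, I * (u : ℂ))) (by fun_prop))

lemma norm_exp_two_pi_mul_I_mul_ofReal_mul_intCast (n : ℤ) :
    ‖cexp (2 * Real.pi * I * lam * n)‖ = 1 := by
  simp [norm_exp]

lemma isBigO_rpow_of_hasSum_of_norm_eq {f : ℝ → ℂ} {u : ℝ → ℤ → ℂ} {G : ℝ → ℝ} {p : ℝ} (r : ℝ)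
    (hf : ∀ x, 0 < x → HasSum (u x) (f x)) (hu : ∀ x, 0 < x → ∑' n, ‖u x n‖ = G x) (hp : 0 < p)
    (hG : G =O[atTop] fun x => Real.exp (-p * x)) : f =O[atTop] fun x : ℝ => x ^ r := by
  refine (Eventually.isBigO ?_).trans (hG.trans (isLittleO_exp_neg_mul_rpow_atTop hp r).isBigO)
  filter_upwards [eventually_gt_atTop 0] with x hx
  rw [← hu x hx, ← (hf x hx).tsum_eq]
  exact norm_tsum_le_tsum_norm (hf x hx).summable.norm

variable {alp} in
lemma isBigO_atTop_lerchEvenKernel (halp : (alp : UnitAddCircle) ≠ 0) (r : ℝ) :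
    lerchEvenKernel lam alp =O[atTop] fun x : ℝ => x ^ r := by
  obtain ⟨p, hp, hG⟩ := HurwitzKernelBounds.isBigO_atTop_F_int_zero_sub (alp : UnitAddCircle)
  refine isBigO_rpow_of_hasSum_of_norm_eq r (fun x => hasSum_lerchEvenKernel lam alp)
    (fun x _ => ?_) hp hG
  simp only [HurwitzKernelBounds.F_int, Function.Periodic.lift_coe, HurwitzKernelBounds.f_int,
    if_neg halp, norm_mul, norm_exp_two_pi_mul_I_mul_ofReal_mul_intCast, norm_real,
    Real.norm_of_nonneg (Real.exp_pos _).le]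
  simp

lemma isBigO_atTop_lerchOddKernel (r : ℝ) :
    lerchOddKernel lam alp =O[atTop] fun x : ℝ => x ^ r := by
  obtain ⟨p, hp, hG⟩ := HurwitzKernelBounds.isBigO_atTop_F_int_one (alp : UnitAddCircle)
  refine isBigO_rpow_of_hasSum_of_norm_eq r (fun x => hasSum_lerchOddKernel lam alp)
    (fun x _ => ?_) hp hG
  simp only [HurwitzKernelBounds.F_int, Function.Periodic.lift_coe, HurwitzKernelBounds.f_int,
    norm_mul, norm_exp_two_pi_mul_I_mul_ofReal_mul_intCast, norm_real,
    Real.norm_of_nonneg (Real.exp_pos _).le]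
  simp

end LerchKernels

section LerchKernelSymmetries

variable (lam alp : ℝ) {x : ℝ}

lemma one_div_neg_I_mul_I_mul_cpow_half (hx : 0 < x) :
    1 / (-I * (I * (1 / x : ℝ))) ^ (1 / 2 : ℂ) = ((x ^ (1 / 2 : ℝ) : ℝ) : ℂ) := by
  rw [← mul_assoc, neg_mul, I_mul_I, neg_neg, one_mul,
    show (1 / 2 : ℂ) = ((1 / 2 : ℝ) : ℂ) by push_cast; rfl, ← ofReal_cpow (by positivity),
    one_div x, Real.inv_rpow hx.le]
  simp

lemma add_mul_I_mul_div_I_mul (hx : 0 < x) :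
    (lam + alp * I * (1 / x : ℝ)) / (I * (1 / x : ℝ)) = -((-alp : ℝ) + lam * I * x) := by
  have hx0 : (x : ℂ) ≠ 0 := ofReal_ne_zero.2 hx.ne'
  push_cast
  field_simp
  linear_combination (lam * x : ℂ) * I_sq

lemma exp_mul_exp_sq_div_I_mul (hx : 0 < x) :
    cexp (-Real.pi * alp ^ 2 * (1 / x : ℝ)) *
        cexp (-Real.pi * I * (lam + alp * I * (1 / x : ℝ)) ^ 2 / (I * (1 / x : ℝ))) =
      cexp (-2 * Real.pi * I * lam * alp) * cexp (-Real.pi * lam ^ 2 * x) := by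
  have hx0 : (x : ℂ) ≠ 0 := ofReal_ne_zero.2 hx.ne'
  rw [← Complex.exp_add, ← Complex.exp_add]
  congr 1
  push_cast
  field_simp
  linear_combination (-alp ^ 2 : ℂ) * I_sq

lemma lerchEvenKernel_one_div (hx : 0 < x) :
    lerchEvenKernel lam alp (1 / x) =
      cexp (-2 * Real.pi * I * lam * alp) * ((x ^ (1 / 2 : ℝ) : ℝ) : ℂ) *
        lerchEvenKernel (-alp) lam x := by
  have hτ : -1 / (I * (1 / x : ℝ)) = I * x := by push_cast; field_simp; simp
  rw [lerchEvenKernel, jacobiTheta₂_functional_equation, one_div_neg_I_mul_I_mul_cpow_half hx, hτ,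
    add_mul_I_mul_div_I_mul lam alp hx, jacobiTheta₂_neg_left, lerchEvenKernel]
  linear_combination ((x ^ (1 / 2 : ℝ) : ℝ) : ℂ) *
    jacobiTheta₂ ((-alp : ℝ) + lam * I * x) (I * x) * exp_mul_exp_sq_div_I_mul lam alp hx

lemma lerchOddKernel_one_div (hx : 0 < x) :
    lerchOddKernel lam alp (1 / x) =
      I * cexp (-2 * Real.pi * I * lam * alp) * ((x ^ (3 / 2 : ℝ) : ℝ) : ℂ) *
        lerchOddKernel (-alp) lam x := by
  have hx0 : (x : ℂ) ≠ 0 := ofReal_ne_zero.2 hx.ne'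
  have hτ : -1 / (I * (1 / x : ℝ)) = I * x := by push_cast; field_simp; simp
  have hpow : ((x ^ (3 / 2 : ℝ) : ℝ) : ℂ) = x * ((x ^ (1 / 2 : ℝ) : ℝ) : ℂ) := by
    rw [← ofReal_mul, show (3 / 2 : ℝ) = 1 + 1 / 2 by norm_num, Real.rpow_add hx, Real.rpow_one]
  have hcombine (X E T T' : ℂ) :
      X * E / (I * (1 / x : ℝ)) * (-T' - 2 * Real.pi * I * (lam + alp * I * (1 / x : ℝ)) * T) /
          (2 * Real.pi * I) + alp * (X * E * T) =
        E * X * x * I * (T' / (2 * Real.pi * I) + lam * T) := by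
    have hpi : (Real.pi : ℂ) ≠ 0 := ofReal_ne_zero.2 Real.pi_ne_zero
    push_cast
    field_simp
    linear_combination (-X * E * x * (T' + I * 2 * Real.pi * lam * T)) * I_sq
  rw [lerchOddKernel, jacobiTheta₂_functional_equation, jacobiTheta₂'_functional_equation,
    one_div_neg_I_mul_I_mul_cpow_half hx, hτ, add_mul_I_mul_div_I_mul lam alp hx,
    jacobiTheta₂_neg_left, jacobiTheta₂'_neg_left, hcombine, lerchOddKernel, hpow]
  linear_combination ((x ^ (1 / 2 : ℝ) : ℝ) : ℂ) * x * I *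
    (jacobiTheta₂' ((-alp : ℝ) + lam * I * x) (I * x) / (2 * Real.pi * I) +
      lam * jacobiTheta₂ ((-alp : ℝ) + lam * I * x) (I * x)) * exp_mul_exp_sq_div_I_mul lam alp hx

variable (x)

lemma exp_sq_add_one_mul_exp :
    cexp (-Real.pi * (alp + 1 : ℝ) ^ 2 * x) *
        cexp (-Real.pi * I * (I * x + 2 * (lam + alp * I * x))) =
      cexp (-2 * Real.pi * I * lam) * cexp (-Real.pi * alp ^ 2 * x) := by
  rw [← Complex.exp_add, ← Complex.exp_add]
  congr 1
  push_cast
  linear_combination (-Real.pi * x * (1 + 2 * alp) : ℂ) * I_sq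

lemma lerchEvenKernel_add_one :
    lerchEvenKernel lam (alp + 1) x =
      cexp (-2 * Real.pi * I * lam) * lerchEvenKernel lam alp x := by
  rw [lerchEvenKernel, show (lam + (alp + 1 : ℝ) * I * x : ℂ) = lam + alp * I * x + I * x by
    push_cast; ring, jacobiTheta₂_add_left', lerchEvenKernel]
  linear_combination jacobiTheta₂ (lam + alp * I * x) (I * x) * exp_sq_add_one_mul_exp lam alp x

lemma lerchOddKernel_add_one :
    lerchOddKernel lam (alp + 1) x =
      cexp (-2 * Real.pi * I * lam) * lerchOddKernel lam alp x := by
  have hcombine (E T T' : ℂ) : E * (T' - 2 * Real.pi * I * T) / (2 * Real.pi * I) +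
      (alp + 1 : ℝ) * (E * T) = E * (T' / (2 * Real.pi * I) + alp * T) := by
    have := two_pi_I_ne_zero
    push_cast
    field_simp
    ring
  rw [lerchOddKernel, show (lam + (alp + 1 : ℝ) * I * x : ℂ) = lam + alp * I * x + I * x by
    push_cast; ring, jacobiTheta₂_add_left', jacobiTheta₂'_add_left', hcombine, lerchOddKernel]
  linear_combination (jacobiTheta₂' (lam + alp * I * x) (I * x) / (2 * Real.pi * I) +
    alp * jacobiTheta₂ (lam + alp * I * x) (I * x)) * exp_sq_add_one_mul_exp lam alp x

lemma lerchEvenKernel_neg_neg : lerchEvenKernel (-lam) (-alp) x = lerchEvenKernel lam alp x := by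
  rw [lerchEvenKernel, show ((-lam : ℝ) + (-alp : ℝ) * I * x : ℂ) = -(lam + alp * I * x) by
    push_cast; ring, jacobiTheta₂_neg_left, lerchEvenKernel, ofReal_neg, neg_sq]

lemma lerchOddKernel_neg_neg : lerchOddKernel (-lam) (-alp) x = -lerchOddKernel lam alp x := by
  rw [lerchOddKernel, show ((-lam : ℝ) + (-alp : ℝ) * I * x : ℂ) = -(lam + alp * I * x) by
    push_cast; ring, jacobiTheta₂_neg_left, jacobiTheta₂'_neg_left, lerchOddKernel,
    ofReal_neg, neg_sq]
  ring

end LerchKernelSymmetries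

section LerchZeta

/-- The functional equation of the even theta kernel, in the form required by the abstract
Mellin-transform argument. -/
noncomputable def lerchEvenFEPair {lam alp : ℝ} (hlam : (lam : UnitAddCircle) ≠ 0)
    (halp : (alp : UnitAddCircle) ≠ 0) : WeakFEPair ℂ where
  f := lerchEvenKernel lam alp
  g := lerchEvenKernel (-alp) lam
  k := 1 / 2
  ε := cexp (-2 * Real.pi * I * lam * alp)
  f₀ := 0
  g₀ := 0
  hf_int := (continuousOn_lerchEvenKernel _ _).locallyIntegrableOn measurableSet_Ioi
  hg_int := (continuousOn_lerchEvenKernel _ _).locallyIntegrableOn measurableSet_Ioi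
  hk := by norm_num
  hε := Complex.exp_ne_zero _
  h_feq _ hx := lerchEvenKernel_one_div lam alp hx
  hf_top r := by simpa only [sub_zero] using isBigO_atTop_lerchEvenKernel lam halp r
  hg_top r := by simpa only [sub_zero] using isBigO_atTop_lerchEvenKernel (-alp) hlam r

/-- The functional equation of the odd theta kernel, in the form required by the abstract
Mellin-transform argument. -/
noncomputable def lerchOddFEPair (lam alp : ℝ) : WeakFEPair ℂ where
  f := lerchOddKernel lam alp
  g := lerchOddKernel (-alp) lam
  k := 3 / 2
  ε := I * cexp (-2 * Real.pi * I * lam * alp)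
  f₀ := 0
  g₀ := 0
  hf_int := (continuousOn_lerchOddKernel _ _).locallyIntegrableOn measurableSet_Ioi
  hg_int := (continuousOn_lerchOddKernel _ _).locallyIntegrableOn measurableSet_Ioi
  hk := by norm_num
  hε := mul_ne_zero I_ne_zero (Complex.exp_ne_zero _)
  h_feq _ hx := lerchOddKernel_one_div lam alp hx
  hf_top r := by simpa only [sub_zero] using isBigO_atTop_lerchOddKernel lam alp r
  hg_top r := by simpa only [sub_zero] using isBigO_atTop_lerchOddKernel (-alp) lam r

/-- The even part `∑ n : ℤ, exp (2 π i lam n) / |n + alp| ^ s` of the Lerch zeta-function, continued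
to all `s` as a Mellin transform. -/
noncomputable def lerchZetaEven (lam alp : ℝ) (s : ℂ) : ℂ :=
  mellin (lerchEvenKernel lam alp) (s / 2) * (Gammaℝ s)⁻¹

/-- The odd part `∑ n : ℤ, exp (2 π i lam n) * sign (n + alp) / |n + alp| ^ s` of the Lerch
zeta-function, continued to all `s` as a Mellin transform. -/
noncomputable def lerchZetaOdd (lam alp : ℝ) (s : ℂ) : ℂ :=
  mellin (lerchOddKernel lam alp) ((s + 1) / 2) * (Gammaℝ (s + 1))⁻¹

/-- The Lerch zeta-function `∑ exp (2 π i lam n) / (n + alp) ^ s`, the sum being over the integers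
`n > -alp`, continued analytically in `s`. -/
noncomputable def lerchZeta (lam alp : ℝ) (s : ℂ) : ℂ :=
  (lerchZetaEven lam alp s + lerchZetaOdd lam alp s) / 2

variable {lam alp : ℝ}

lemma differentiable_lerchZetaEven (hlam : (lam : UnitAddCircle) ≠ 0)
    (halp : (alp : UnitAddCircle) ≠ 0) : Differentiable ℂ (lerchZetaEven lam alp) := by
  have hP : IsStrongFEPair (lerchEvenFEPair hlam halp) := ⟨rfl, rfl⟩
  have hmellin : Differentiable ℂ (mellin (lerchEvenKernel lam alp)) :=
    hP.Λ_eq ▸ hP.differentiable_Λ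
  exact (hmellin.comp (differentiable_id.div_const 2)).mul differentiable_Gammaℝ_inv

variable (lam alp) in
lemma differentiable_lerchZetaOdd : Differentiable ℂ (lerchZetaOdd lam alp) := by
  have hP : IsStrongFEPair (lerchOddFEPair lam alp) := ⟨rfl, rfl⟩
  have hmellin : Differentiable ℂ (mellin (lerchOddKernel lam alp)) :=
    hP.Λ_eq ▸ hP.differentiable_Λ
  have hadd : Differentiable ℂ fun s : ℂ => s + 1 := by fun_prop
  exact (hmellin.comp (hadd.div_const 2)).mul (differentiable_Gammaℝ_inv.comp hadd)

lemma differentiable_lerchZeta (hlam : (lam : UnitAddCircle) ≠ 0)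
    (halp : (alp : UnitAddCircle) ≠ 0) : Differentiable ℂ (lerchZeta lam alp) :=
  ((differentiable_lerchZetaEven hlam halp).add (differentiable_lerchZetaOdd lam alp)).div_const 2

lemma lerchZetaEven_one_sub (hlam : (lam : UnitAddCircle) ≠ 0) (halp : (alp : UnitAddCircle) ≠ 0)
    {s : ℂ} (hs : ∀ n : ℕ, s ≠ -n) :
    lerchZetaEven lam alp (1 - s) = cexp (-2 * Real.pi * I * lam * alp) *
      (Gammaℂ s * cos (Real.pi * s / 2)) * lerchZetaEven (-alp) lam s := by
  have hP : IsStrongFEPair (lerchEvenFEPair hlam halp) := ⟨rfl, rfl⟩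
  have hmellin : mellin (lerchEvenKernel lam alp) ((1 / 2 : ℝ) - s / 2) =
      cexp (-2 * Real.pi * I * lam * alp) * mellin (lerchEvenKernel (-alp) lam) (s / 2) := by
    have h := (lerchEvenFEPair hlam halp).functional_equation (s / 2)
    rwa [hP.Λ_eq, hP.symm_Λ_eq] at h
  rw [lerchZetaEven, lerchZetaEven, inv_Gammaℝ_one_sub hs,
    show (1 - s) / 2 = (1 / 2 : ℝ) - s / 2 by push_cast; ring, hmellin]
  ring

variable (lam alp) in
lemma lerchZetaOdd_one_sub {s : ℂ} (hs : ∀ n : ℕ, s ≠ -n) :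
    lerchZetaOdd lam alp (1 - s) = I * cexp (-2 * Real.pi * I * lam * alp) *
      (Gammaℂ s * sin (Real.pi * s / 2)) * lerchZetaOdd (-alp) lam s := by
  have hP : IsStrongFEPair (lerchOddFEPair lam alp) := ⟨rfl, rfl⟩
  have hmellin : mellin (lerchOddKernel lam alp) ((3 / 2 : ℝ) - (s + 1) / 2) =
      I * cexp (-2 * Real.pi * I * lam * alp) *
        mellin (lerchOddKernel (-alp) lam) ((s + 1) / 2) := by
    have h := (lerchOddFEPair lam alp).functional_equation ((s + 1) / 2)
    rwa [hP.Λ_eq, hP.symm_Λ_eq] at h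
  rw [lerchZetaOdd, lerchZetaOdd, show 1 - s + 1 = 2 - s by ring, inv_Gammaℝ_two_sub hs,
    show (2 - s) / 2 = (3 / 2 : ℝ) - (s + 1) / 2 by push_cast; ring, hmellin]
  ring

variable (lam alp) in
lemma lerchZeta_neg_neg (s : ℂ) :
    lerchZeta (-lam) (-alp) s = (lerchZetaEven lam alp s - lerchZetaOdd lam alp s) / 2 := by
  have heven : lerchEvenKernel (-lam) (-alp) = lerchEvenKernel lam alp :=
    funext (lerchEvenKernel_neg_neg lam alp)
  have hodd : lerchOddKernel (-lam) (-alp) = fun x => (-1 : ℂ) • lerchOddKernel lam alp x :=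
    funext fun x => by rw [lerchOddKernel_neg_neg, neg_one_smul]
  rw [lerchZeta, lerchZetaEven, lerchZetaOdd, heven, hodd, mellin_const_smul, lerchZetaEven,
    lerchZetaOdd, smul_eq_mul]
  ring

variable (lam alp) in
lemma lerchZeta_add_one (s : ℂ) :
    lerchZeta lam (alp + 1) s = cexp (-2 * Real.pi * I * lam) * lerchZeta lam alp s := by
  have heven : lerchEvenKernel lam (alp + 1) =
      fun x => cexp (-2 * Real.pi * I * lam) • lerchEvenKernel lam alp x :=
    funext (lerchEvenKernel_add_one lam alp)
  have hodd : lerchOddKernel lam (alp + 1) =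
      fun x => cexp (-2 * Real.pi * I * lam) • lerchOddKernel lam alp x :=
    funext (lerchOddKernel_add_one lam alp)
  rw [lerchZeta, lerchZetaEven, lerchZetaOdd, heven, hodd, mellin_const_smul, mellin_const_smul,
    lerchZeta, lerchZetaEven, lerchZetaOdd, smul_eq_mul, smul_eq_mul]
  ring

theorem lerchZeta_one_sub (hlam : (lam : UnitAddCircle) ≠ 0) (halp : (alp : UnitAddCircle) ≠ 0)
    {s : ℂ} (hs : ∀ n : ℕ, s ≠ -n) :
    lerchZeta lam alp (1 - s) = cexp (-2 * Real.pi * I * lam * alp) * (Gammaℂ s / 2) *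
      (cexp (Real.pi * I * s / 2) * lerchZeta (-alp) lam s +
        cexp (-(Real.pi * I * s / 2)) * lerchZeta alp (-lam) s) := by
  have hexp : cexp (Real.pi * I * s / 2) =
      cos (Real.pi * s / 2) + sin (Real.pi * s / 2) * I := by
    rw [← Complex.exp_mul_I]
    congr 1
    ring
  have hexp_neg : cexp (-(Real.pi * I * s / 2)) =
      cos (Real.pi * s / 2) - sin (Real.pi * s / 2) * I := by
    rw [show -(Real.pi * I * s / 2) = -(Real.pi * s / 2) * I by ring, Complex.exp_mul_I,
      Complex.cos_neg, Complex.sin_neg]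
    ring
  have hneg := lerchZeta_neg_neg (-alp) lam s
  rw [neg_neg] at hneg
  rw [lerchZeta, lerchZetaEven_one_sub hlam halp hs, lerchZetaOdd_one_sub lam alp hs, hneg, hexp,
    hexp_neg, lerchZeta]
  ring

lemma summable_norm_exp_div_abs_int_add_rpow (lam alp : ℝ) {σ : ℝ} (hσ : 1 < σ) :
    Summable fun n : ℤ => ‖cexp (2 * Real.pi * I * lam * n)‖ / |n + alp| ^ σ := by
  simpa only [norm_exp_two_pi_mul_I_mul_ofReal_mul_intCast] using
    (Real.summable_one_div_int_add_rpow alp σ).2 hσ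

lemma intCast_add_ne_zero (halp : (alp : UnitAddCircle) ≠ 0) (n : ℤ) : (n + alp : ℝ) ≠ 0 := by
  intro h
  exact halp (AddCircle.coe_eq_zero_iff 1 |>.2 ⟨-n, by simp; linarith⟩)

variable (lam) in
lemma hasSum_lerchZetaEven (halp : (alp : UnitAddCircle) ≠ 0) {s : ℂ} (hs : 1 < s.re) :
    HasSum (fun n : ℤ => cexp (2 * Real.pi * I * lam * n) / (|n + alp| : ℝ) ^ s)
      (lerchZetaEven lam alp s) := by
  have hpos : 0 < s.re := one_pos.trans hs
  have h := hasSum_mellin_pi_mul_sq hpos (r := fun n : ℤ => n + alp) (fun t ht => by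
    simpa only [intCast_add_ne_zero halp, if_false] using hasSum_lerchEvenKernel lam alp ht)
    (summable_norm_exp_div_abs_int_add_rpow lam alp hs)
  refine (h.mul_right (Gammaℝ s)⁻¹).congr_fun fun n => ?_
  have := Gammaℝ_ne_zero_of_re_pos hpos
  field_simp

variable (lam alp) in
lemma hasSum_lerchZetaOdd {s : ℂ} (hs : 1 < s.re) :
    HasSum (fun n : ℤ => cexp (2 * Real.pi * I * lam * n) * (SignType.sign (n + alp) : ℂ) /
      (|n + alp| : ℝ) ^ s) (lerchZetaOdd lam alp s) := by
  have hpos : 0 < s.re := one_pos.trans hs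
  have h := hasSum_mellin_pi_mul_sq' hpos (r := fun n : ℤ => n + alp)
    (fun t ht => hasSum_lerchOddKernel lam alp ht)
    (summable_norm_exp_div_abs_int_add_rpow lam alp hs)
  refine (h.mul_right (Gammaℝ (s + 1))⁻¹).congr_fun fun n => ?_
  have : Gammaℝ (s + 1) ≠ 0 := Gammaℝ_ne_zero_of_re_pos (by rw [add_re, one_re]; linarith)
  field_simp

lemma coe_unitAddCircle_ne_zero_of_mem_Ioo (halp : alp ∈ Set.Ioo (0 : ℝ) 1) :
    (alp : UnitAddCircle) ≠ 0 := by
  rw [Ne, AddCircle.coe_eq_zero_iff_of_mem_Ico ⟨halp.1.le, by simpa using halp.2⟩]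
  exact halp.1.ne'

variable (lam) in
theorem hasSum_lerchZeta (halp : alp ∈ Set.Ioo (0 : ℝ) 1) {s : ℂ} (hs : 1 < s.re) :
    HasSum (fun m : ℕ => cexp (2 * Real.pi * I * lam * m) / ((m : ℂ) + alp) ^ s)
      (lerchZeta lam alp s) := by
  have h := ((hasSum_lerchZetaEven lam (coe_unitAddCircle_ne_zero_of_mem_Ioo halp) hs).add
    (hasSum_lerchZetaOdd lam alp hs)).div_const 2
  refine ((Nat.cast_injective.hasSum_iff fun n hn => ?_).2 h).congr_fun fun m => ?_
  · have hn0 : n < 0 := by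
      by_contra! hn0
      exact hn ⟨n.toNat, Int.toNat_of_nonneg hn0⟩
    have hn1 : (n : ℝ) ≤ -1 := mod_cast Int.le_sub_one_of_lt hn0
    rw [sign_neg (by linarith [halp.2])]
    simp only [SignType.coe_neg_one]
    ring
  · have hpos : 0 < (m : ℝ) + alp := add_pos_of_nonneg_of_pos m.cast_nonneg halp.1
    simp only [Function.comp_apply, Int.cast_natCast]
    rw [sign_pos hpos, abs_of_pos hpos]
    push_cast
    simp

end LerchZeta

section LerchFunctionalEquation

open scoped ComplexConjugate

lemma differentiableAt_Gammaℂ {s : ℂ} (hs : ∀ n : ℕ, s ≠ -n) : DifferentiableAt ℂ Gammaℂ s := by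
  have hpow : DifferentiableAt ℂ (fun s : ℂ => 2 * (2 * Real.pi : ℂ) ^ (-s)) s :=
    (differentiableAt_id.neg.const_cpow (Or.inl (by simp [Real.pi_ne_zero]))).const_mul 2
  exact hpow.mul (differentiableAt_Gamma s hs)

lemma Gammaℂ_ne_zero {s : ℂ} (hs : ∀ n : ℕ, s ≠ -n) : Gammaℂ s ≠ 0 := by
  rw [Gammaℂ_def]
  exact mul_ne_zero (by simp [cpow_eq_zero_iff, Real.pi_ne_zero]) (Gamma_ne_zero hs)

lemma ne_neg_natCast_of_im_ne_zero {s : ℂ} (hs : s.im ≠ 0) (n : ℕ) : s ≠ -n := by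
  rintro rfl
  simp at hs

lemma one_sub_ne_neg_natCast_of_mem_upperHalfPlaneSet {z : ℂ}
    (hz : z ∈ UpperHalfPlane.upperHalfPlaneSet) (n : ℕ) : 1 - z ≠ -n :=
  ne_neg_natCast_of_im_ne_zero (by simpa using (show 0 < z.im from hz).ne') n

lemma Gammaℂ_one_sub_ne_zero {z : ℂ} (hz : z ∈ UpperHalfPlane.upperHalfPlaneSet) :
    Gammaℂ (1 - z) ≠ 0 :=
  Gammaℂ_ne_zero (one_sub_ne_neg_natCast_of_mem_upperHalfPlaneSet hz)

lemma analyticOnNhd_Gammaℂ_one_sub :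
    AnalyticOnNhd ℂ (fun z => Gammaℂ (1 - z)) UpperHalfPlane.upperHalfPlaneSet :=
  DifferentiableOn.analyticOnNhd (fun z hz =>
    ((differentiableAt_Gammaℂ (one_sub_ne_neg_natCast_of_mem_upperHalfPlaneSet hz)).comp z
      ((differentiableAt_const 1).sub differentiableAt_id)).differentiableWithinAt)
    UpperHalfPlane.isOpen_upperHalfPlaneSet

variable {lam alp : ℝ}

lemma IsLerch.analyticOnNhd {F : ℂ → ℂ} (hF : IsLerch lam alp F) : AnalyticOnNhd ℂ F {1}ᶜ :=
  DifferentiableOn.analyticOnNhd (fun z hz => (hF.1 z hz).differentiableWithinAt)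
    isOpen_compl_singleton

lemma IsLerch.eqOn {F G : ℂ → ℂ} (hF : IsLerch lam alp F) (hG : IsLerch lam alp G) :
    Set.EqOn F G {1}ᶜ :=
  eqOn_of_forall_lt_re (c := 1)
    (isConnected_compl_singleton_of_one_lt_rank (by simp) 1).isPreconnected
    hF.analyticOnNhd hG.analyticOnNhd (z₀ := 2) (by simp) (by simp)
    fun s hs => by rw [hF.2 s hs, hG.2 s hs]

lemma upperHalfPlaneSet_subset_compl_singleton_one :
    UpperHalfPlane.upperHalfPlaneSet ⊆ ({1}ᶜ : Set ℂ) := by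
  rintro z hz rfl
  simp at hz

lemma IsLerch.eqOn_schwarzReflection {F G : ℂ → ℂ} (hF : IsLerch lam alp F)
    (hG : IsLerch lam alp G) :
    Set.EqOn (schwarzReflection F) (schwarzReflection G) UpperHalfPlane.upperHalfPlaneSet :=
  fun z hz => congrArg conj <| hF.eqOn hG <| upperHalfPlaneSet_subset_compl_singleton_one <| by
    simpa using hz

theorem IsLerch.hasPolynomialGrowth (hlam : (lam : UnitAddCircle) ≠ 0) (halp : 0 < alp)
    {F : ℂ → ℂ} (hF : IsLerch lam alp F) : HasPolynomialGrowth F := by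
  have he : ‖cexp (2 * Real.pi * I * lam)‖ = 1 := by
    simpa using norm_exp_two_pi_mul_I_mul_ofReal_mul_intCast lam 1
  have he1 : cexp (2 * Real.pi * I * lam) ≠ 1 := by
    rw [Ne, Complex.exp_eq_one_iff]
    rintro ⟨n, hn⟩
    refine hlam ((AddCircle.coe_eq_zero_iff 1).2 ⟨n, ?_⟩)
    rw [mul_comm (n : ℂ), mul_right_inj' two_pi_I_ne_zero] at hn
    simpa using (ofReal_injective (by simpa using hn)).symm
  refine hasPolynomialGrowth_of_eq_tsum_pow_mul_cpow_neg he he1 halp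
    (hF.analyticOnNhd.mono upperHalfPlaneSet_subset_compl_singleton_one) fun s hs => ?_
  rw [hF.2 s hs, lerchSeries]
  refine tsum_congr fun m => ?_
  rw [← Complex.exp_nat_mul, cpow_neg, div_eq_mul_inv, mul_comm (m : ℂ)]
  push_cast
  rfl

lemma isLerch_lerchZeta (hlam : (lam : UnitAddCircle) ≠ 0) (halp : alp ∈ Set.Ioo (0 : ℝ) 1) :
    IsLerch lam alp (lerchZeta lam alp) :=
  ⟨fun s _ => differentiable_lerchZeta hlam (coe_unitAddCircle_ne_zero_of_mem_Ioo halp) s,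
    fun _ hs => (hasSum_lerchZeta lam halp hs).tsum_eq.symm⟩

lemma isLerch_riemannZeta : IsLerch 1 1 riemannZeta := by
  refine ⟨fun s hs => differentiableAt_riemannZeta hs, fun s hs => ?_⟩
  rw [zeta_eq_tsum_one_div_nat_add_one_cpow hs, lerchSeries]
  refine tsum_congr fun m => ?_
  rw [ofReal_one, mul_one, mul_comm, Complex.exp_nat_mul_two_pi_mul_I]

lemma conj_exp_div_natCast_add_cpow_conj (lam : ℝ) (halp : 0 < alp) (m : ℕ) (s : ℂ) :
    conj (cexp (2 * Real.pi * I * lam * m) / ((m : ℂ) + alp) ^ conj s) =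
      cexp (2 * Real.pi * I * (-lam : ℝ) * m) / ((m : ℂ) + alp) ^ s := by
  have hpos : 0 < m + alp := by positivity
  rw [map_div₀, ← exp_conj, ← ofReal_natCast, ← ofReal_add, cpow_conj, conj_conj, conj_ofReal]
  · simp [conj_ofNat]
  · rw [arg_ofReal_of_nonneg hpos.le]
    exact Real.pi_ne_zero.symm

theorem conj_lerchZeta_conj (hlam : (lam : UnitAddCircle) ≠ 0) (halp : alp ∈ Set.Ioo (0 : ℝ) 1)
    (s : ℂ) : conj (lerchZeta lam alp (conj s)) = lerchZeta (-lam) alp s := by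
  have halp0 := coe_unitAddCircle_ne_zero_of_mem_Ioo halp
  have hdiff : Differentiable ℂ (conj ∘ lerchZeta lam alp ∘ conj) := fun s => by
    simpa using (differentiable_lerchZeta hlam halp0 (conj s)).conj_conj
  have hdiff_neg := differentiable_lerchZeta (lam := -lam) (by simpa using hlam) halp0
  refine eqOn_of_forall_lt_re (c := 1) isPreconnected_univ (fun z _ => hdiff.analyticAt z)
    (fun z _ => hdiff_neg.analyticAt z) (Set.mem_univ 2) (by simp) (fun s hs => ?_) (Set.mem_univ s)
  have h := (hasSum_lerchZeta lam halp (s := conj s) (by simpa)).map (starRingEnd ℂ)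
    continuous_conj
  refine (h.congr_fun fun m => ?_).unique (hasSum_lerchZeta (-lam) halp hs)
  exact (conj_exp_div_natCast_add_cpow_conj lam halp.1 m s).symm

lemma schwarzReflection_lerchZeta (hlam : (lam : UnitAddCircle) ≠ 0)
    (halp : alp ∈ Set.Ioo (0 : ℝ) 1) (z : ℂ) :
    schwarzReflection (lerchZeta lam alp) z = lerchZeta (-lam) alp (1 - z) := by
  rw [schwarzReflection, ← conj_lerchZeta_conj hlam halp, map_sub, map_one]

theorem lerchZeta_self_eq_mul_schwarzReflection_add (hlam : lam ∈ Set.Ioo (0 : ℝ) 1) {z : ℂ}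
    (hz : ∀ n : ℕ, 1 - z ≠ -n) :
    lerchZeta lam lam z =
      cexp (-2 * Real.pi * I * lam * lam) * (Gammaℂ (1 - z) / 2) *
          cexp (Real.pi * I * (1 - z) / 2) *
        (schwarzReflection (lerchZeta lam lam) z + cexp (Real.pi * I * z) *
          (-cexp (2 * Real.pi * I * lam) *
            schwarzReflection (lerchZeta (-lam) (1 - lam)) z)) := by
  have hlam0 := coe_unitAddCircle_ne_zero_of_mem_Ioo hlam
  have hshift : lerchZeta lam (-lam) (1 - z) =
      cexp (2 * Real.pi * I * lam) * lerchZeta lam (1 - lam) (1 - z) := by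
    rw [sub_eq_neg_add 1 lam, lerchZeta_add_one, ← mul_assoc, ← Complex.exp_add]
    ring_nf
    simp
  have hexp : cexp (-(Real.pi * I * (1 - z) / 2)) =
      -(cexp (Real.pi * I * (1 - z) / 2) * cexp (Real.pi * I * z)) := by
    rw [← Complex.exp_add, ← neg_one_mul (cexp _), ← exp_neg_pi_mul_I, ← Complex.exp_add]
    ring_nf
  have hFE := lerchZeta_one_sub hlam0 hlam0 hz
  rw [sub_sub_cancel, hexp, hshift] at hFE
  rw [hFE, schwarzReflection_lerchZeta hlam0 hlam,
    schwarzReflection_lerchZeta (by simpa using hlam0) ⟨by linarith [hlam.2], by linarith [hlam.1]⟩,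
    neg_neg]
  ring

theorem exists_forall_half_le_norm_lerchSeries (lam : ℝ) (halp0 : 0 < alp) (halp1 : alp ≤ 1) :
    ∃ σ : ℝ, 1 < σ ∧ ∀ s : ℂ, s.re = σ → 1 / 2 ≤ ‖lerchSeries lam alp s‖ := by
  have hsum : Summable fun m : ℕ => (m + (1 + alp)) ^ (-2 : ℝ) :=
    summable_natCast_add_rpow_neg (by linarith) one_lt_two
  have hlim : Tendsto (fun p : ℝ => (1 + alp) ^ p * ∑' m : ℕ, (m + (1 + alp)) ^ (-2 : ℝ)) atBot
      (𝓝 0) := by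
    simpa using (tendsto_rpow_atBot_of_base_gt_one _ (lt_add_of_pos_right 1 halp0)).mul_const _
  obtain ⟨p, hp, hp0⟩ := ((hlim.eventually_lt_const (one_half_pos (α := ℝ))).and
    (eventually_le_atBot 0)).exists
  refine ⟨2 - p, by linarith, fun s hs => ?_⟩
  have hnorm (m : ℕ) : ‖cexp (2 * Real.pi * I * lam * m) / ((m : ℂ) + alp) ^ s‖ =
      (m + alp) ^ (p - 2) := by
    have hexp := norm_exp_two_pi_mul_I_mul_ofReal_mul_intCast lam m
    rw [Int.cast_natCast] at hexp
    rw [norm_div, hexp, ← ofReal_natCast, ← ofReal_add,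
      norm_cpow_eq_rpow_re_of_pos (by positivity), hs, one_div, ← Real.rpow_neg (by positivity),
      neg_sub]
  have htail (m : ℕ) : ‖cexp (2 * Real.pi * I * lam * (m + 1 : ℕ)) / (((m + 1 : ℕ) : ℂ) + alp) ^ s‖
      ≤ (1 + alp) ^ p * (m + (1 + alp)) ^ (-2 : ℝ) := by
    rw [hnorm, sub_eq_add_neg, Real.rpow_add (by positivity), Nat.cast_add_one, add_assoc]
    exact mul_le_mul_of_nonneg_right (Real.rpow_le_rpow_of_nonpos (by linarith)
      (le_add_of_nonneg_left m.cast_nonneg) hp0) (by positivity)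
  have hsummable : Summable fun m : ℕ => cexp (2 * Real.pi * I * lam * m) / ((m : ℂ) + alp) ^ s :=
    (summable_nat_add_iff 1).1 (.of_norm_bounded (hsum.mul_left _) htail)
  have hhead : 1 ≤ ‖cexp (2 * Real.pi * I * lam * (0 : ℕ)) / (((0 : ℕ) : ℂ) + alp) ^ s‖ := by
    rw [hnorm, Nat.cast_zero, zero_add]
    exact Real.one_le_rpow_of_pos_of_le_one_of_nonpos halp0 halp1 (by linarith)
  have hrest := tsum_of_norm_bounded (hsum.hasSum.mul_left _) htail
  rw [lerchSeries, hsummable.tsum_eq_zero_add]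
  linarith [norm_sub_le_norm_add (cexp (2 * Real.pi * I * lam * (0 : ℕ)) /
    (((0 : ℕ) : ℂ) + alp) ^ s) (∑' m : ℕ, cexp (2 * Real.pi * I * lam * (m + 1 : ℕ)) /
      (((m + 1 : ℕ) : ℂ) + alp) ^ s)]

end LerchFunctionalEquation

section AlmostSymmetryOfLerch

open scoped ComplexConjugate

lemma riemannZeta_eq_Gammaℂ_mul_cos_mul_schwarzReflection {z : ℂ} (hz : ∀ n : ℕ, 1 - z ≠ -n)
    (hz0 : z ≠ 0) :
    riemannZeta z =
      Gammaℂ (1 - z) * cos (Real.pi * (1 - z) / 2) * schwarzReflection riemannZeta z := by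
  have hFE := riemannZeta_one_sub hz (by simpa using hz0)
  rw [sub_sub_cancel] at hFE
  rw [hFE, schwarzReflection, ← riemannZeta_conj, Gammaℂ_def, map_sub, map_one, conj_conj]

lemma cos_pi_mul_div_two_ne_zero {s : ℂ} (hs : s.im ≠ 0) : cos (Real.pi * s / 2) ≠ 0 := by
  refine cos_ne_zero_iff.2 fun k hk => hs ?_
  have hs_eq : s = (2 * k + 1 : ℝ) := by
    have hpi : (Real.pi : ℂ) ≠ 0 := ofReal_ne_zero.2 Real.pi_ne_zero
    field_simp at hk
    simpa using hk
  rw [hs_eq, ofReal_im]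

theorem IsLerch.hasAlmostSymmetricZeros_one {F : ℂ → ℂ} (hF : IsLerch 1 1 F) :
    HasAlmostSymmetricZeros F := by
  have hsub := upperHalfPlaneSet_subset_compl_singleton_one
  refine hasAlmostSymmetricZeros_of_eqOn_mul_schwarzReflection
    (M := fun z => Gammaℂ (1 - z) * cos (Real.pi * (1 - z) / 2)) (hF.analyticOnNhd.mono hsub)
    (analyticOnNhd_Gammaℂ_one_sub.mul ?_) (fun z hz => ?_) fun z hz => ?_
  · exact fun z _ => by fun_prop
  · exact mul_ne_zero (Gammaℂ_one_sub_ne_zero hz)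
      (cos_pi_mul_div_two_ne_zero (by simpa using (show 0 < z.im from hz).ne'))
  · rw [Pi.mul_apply, hF.eqOn isLerch_riemannZeta (hsub hz),
      hF.eqOn_schwarzReflection isLerch_riemannZeta hz]
    refine riemannZeta_eq_Gammaℂ_mul_cos_mul_schwarzReflection
      (one_sub_ne_neg_natCast_of_mem_upperHalfPlaneSet hz) ?_
    rintro rfl
    simp at hz

theorem IsLerch.hasAlmostSymmetricZeros_of_lt_one {lam : ℝ} (hlam : lam ∈ Set.Ioo (0 : ℝ) 1)
    {F : ℂ → ℂ} (hF : IsLerch lam lam F) : HasAlmostSymmetricZeros F := by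
  have hlam0 := coe_unitAddCircle_ne_zero_of_mem_Ioo hlam
  have hneg0 : ((-lam : ℝ) : UnitAddCircle) ≠ 0 := by simpa using hlam0
  have hsub_mem : 1 - lam ∈ Set.Ioo (0 : ℝ) 1 := ⟨by linarith [hlam.2], by linarith [hlam.1]⟩
  have hsub := upperHalfPlaneSet_subset_compl_singleton_one
  have hL := isLerch_lerchZeta hlam0 hlam
  have hL_dual := isLerch_lerchZeta hneg0 hsub_mem
  obtain ⟨σ, hσ1, hσ⟩ := exists_forall_half_le_norm_lerchSeries lam hlam.1 hlam.2.le
  refine hasAlmostSymmetricZeros_of_eqOn_mul_schwarzReflection_add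
    (M := fun z => cexp (-2 * Real.pi * I * lam * lam) * (Gammaℂ (1 - z) / 2) *
      cexp (Real.pi * I * (1 - z) / 2))
    (G := fun z => -cexp (2 * Real.pi * I * lam) *
      schwarzReflection (lerchZeta (-lam) (1 - lam)) z)
    (hF.analyticOnNhd.mono hsub) ?_ (fun z hz => ?_) ?_ (fun z hz => ?_)
    (hF.hasPolynomialGrowth hlam0 hlam.1) (fun B => ?_) one_half_pos
    (fun s hs => hF.2 s (hs ▸ hσ1) ▸ hσ s hs) Real.pi_pos
  · exact (analyticOnNhd_const.mul (analyticOnNhd_Gammaℂ_one_sub.div_const)).mul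
      fun z _ => by fun_prop
  · exact mul_ne_zero (mul_ne_zero (exp_ne_zero _)
      (div_ne_zero (Gammaℂ_one_sub_ne_zero hz) two_ne_zero)) (exp_ne_zero _)
  · exact analyticOnNhd_const.mul fun z hz =>
      analyticAt_schwarzReflection (hL_dual.analyticOnNhd _ (hsub (by simpa using hz)))
  · rw [hF.eqOn hL (hsub hz), lerchZeta_self_eq_mul_schwarzReflection_add hlam
      (one_sub_ne_neg_natCast_of_mem_upperHalfPlaneSet hz), Pi.mul_apply, Pi.add_apply,
      hF.eqOn_schwarzReflection hL hz]
  · exact (hasPolynomialGrowth_schwarzReflection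
      (hL_dual.hasPolynomialGrowth hneg0 hsub_mem.1) B).const_mul _

end AlmostSymmetryOfLerch

theorem lerch_local_almost_symmetry_general (lam : ℝ) (hlam0 : 0 < lam) (hlam1 : lam ≤ 1)
    (F : ℂ → ℂ) (hF : IsLerch lam lam F) (B : ℝ) :
    ∃ A : ℝ, 0 < A ∧ ∃ gamma0 : ℝ, 0 < gamma0 ∧
      ∀ ρ : ℂ, |ρ.re| ≤ B → gamma0 ≤ ρ.im →
        ∃ r : ℝ,
          Real.exp (-A * ρ.im / Real.log ρ.im) ≤ r ∧
          r ≤ Real.exp (-A * ρ.im / Real.log ρ.im) * (Real.log ρ.im) ^ 2 ∧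
          ∑ᶠ z ∈ {z : ℂ | F z = 0 ∧ dist z ρ < r}, zeroOrder F z =
            ∑ᶠ z ∈ {z : ℂ | F z = 0 ∧ dist z (1 - (starRingEnd ℂ) ρ) < r}, zeroOrder F z := by
  have hsymm : HasAlmostSymmetricZeros F := by
    rcases hlam1.lt_or_eq with hlt | rfl
    · exact hF.hasAlmostSymmetricZeros_of_lt_one ⟨hlam0, hlt⟩
    · exact hF.hasAlmostSymmetricZeros_one
  obtain ⟨A, hA, hA_eventually⟩ := hsymm B
  obtain ⟨T, hT⟩ := eventually_comap_im_atTop_iff.1 hA_eventually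
  exact ⟨A, hA, max T 1, by positivity, fun ρ hB hρ => hT ρ ((le_max_left T 1).trans hρ) hB⟩

end LocalAlmostSymmetry

/-- almost symmetric local distribution of the nontrivial zeros of
`L(lam, lam, ·)` with respect to the critical line. -/
theorem lerch_local_almost_symmetry (lam : ℝ) (hlam0 : 0 < lam) (hlam1 : lam ≤ 1)
    (F : ℂ → ℂ) (hF : IsLerch lam lam F) :
    ∃ A : ℝ, 0 < A ∧ ∃ gamma0 : ℝ, 0 < gamma0 ∧
      ∀ ρ : ℂ, F ρ = 0 → -1 ≤ ρ.re → ρ.re < 1 + lam → gamma0 ≤ ρ.im →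
        ∃ r : ℝ,
          Real.exp (-A * ρ.im / Real.log ρ.im) ≤ r ∧
          r ≤ Real.exp (-A * ρ.im / Real.log ρ.im) * (Real.log ρ.im) ^ 2 ∧
          ∑ᶠ z ∈ {z : ℂ | F z = 0 ∧ dist z ρ < r}, zeroOrder F z =
            ∑ᶠ z ∈ {z : ℂ | F z = 0 ∧ dist z (1 - (starRingEnd ℂ) ρ) < r}, zeroOrder F z := by
  obtain ⟨A, hA, γ₀, hγ₀, h⟩ := lerch_local_almost_symmetry_general lam hlam0 hlam1 F hF 2
  exact ⟨A, hA, γ₀, hγ₀, fun ρ _ _ _ => h ρ (abs_le.2 ⟨by linarith, by linarith⟩)⟩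
end
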